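/- arXiv:2408.10534 — 4 statements merged into one kernel-verified Lean document; each statement's English description precedes it below -/
import Mathlib

section
/- Let p ≠ r be primes. The Haar-measure proportion of monic degree-r polynomials in Z_p[x] that are irreducible equals ((p^r - p)(1 - p^{-(r+1)/2}) + r(p-1)(1 - p^{-(r+1)(r-1)/2})) / (r p^r (1 - p^{-r(r+1)/2 + 1})(1 - p^{-(r+1)/2})). -/
open MeasureTheory Polynomial

noncomputable instance (p : ℕ) [Fact p.Prime] : MeasurableSpace ℤ_[p] := borel _
instance (p : ℕ) [Fact p.Prime] : BorelSpace ℤ_[p] := ⟨rfl⟩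

/-!
Modulo `p`, an irreducible monic polynomial of prime degree `r` is either irreducible or of the form
`(X - a) ^ r`. Every lift of an irreducible polynomial is irreducible, so the first case is settled
by counting over `𝔽_p`; by translation, the `p` values of `a` contribute equally in the second, and
it remains to treat `a = 0`, where the Newton polygon lies on or above the segment from `(0, 1)` to
`(r, 0)`.

The Newton polygon of an irreducible polynomial is a single segment. For `1 ≤ k < r`, consider the
monic polynomials whose Newton polygon lies on or above the segment from `(0, k)` to `(r, 0)`. Those
whose polygon is this segment are irreducible by Dumas' criterion, and any other irreducible one has
its polygon on or above the segment from `(0, k + 1)`. At `k = r` the substitution `X ↦ p X`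
identifies these polynomials with all monic polynomials, so the density of irreducible polynomials
satisfies a linear equation.
-/

section MonicOfCoeffs
variable {R S : Type*} [CommRing R] [CommRing S] {r : ℕ}

/-- The monic polynomial of degree `r` whose non-leading coefficients are `c`: the identification
of `R ^ r` with the monic polynomials of degree `r`. -/
noncomputable def monicOfCoeffs (c : Fin r → R) : R[X] :=
  X ^ r + ∑ i : Fin r, C (c i) * X ^ (i : ℕ)

theorem monic_monicOfCoeffs (c : Fin r → R) : (monicOfCoeffs c).Monic :=
  monic_X_pow_add (degree_sum_fin_lt c)

@[simp]
theorem natDegree_monicOfCoeffs [Nontrivial R] (c : Fin r → R) :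
    (monicOfCoeffs c).natDegree = r :=
  natDegree_eq_of_degree_eq_some <| by
    rw [monicOfCoeffs, degree_add_eq_left_of_degree_lt, degree_X_pow]
    simpa only [degree_X_pow] using degree_sum_fin_lt c

@[simp]
theorem coeff_monicOfCoeffs (c : Fin r → R) (i : Fin r) : (monicOfCoeffs c).coeff i = c i := by
  simp [monicOfCoeffs, coeff_X_pow, i.2.ne, Fin.val_inj]

theorem coeff_zero_monicOfCoeffs [NeZero r] (c : Fin r → R) : (monicOfCoeffs c).coeff 0 = c 0 :=
  coeff_monicOfCoeffs c 0

theorem monicOfCoeffs_coeff {f : R[X]} (hf : f.Monic) (hdeg : f.natDegree = r) :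
    monicOfCoeffs (fun i : Fin r => f.coeff i) = f := by
  conv_rhs => rw [hf.as_sum, hdeg]
  rw [monicOfCoeffs, Fin.sum_univ_eq_sum_range (fun i => C (f.coeff i) * X ^ i)]

theorem monicOfCoeffs_injective : Function.Injective (monicOfCoeffs : (Fin r → R) → R[X]) :=
  fun c d h => funext fun i => by rw [← coeff_monicOfCoeffs c, h, coeff_monicOfCoeffs]

@[simp]
theorem monicOfCoeffs_zero : monicOfCoeffs (0 : Fin r → R) = X ^ r := by
  simp [monicOfCoeffs]

theorem map_monicOfCoeffs (φ : R →+* S) (c : Fin r → R) :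
    (monicOfCoeffs c).map φ = monicOfCoeffs (φ ∘ c) := by
  simp [monicOfCoeffs, Polynomial.map_sum]

theorem card_monicOfCoeffs_eq_pow [IsDomain R] (hr : r ≠ 0) :
    Nat.card {c : Fin r → R // ∃ a, monicOfCoeffs c = (X - C a) ^ r} = Nat.card R := by
  have hpow (a : R) :
      monicOfCoeffs (fun i : Fin r => ((X - C a) ^ r).coeff i) = (X - C a) ^ r :=
    monicOfCoeffs_coeff ((monic_X_sub_C a).pow r) (by simp)
  refine (Nat.card_eq_of_bijective (fun a => ⟨_, a, hpow a⟩) ⟨fun a b h => ?_, ?_⟩).symm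
  · have hab := congrArg monicOfCoeffs (Subtype.ext_iff.1 h)
    simp only [hpow] at hab
    refine sub_eq_zero.1 (pow_eq_zero_iff hr |>.1 ?_)
    simpa [hr] using (congrArg (eval a) hab).symm
  · rintro ⟨c, a, hc⟩
    exact ⟨a, Subtype.ext (monicOfCoeffs_injective ((hpow a).trans hc.symm))⟩

end MonicOfCoeffs

section FiniteField
variable {F E : Type*} [Field F] [Field E] [Algebra F E]

theorem natDegree_minpoly_eq_finrank_iff_notMem_range [FiniteDimensional F E]
    (hr : (Module.finrank F E).Prime) (x : E) :
    (minpoly F x).natDegree = Module.finrank F E ↔ x ∉ (algebraMap F E).range := by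
  rw [← minpoly.natDegree_eq_one_iff]
  rcases (Nat.dvd_prime hr).1 (minpoly.degree_dvd (Algebra.IsIntegral.isIntegral x)) with h | h
  · simp [h, hr.ne_one.symm]
  · simp [h, hr.ne_one]

theorem card_rootSet_of_irreducible_of_natDegree_dvd_finrank [Finite F] [FiniteDimensional F E]
    {f : F[X]} (hf : Irreducible f) (hdvd : f.natDegree ∣ Module.finrank F E) :
    (f.rootSet E).ncard = f.natDegree := by
  have : Finite E := Module.finite_of_finite F
  have := Fintype.ofFinite E
  have hfE : f ∣ X ^ Fintype.card E - X := by
    rw [← Nat.card_eq_fintype_card, Module.natCard_eq_pow_finrank (K := F)]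
    exact hf.natDegree_dvd_iff_dvd_X_pow_card_pow_sub_X.1 hdvd
  have hE : (X ^ Fintype.card E - X : F[X]) ≠ 0 :=
    FiniteField.X_pow_card_sub_X_ne_zero F Fintype.one_lt_card
  have hsplits : (f.map (algebraMap F E)).Splits :=
    (FiniteField.isSplittingField_sub E F).splits.of_dvd (map_ne_zero hE)
      (Polynomial.map_dvd _ hfE)
  rw [← card_rootSet_eq_natDegree (PerfectField.separable_of_irreducible hf) hsplits,
    Set.ncard_eq_toFinset_card', Set.toFinset_card]

variable (F E) in
theorem natCard_notMem_range_algebraMap [Finite E] :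
    Nat.card {x : E // x ∉ (algebraMap F E).range} = Nat.card E - Nat.card F := by
  rw [← Set.ncard_range_of_injective (algebraMap F E).injective, ← Set.ncard_compl]
  rfl

variable (F) [Finite F]

open Finset in
/-- Double counting of the pairs (polynomial, root): an element of the extension outside `F` is the
root of exactly one of the polynomials, its minimal polynomial. -/
theorem card_irreducible_monicOfCoeffs_mul_finrank (E : Type*) [Field E] [Algebra F E]
    [FiniteDimensional F E] {r : ℕ} (hr : r.Prime) (hE : Module.finrank F E = r) :
    Nat.card {c : Fin r → F // Irreducible (monicOfCoeffs c)} * r =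
      Nat.card E - Nat.card F := by
  classical
  have : Finite E := Module.finite_of_finite F
  have := Fintype.ofFinite E
  have := Fintype.ofFinite F
  let S : Finset (Fin r → F) := {c | Irreducible (monicOfCoeffs c)}
  let T : Finset E := {x | x ∉ (algebraMap F E).range}
  have hS (c : Fin r → F) : c ∈ S ↔ Irreducible (monicOfCoeffs c) := mem_filter_univ c
  have hT (x : E) : x ∈ T ↔ (minpoly F x).natDegree = r := by
    rw [mem_filter_univ, ← natDegree_minpoly_eq_finrank_iff_notMem_range (hE ▸ hr), hE]
  have card_T : #T = Nat.card E - Nat.card F := by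
    rw [← natCard_notMem_range_algebraMap F E, Nat.card_eq_fintype_card, Fintype.card_subtype]
  have minpoly_eq {c : Fin r → F} (hc : c ∈ S) {x : E} (hx : aeval x (monicOfCoeffs c) = 0) :
      monicOfCoeffs c = minpoly F x :=
    minpoly.eq_of_irreducible_of_monic ((hS c).1 hc) hx (monic_monicOfCoeffs c)
  have card_roots (c) (hc : c ∈ S) :
      #(T.bipartiteAbove (fun c x => aeval x (monicOfCoeffs c) = 0) c) = r := by
    have hroots := card_rootSet_of_irreducible_of_natDegree_dvd_finrank (E := E)
      ((hS c).1 hc) (by rw [natDegree_monicOfCoeffs, hE])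
    rw [natDegree_monicOfCoeffs, Set.ncard_eq_toFinset_card'] at hroots
    refine (congrArg card ?_).trans hroots
    ext x
    rw [mem_bipartiteAbove, Set.mem_toFinset, mem_rootSet_of_ne (monic_monicOfCoeffs c).ne_zero,
      and_iff_right_of_imp fun hx => (hT x).2 (by rw [← minpoly_eq hc hx, natDegree_monicOfCoeffs])]
  have card_polys (x) (hx : x ∈ T) :
      #(S.bipartiteBelow (fun c x => aeval x (monicOfCoeffs c) = 0) x) = 1 := by
    have h_int := Algebra.IsIntegral.isIntegral (R := F) x
    have hmin := monicOfCoeffs_coeff (minpoly.monic h_int) ((hT x).1 hx)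
    refine card_eq_one.2 ⟨fun i => (minpoly F x).coeff i, ?_⟩
    ext c
    rw [mem_bipartiteBelow, mem_singleton, ← monicOfCoeffs_injective.eq_iff, hmin]
    refine ⟨fun h => minpoly_eq h.1 h.2, fun h => ⟨(hS c).2 ?_, ?_⟩⟩
    · exact h ▸ minpoly.irreducible h_int
    · exact h ▸ minpoly.aeval F x
  rw [← card_T, Nat.card_eq_fintype_card, Fintype.card_subtype]
  simpa using card_mul_eq_card_mul _ card_roots card_polys

theorem card_irreducible_monicOfCoeffs_mul {r : ℕ} (hr : r.Prime) :
    Nat.card {c : Fin r → F // Irreducible (monicOfCoeffs c)} * r =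
      Nat.card F ^ r - Nat.card F := by
  obtain ⟨q, _⟩ := CharP.exists F
  have : Fact q.Prime := ⟨CharP.char_is_prime F q⟩
  have : NeZero r := ⟨hr.ne_zero⟩
  rw [card_irreducible_monicOfCoeffs_mul_finrank F (FiniteField.Extension F q r) hr
    (FiniteField.finrank_extension F q r), FiniteField.natCard_extension]

end FiniteField

section NewtonPolygon

/-- The Newton polygon of a monic irreducible polynomial over a complete nonarchimedean field is a
single segment, because all roots have the same spectral norm. -/
theorem norm_coeff_pow_le_norm_coeff_zero_pow {K : Type*} [NontriviallyNormedField K]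
    [IsUltrametricDist K] [CompleteSpace K] {f : K[X]} (hm : f.Monic) (hf : Irreducible f) {i : ℕ}
    (hi : i ≤ f.natDegree) :
    ‖f.coeff i‖ ^ f.natDegree ≤ ‖f.coeff 0‖ ^ (f.natDegree - i) := by
  rcases hi.eq_or_lt with rfl | hi
  · simp [hm.coeff_natDegree]
  have : Fact (Irreducible f) := ⟨hf⟩
  have : FiniteDimensional K (AdjoinRoot f) := hm.finite_adjoinRoot
  have hmin : minpoly K (AdjoinRoot.root f) = f := by
    rw [AdjoinRoot.minpoly_root hf.ne_zero, hm.leadingCoeff, inv_one, C_1, mul_one]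
  have hspectral : spectralValue f = ‖f.coeff 0‖ ^ (1 / f.natDegree : ℝ) := by
    simpa only [spectralNorm, hmin] using
      spectralNorm.spectralNorm_eq_norm_coeff_zero_rpow K (AdjoinRoot f) (AdjoinRoot.root f)
  have hterm : ‖f.coeff i‖ ^ (1 / (f.natDegree - i : ℝ)) ≤
      ‖f.coeff 0‖ ^ (1 / f.natDegree : ℝ) := by
    rw [← hspectral, ← spectralValueTerms_of_lt_natDegree _ hi]
    exact le_ciSup (spectralValueTerms_bddAbove f) i
  have hn : (0 : ℝ) < f.natDegree := by exact_mod_cast hf.natDegree_pos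
  have hni : (0 : ℝ) < f.natDegree - i := sub_pos.2 (by exact_mod_cast hi)
  have := Real.rpow_le_rpow (by positivity) hterm (mul_pos hn hni).le
  rw [← Real.rpow_mul (norm_nonneg _), ← Real.rpow_mul (norm_nonneg _)] at this
  rw [← Real.rpow_natCast, ← Real.rpow_natCast, Nat.cast_sub hi.le]
  convert this using 2 <;> field_simp

theorem gaussNorm_le_of_coeff_pow_le {R : Type*} [Semiring R] (v : AbsoluteValue R ℝ) {f : R[X]}
    (hf : f.natDegree ≠ 0) {c : ℝ} (hc : 0 ≤ c)
    (h : ∀ i ≤ f.natDegree, v (f.coeff i) ^ f.natDegree ≤ (c ^ f.natDegree) ^ (f.natDegree - i)) :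
    f.gaussNorm v c ≤ c ^ f.natDegree := by
  obtain ⟨i, hi⟩ := exists_eq_gaussNorm v c f
  rw [hi]
  rcases le_or_gt i f.natDegree with hir | hir
  · refine le_of_pow_le_pow_left₀ hf (by positivity) ?_
    calc (v (f.coeff i) * c ^ i) ^ f.natDegree
        = v (f.coeff i) ^ f.natDegree * (c ^ f.natDegree) ^ i := by ring
      _ ≤ (c ^ f.natDegree) ^ (f.natDegree - i) * (c ^ f.natDegree) ^ i := by gcongr; exact h i hir
      _ = (c ^ f.natDegree) ^ f.natDegree := by rw [← pow_add, Nat.sub_add_cancel hir]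
  · simpa [coeff_eq_zero_of_natDegree_lt hir] using pow_nonneg hc _

/-- If the Newton polygon of a product is a single segment, then the Newton polygons of the factors
are segments of the same slope: for the Gauss norm whose weight is this slope, both the leading and
the constant terms of the factors have to attain the norm. -/
theorem coeff_zero_pow_natDegree_mul {R : Type*} [Ring R] {v : AbsoluteValue R ℝ}
    (hv : IsNonarchimedean v) {g h : R[X]} (hg : g.Monic) (hh : h.Monic)
    (h0 : (g * h).coeff 0 ≠ 0)
    (hcoeff : ∀ i ≤ (g * h).natDegree,
      v ((g * h).coeff i) ^ (g * h).natDegree ≤ v ((g * h).coeff 0) ^ ((g * h).natDegree - i)) :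
    v (g.coeff 0) ^ (g * h).natDegree = v ((g * h).coeff 0) ^ g.natDegree := by
  have : Nontrivial R := nontrivial_of_ne _ _ h0
  rcases eq_or_ne (g * h).natDegree 0 with hn | hn
  · have := hg.natDegree_mul hh
    simp [show g.natDegree = 0 by omega, hn]
  set c : ℝ := v ((g * h).coeff 0) ^ ((g * h).natDegree : ℝ)⁻¹
  have hpos : 0 < v ((g * h).coeff 0) := v.pos h0
  have hc : 0 < c := by positivity
  have hcr : c ^ (g * h).natDegree = v ((g * h).coeff 0) := Real.rpow_inv_natCast_pow hpos.le hn
  have leading_le {q : R[X]} (hq : q.Monic) : c ^ q.natDegree ≤ q.gaussNorm v c := by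
    simpa [hq.coeff_natDegree] using le_gaussNorm v q hc.le q.natDegree
  have constant_le (q : R[X]) : v (q.coeff 0) ≤ q.gaussNorm v c := by
    simpa using le_gaussNorm v q hc.le 0
  have leading_mul : c ^ g.natDegree * c ^ h.natDegree = v ((g * h).coeff 0) := by
    rw [← pow_add, ← hg.natDegree_mul hh, hcr]
  have constant_mul : v (g.coeff 0) * v (h.coeff 0) = v ((g * h).coeff 0) := by
    rw [mul_coeff_zero, map_mul]
  have norm_mul : g.gaussNorm v c * h.gaussNorm v c = v ((g * h).coeff 0) := by
    rw [← gaussNorm_mul hv hc]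
    refine le_antisymm ?_ (constant_le _)
    exact (gaussNorm_le_of_coeff_pow_le v hn hc.le (by rwa [hcr])).trans_eq hcr
  have hh_pos : 0 < h.gaussNorm v c := (pow_pos hc _).trans_le (leading_le hh)
  have leading_eq : c ^ g.natDegree = g.gaussNorm v c :=
    ((mul_eq_mul_iff_eq_and_eq_of_pos (leading_le hg) (leading_le hh) (pow_pos hc _) hh_pos).1
      (leading_mul.trans norm_mul.symm)).1
  have constant_eq : v (g.coeff 0) = g.gaussNorm v c :=
    ((mul_eq_mul_iff_eq_and_eq_of_pos (constant_le g) (constant_le h)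
      (v.pos (left_ne_zero_of_mul (mul_coeff_zero g h ▸ h0))) hh_pos).1
      (constant_mul.trans norm_mul.symm)).1
  rw [constant_eq, ← leading_eq, ← hcr, ← pow_mul, ← pow_mul, mul_comm]

end NewtonPolygon

section Padic
variable {p : ℕ} [Fact p.Prime]

theorem norm_lt_one_iff_toZMod_eq_zero (x : ℤ_[p]) : ‖x‖ < 1 ↔ PadicInt.toZMod x = 0 := by
  rw [← RingHom.mem_ker, PadicInt.ker_toZMod, PadicInt.maximalIdeal_eq_span_p,
    PadicInt.norm_lt_one_iff_dvd, Ideal.mem_span_singleton]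

theorem valuation_eq_of_pow_dvd_of_not_pow_succ_dvd {k : ℕ} {x : ℤ_[p]} (h : (p : ℤ_[p]) ^ k ∣ x)
    (h' : ¬ (p : ℤ_[p]) ^ (k + 1) ∣ x) : x.valuation = k := by
  have hx : x ≠ 0 := by rintro rfl; exact h' (dvd_zero _)
  rw [← Ideal.mem_span_singleton, PadicInt.mem_span_pow_iff_le_valuation x hx] at h h'
  omega

theorem norm_coeff_pow_le_of_irreducible {f : ℤ_[p][X]} (hm : f.Monic) (hf : Irreducible f) {i : ℕ}
    (hi : i ≤ f.natDegree) :
    ‖f.coeff i‖ ^ f.natDegree ≤ ‖f.coeff 0‖ ^ (f.natDegree - i) := by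
  have := norm_coeff_pow_le_norm_coeff_zero_pow (i := i) (hm.map (algebraMap ℤ_[p] ℚ_[p]))
    (hm.irreducible_iff_irreducible_map_fraction_map.1 hf)
  simp only [hm.natDegree_map, coeff_map] at this
  exact this hi

/-- **Dumas' criterion**. -/
theorem irreducible_of_coprime_valuation_coeff_zero {f : ℤ_[p][X]} (hm : f.Monic)
    (h0 : f.coeff 0 ≠ 0) (hcop : f.natDegree.Coprime (f.coeff 0).valuation)
    (hcoeff : ∀ i ≤ f.natDegree, ‖f.coeff i‖ ^ f.natDegree ≤ ‖f.coeff 0‖ ^ (f.natDegree - i)) :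
    Irreducible f := by
  have hp : (1 : ℝ) < p := by exact_mod_cast (Fact.out : p.Prime).one_lt
  refine hm.irreducible_iff_natDegree.2 ⟨by rintro rfl; simp at hcop, ?_⟩
  rintro g h hg hh rfl
  have hg0 : g.coeff 0 ≠ 0 := left_ne_zero_of_mul (mul_coeff_zero g h ▸ h0)
  have hnorm : ‖g.coeff 0‖ ^ (g * h).natDegree = ‖(g * h).coeff 0‖ ^ g.natDegree :=
    coeff_zero_pow_natDegree_mul (v := IsAbsoluteValue.toAbsoluteValue norm)
      PadicInt.nonarchimedean hg hh h0 hcoeff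
  rw [PadicInt.norm_eq_zpow_neg_valuation hg0, PadicInt.norm_eq_zpow_neg_valuation h0,
    ← zpow_natCast, ← zpow_natCast, ← zpow_mul, ← zpow_mul] at hnorm
  have hval : (g.coeff 0).valuation * (g * h).natDegree =
      ((g * h).coeff 0).valuation * g.natDegree := by
    have := zpow_right_injective₀ (by positivity) hp.ne' hnorm
    zify
    linarith
  have hdvd : (g * h).natDegree ∣ g.natDegree :=
    hcop.dvd_of_dvd_mul_left (hval ▸ Nat.dvd_mul_left _ _)
  have hdeg := hg.natDegree_mul hh
  rcases g.natDegree.eq_zero_or_pos with hg | hg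
  · exact Or.inl hg
  · exact Or.inr (by have := Nat.le_of_dvd hg hdvd; omega)

theorem map_toZMod_eq_X_pow_of_irreducible {f : ℤ_[p][X]} (hm : f.Monic) (hf : Irreducible f)
    (h0 : PadicInt.toZMod (f.coeff 0) = 0) : f.map PadicInt.toZMod = X ^ f.natDegree := by
  rw [← norm_lt_one_iff_toZMod_eq_zero] at h0
  ext i
  rw [coeff_map, coeff_X_pow]
  rcases lt_trichotomy i f.natDegree with hi | rfl | hi
  · rw [if_neg hi.ne, ← norm_lt_one_iff_toZMod_eq_zero]
    refine lt_of_pow_lt_pow_left₀ f.natDegree zero_le_one ?_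
    rw [one_pow]
    exact (norm_coeff_pow_le_of_irreducible hm hf hi.le).trans_lt
      (pow_lt_one₀ (norm_nonneg _) h0 (Nat.sub_ne_zero_of_lt hi))
  · rw [if_pos rfl, hm.coeff_natDegree, map_one]
  · rw [if_neg hi.ne', coeff_eq_zero_of_natDegree_lt hi, map_zero]

theorem coeff_zero_eq_zero_of_irreducible_dvd_comp {k : Type*} [Field k] {g m : k[X]}
    (hg : Irreducible g) (h : g ∣ m.comp g) : m.coeff 0 = 0 := by
  by_contra h0
  rw [← divX_mul_X_add m, add_comp, mul_comp, X_comp, C_comp,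
    dvd_add_right (Dvd.intro_left _ rfl)] at h
  exact hg.not_isUnit (isUnit_of_dvd_unit h (isUnit_C.2 (Ne.isUnit h0)))

/-- The minimal polynomial `M` of `G(θ)`, for a root `θ` of `f` and a lift `G` of `g`, is
irreducible with `M(0) ≡ 0`, hence `M ≡ X ^ n`, and `f` divides `M(G)`. -/
theorem map_toZMod_dvd_pow {f : ℤ_[p][X]} (hm : f.Monic) (hf : Irreducible f)
    {g : (ZMod p)[X]} (hg : Irreducible g) (hgf : g ∣ f.map PadicInt.toZMod) :
    ∃ n : ℕ, f.map PadicInt.toZMod ∣ g ^ n := by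
  obtain ⟨G, rfl⟩ := Polynomial.map_surjective (PadicInt.toZMod (p := p))
    (ZMod.ringHom_surjective _) g
  have : IsDomain (AdjoinRoot f) := AdjoinRoot.isDomain_of_prime hf.prime
  have : Module.Finite ℤ_[p] (AdjoinRoot f) := hm.finite_adjoinRoot
  have : FaithfulSMul ℤ_[p] (AdjoinRoot f) :=
    (faithfulSMul_iff_algebraMap_injective _ _).2 <|
      AdjoinRoot.of.injective_of_degree_ne_zero (hm.degree_pos_of_not_isUnit hf.not_isUnit).ne'
  have h_int : IsIntegral ℤ_[p] (AdjoinRoot.mk f G) := Algebra.IsIntegral.isIntegral _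
  set M := minpoly ℤ_[p] (AdjoinRoot.mk f G)
  have hfM : f ∣ M.comp G := by
    rw [← AdjoinRoot.mk_eq_zero, ← AdjoinRoot.aeval_eq, aeval_comp, AdjoinRoot.aeval_eq]
    exact minpoly.aeval _ _
  have hfM_mod : f.map PadicInt.toZMod ∣
      (M.map PadicInt.toZMod).comp (G.map PadicInt.toZMod) := by
    rw [← Polynomial.map_comp]
    exact Polynomial.map_dvd _ hfM
  have hM0 := coeff_zero_eq_zero_of_irreducible_dvd_comp hg (hgf.trans hfM_mod)
  rw [coeff_map] at hM0
  rw [map_toZMod_eq_X_pow_of_irreducible (minpoly.monic h_int) (minpoly.irreducible h_int) hM0,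
    X_pow_comp] at hfM_mod
  exact ⟨_, hfM_mod⟩

theorem exists_map_toZMod_eq_pow {f : ℤ_[p][X]} (hm : f.Monic) (hf : Irreducible f) :
    ∃ (g : (ZMod p)[X]) (k : ℕ), g.Monic ∧ Irreducible g ∧ f.map PadicInt.toZMod = g ^ k := by
  have hm' : (f.map (PadicInt.toZMod (p := p))).Monic := hm.map _
  obtain ⟨g, hgm, hg, hgf⟩ := exists_monic_irreducible_factor (f.map PadicInt.toZMod)
    (not_isUnit_of_natDegree_pos _ <| by
      simpa only [hm.natDegree_map] using hm.natDegree_pos_of_not_isUnit hf.not_isUnit)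
  obtain ⟨n, hn⟩ := map_toZMod_dvd_pow hm hf hg hgf
  obtain ⟨k, -, hk⟩ := (dvd_prime_pow hg.prime n).1 hn
  exact ⟨g, k, hgm, hg, eq_of_monic_of_associated hm' (hgm.pow k) hk⟩

theorem irreducible_map_toZMod_or_eq_pow {f : ℤ_[p][X]} (hm : f.Monic) (hf : Irreducible f)
    (hr : f.natDegree.Prime) :
    Irreducible (f.map PadicInt.toZMod) ∨
      ∃ a : ZMod p, f.map PadicInt.toZMod = (X - C a) ^ f.natDegree := by
  obtain ⟨g, k, hgm, hg, hk⟩ := exists_map_toZMod_eq_pow hm hf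
  have hdeg : f.natDegree = k * g.natDegree := by
    rw [← hm.natDegree_map (PadicInt.toZMod (p := p)), hk, natDegree_pow]
  rcases Nat.prime_mul_iff.1 (hdeg ▸ hr) with ⟨-, hg1⟩ | ⟨-, rfl⟩
  · refine Or.inr ⟨-g.coeff 0, ?_⟩
    rw [C_neg, sub_neg_eq_add, ← hgm.eq_X_add_C hg1, hk, hdeg, hg1, mul_one]
  · exact Or.inl (by rwa [hk, pow_one])

end Padic

section HaarMeasure

theorem index_range_mul_measure_image {G : Type*} [AddGroup G] [TopologicalSpace G]
    [IsTopologicalAddGroup G] [CompactSpace G] [T2Space G] [MeasurableSpace G] [BorelSpace G]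
    (μ : Measure G) [μ.IsAddHaarMeasure] {ψ : G →+ G} [ψ.range.FiniteIndex] (hψ : Continuous ψ)
    (hinj : Function.Injective ψ) (s : Set G) : ψ.range.index * μ (ψ '' s) = μ s := by
  have hemb : MeasurableEmbedding ψ := (hψ.isClosedEmbedding hinj).measurableEmbedding
  have : (μ.comap ψ).IsAddLeftInvariant := .comap μ hemb
  have : IsFiniteMeasure (μ.comap ψ) := ⟨by rw [hemb.comap_apply]; exact measure_lt_top _ _⟩
  set k := (μ.comap ψ).addHaarScalarFactor μ
  have hk (t : Set G) : μ (ψ '' t) = k * μ t := by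
    rw [← hemb.comap_apply, Measure.isAddInvariant_eq_smul_of_compactSpace (μ.comap ψ) μ]
    rfl
  have hindex : (ψ.range.index : ENNReal) * k = 1 := by
    have := ψ.range.index_mul_measure
      (by rw [AddMonoidHom.coe_range]; exact hemb.measurableSet_range) μ
    rw [AddMonoidHom.coe_range, ← Set.image_univ, hk, ← mul_assoc] at this
    exact (ENNReal.mul_left_inj (NeZero.ne _) (measure_ne_top _ _)).1 (by rw [this, one_mul])
  rw [hk, ← mul_assoc, hindex, one_mul]

theorem measureReal_eq_sum_inter_preimage_singleton {α β : Type*} [MeasurableSpace α] [Fintype β]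
    (μ : Measure α) [IsFiniteMeasure μ] {φ : α → β} (hφ : ∀ b, MeasurableSet (φ ⁻¹' {b}))
    (A : Set α) : μ.real A = ∑ b, μ.real (A ∩ φ ⁻¹' {b}) := by
  have := sum_measureReal_preimage_singleton (μ := μ.restrict A) Finset.univ fun b _ => hφ b
  simp only [Finset.coe_univ, Set.preimage_univ, measureReal_restrict_apply_univ] at this
  rw [← this]
  exact Finset.sum_congr rfl fun b _ => by rw [measureReal_restrict_apply (hφ b), Set.inter_comm]

end HaarMeasure

section Boxes
variable {p : ℕ} [Fact p.Prime] {ι : Type*}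

/-- The endomorphism of `ℤ_p ^ ι` multiplying the `i`-th coordinate by `p ^ n i`. -/
noncomputable def scaleCoeffs (p : ℕ) [Fact p.Prime] (n : ι → ℕ) : (ι → ℤ_[p]) →+ (ι → ℤ_[p]) :=
  AddMonoidHom.mulLeft fun i => (p : ℤ_[p]) ^ n i

/-- The vectors in `ℤ_p ^ ι` whose `i`-th coordinate is divisible by `p ^ n i`. -/
def dvdBox (p : ℕ) [Fact p.Prime] (n : ι → ℕ) : Set (ι → ℤ_[p]) :=
  {c | ∀ i, (p : ℤ_[p]) ^ n i ∣ c i}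

theorem scaleCoeffs_apply (n : ι → ℕ) (c : ι → ℤ_[p]) (i : ι) :
    scaleCoeffs p n c i = (p : ℤ_[p]) ^ n i * c i :=
  rfl

theorem range_scaleCoeffs (n : ι → ℕ) : Set.range (scaleCoeffs p n) = dvdBox p n := by
  ext c
  simp only [Set.mem_range, funext_iff, scaleCoeffs_apply, dvdBox, Set.mem_ofPred_eq, dvd_def,
    Classical.skolem, eq_comm]

theorem continuous_scaleCoeffs (n : ι → ℕ) : Continuous (scaleCoeffs p n) :=
  continuous_const_mul _

theorem scaleCoeffs_injective (n : ι → ℕ) : Function.Injective (scaleCoeffs p n) :=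
  fun _ _ h => funext fun i => mul_left_cancel₀
    (pow_ne_zero _ (Nat.cast_ne_zero.2 (Fact.out : p.Prime).ne_zero)) (congrFun h i)

theorem dvdBox_inter_dvd [DecidableEq ι] (n : ι → ℕ) (i : ι) :
    dvdBox p n ∩ {c | (p : ℤ_[p]) ^ (n i + 1) ∣ c i} = dvdBox p (n + Pi.single i 1) := by
  ext c
  refine ⟨fun ⟨hc, hci⟩ j => ?_, fun hc => ⟨fun j => ?_, ?_⟩⟩
  · rcases eq_or_ne j i with rfl | hj
    · simpa using hci
    · simpa [hj] using hc j
  · exact (pow_dvd_pow _ (Nat.le_add_right _ _)).trans (hc j)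
  · simpa using hc i

theorem measurableSet_dvdBox [Countable ι] (n : ι → ℕ) : MeasurableSet (dvdBox p n) := by
  rw [← range_scaleCoeffs]
  exact (isCompact_range (continuous_scaleCoeffs n)).measurableSet

theorem measurableSet_dvdBox_sdiff_dvd [Countable ι] (n : ι → ℕ) (i : ι) :
    MeasurableSet (dvdBox p n \ {c | (p : ℤ_[p]) ^ (n i + 1) ∣ c i}) := by
  classical
  rw [← Set.sdiff_self_inter, dvdBox_inter_dvd]
  exact (measurableSet_dvdBox _).diff (measurableSet_dvdBox _)

variable [Fintype ι]

theorem index_range_scaleCoeffs (n : ι → ℕ) :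
    (scaleCoeffs p n).range.index = p ^ ∑ i, n i := by
  let φ : (ι → ℤ_[p]) →+ ((i : ι) → ZMod (p ^ n i)) :=
    AddMonoidHom.piMap fun i => (PadicInt.toZModPow (p := p) (n i)).toAddMonoidHom
  have hφ : Function.Surjective φ :=
    Function.Surjective.piMap fun i => ZMod.ringHom_surjective (PadicInt.toZModPow (n i))
  have hker : (scaleCoeffs p n).range = φ.ker := by
    refine SetLike.coe_injective ?_
    rw [AddMonoidHom.coe_range, range_scaleCoeffs]
    ext c
    simp only [SetLike.mem_coe, AddMonoidHom.mem_ker, funext_iff, dvdBox, Set.mem_ofPred_eq,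
      ← Ideal.mem_span_singleton, ← PadicInt.ker_toZModPow, RingHom.mem_ker]
    rfl
  rw [hker, AddSubgroup.index_ker, AddMonoidHom.range_eq_top.2 hφ, AddSubgroup.card_top,
    Nat.card_pi]
  simp only [Nat.card_zmod, Finset.prod_pow_eq_pow_sum]

variable (μ : Measure (ι → ℤ_[p])) [μ.IsAddHaarMeasure]

theorem measureReal_image_scaleCoeffs (n : ι → ℕ) (s : Set (ι → ℤ_[p])) :
    μ.real (scaleCoeffs p n '' s) = ((p : ℝ) ^ ∑ i, n i)⁻¹ * μ.real s := by
  have hp : p ≠ 0 := (Fact.out : p.Prime).ne_zero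
  have : (scaleCoeffs p n).range.FiniteIndex := ⟨by rw [index_range_scaleCoeffs]; positivity⟩
  rw [measureReal_def, measureReal_def, ← index_range_mul_measure_image μ (continuous_scaleCoeffs n)
    (scaleCoeffs_injective n) s, index_range_scaleCoeffs, ENNReal.toReal_mul,
    ENNReal.toReal_natCast, Nat.cast_pow, inv_mul_cancel_left₀ (by positivity)]

variable [IsProbabilityMeasure μ]

theorem measureReal_dvdBox (n : ι → ℕ) : μ.real (dvdBox p n) = ((p : ℝ) ^ ∑ i, n i)⁻¹ := by
  rw [← range_scaleCoeffs, ← Set.image_univ, measureReal_image_scaleCoeffs, probReal_univ, mul_one]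

theorem measureReal_dvdBox_sdiff_dvd (n : ι → ℕ) (i : ι) :
    μ.real (dvdBox p n \ {c | (p : ℤ_[p]) ^ (n i + 1) ∣ c i}) =
      ((p : ℝ) ^ ∑ i, n i)⁻¹ * (1 - (p : ℝ)⁻¹) := by
  classical
  have hsum : ∑ j, (n + Pi.single i 1 : ι → ℕ) j = ∑ j, n j + 1 := by
    simp [Finset.sum_add_distrib]
  rw [← Set.sdiff_self_inter, dvdBox_inter_dvd,
    measureReal_sdiff (dvdBox_inter_dvd (p := p) n i ▸ Set.inter_subset_left)
      (measurableSet_dvdBox _),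
    measureReal_dvdBox, measureReal_dvdBox, hsum, pow_succ, mul_inv]
  ring

end Boxes

section Translation
variable {R : Type*} [CommRing R] {r : ℕ}

/-- The effect of substituting `X + t` for `X` on the non-leading coefficients of a monic
polynomial of degree `r`. -/
noncomputable def taylorCoeffs (t : R) (c : Fin r → R) : Fin r → R :=
  fun i => (taylor t (monicOfCoeffs c)).coeff i

theorem monicOfCoeffs_taylorCoeffs [Nontrivial R] (t : R) (c : Fin r → R) :
    monicOfCoeffs (taylorCoeffs t c) = taylor t (monicOfCoeffs c) :=
  monicOfCoeffs_coeff ((monic_monicOfCoeffs c).comp (monic_X_add_C t) (by simp))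
    (by rw [natDegree_taylor, natDegree_monicOfCoeffs])

theorem taylorCoeffs_bijective [Nontrivial R] (t : R) :
    Function.Bijective (taylorCoeffs t : (Fin r → R) → Fin r → R) := by
  refine ⟨fun c d h => monicOfCoeffs_injective (taylor_injective t ?_), fun d =>
    ⟨taylorCoeffs (-t) d, monicOfCoeffs_injective ?_⟩⟩
  · rw [← monicOfCoeffs_taylorCoeffs, h, monicOfCoeffs_taylorCoeffs]
  · rw [monicOfCoeffs_taylorCoeffs, monicOfCoeffs_taylorCoeffs, taylor_taylor, add_neg_cancel,
      taylor_zero]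

theorem exists_linearMap_taylorCoeffs_eq_add (t : R) :
    ∃ L : (Fin r → R) →ₗ[R] (Fin r → R), ∀ c, taylorCoeffs t c = taylorCoeffs t 0 + L c := by
  refine ⟨LinearMap.pi fun i => lcoeff R (i : ℕ) ∘ₗ taylor t ∘ₗ
    ∑ j : Fin r, monomial (j : ℕ) ∘ₗ LinearMap.proj j, fun c => ?_⟩
  ext i
  simp [taylorCoeffs, monicOfCoeffs, C_mul_X_pow_eq_monomial]

variable [Nontrivial R] [TopologicalSpace R] [IsTopologicalRing R] [CompactSpace R] [T2Space R]
  [SecondCountableTopology R] [MeasurableSpace R] [BorelSpace R]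

theorem measureReal_preimage_taylorCoeffs (μ : Measure (Fin r → R)) [μ.IsAddHaarMeasure] (t : R)
    (s : Set (Fin r → R)) : μ.real (taylorCoeffs t ⁻¹' s) = μ.real s := by
  obtain ⟨L, hL⟩ := exists_linearMap_taylorCoeffs_eq_add (r := r) t
  have hcomp : taylorCoeffs t = (taylorCoeffs t 0 + ·) ∘ L := funext hL
  have hbij : Function.Bijective L :=
    (Function.Bijective.of_comp_iff' (Equiv.addLeft _).bijective L).1
      (hcomp ▸ taylorCoeffs_bijective t)
  have hcont : Continuous L := L.continuous_on_pi
  have hmp : MeasurePreserving (taylorCoeffs t) μ μ := by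
    rw [hcomp]
    exact (measurePreserving_add_left μ _).comp
      (L.toAddMonoidHom.measurePreserving hcont hbij.surjective rfl)
  have hemb : MeasurableEmbedding (taylorCoeffs t : (Fin r → R) → Fin r → R) := by
    have hcont' : Continuous (taylorCoeffs t : (Fin r → R) → Fin r → R) := by
      rw [hcomp]
      exact hcont.const_add _
    exact (hcont'.isClosedEmbedding (taylorCoeffs_bijective t).injective).measurableEmbedding
  exact congrArg ENNReal.toReal (hmp.measure_preimage_emb hemb s)

end Translation

section SlopeExponents
variable {r k i j : ℕ}

/-- The height at abscissa `i` of the segment from `(0, k)` to `(r, 0)`, rounded up: the least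
valuation of the `i`-th coefficient of a monic polynomial of degree `r` whose Newton polygon lies
on or above that segment. -/
def slopeExp (r k i : ℕ) : ℕ := k * (r - i) ⌈/⌉ r

/-- The number of lattice points `(i, j)` with `0 ≤ i < r` and `0 ≤ j` strictly below the segment
from `(0, k)` to `(r, 0)`. -/
def slopeWeight (r k : ℕ) : ℕ := ∑ i : Fin r, slopeExp r k i

theorem slopeExp_le_iff {v : ℕ} (hr : 0 < r) : slopeExp r k i ≤ v ↔ k * (r - i) ≤ r * v :=
  ceilDiv_le_iff_le_mul hr

theorem slopeExp_zero (hr : 0 < r) (k : ℕ) : slopeExp r k 0 = k :=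
  eq_of_forall_ge_iff fun v => by
    rw [slopeExp_le_iff hr, Nat.sub_zero, mul_comm, Nat.mul_le_mul_left_iff hr]

theorem slopeExp_self (hr : 0 < r) (i : ℕ) : slopeExp r r i = r - i :=
  eq_of_forall_ge_iff fun v => by rw [slopeExp_le_iff hr, Nat.mul_le_mul_left_iff hr]

theorem slopeExp_one (hi : i < r) : slopeExp r 1 i = 1 := by
  have hr : 0 < r := i.zero_le.trans_lt hi
  refine le_antisymm ((slopeExp_le_iff hr).2 (by omega)) (Nat.one_le_iff_ne_zero.2 fun h => ?_)
  have := (slopeExp_le_iff hr).1 h.le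
  omega

theorem slopeExp_mono {l : ℕ} (hr : 0 < r) (h : k ≤ l) : slopeExp r k i ≤ slopeExp r l i :=
  (slopeExp_le_iff hr).2 ((Nat.mul_le_mul_right _ h).trans ((slopeExp_le_iff hr).1 le_rfl))

theorem exists_slopeExp_eq_succ (hi : 0 < i) (hir : i < r) (hk : r.Coprime k) :
    ∃ a, slopeExp r k i = a + 1 ∧ r * a < k * (r - i) ∧ k * (r - i) < r * (a + 1) := by
  have hr : 0 < r := hi.trans hir
  have hle : k * (r - i) ≤ r * slopeExp r k i := (slopeExp_le_iff hr).1 le_rfl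
  have hne : k * (r - i) ≠ r * slopeExp r k i := fun h => by
    have := Nat.le_of_dvd (Nat.sub_pos_of_lt hir) (hk.dvd_of_dvd_mul_left (Dvd.intro _ h.symm))
    omega
  obtain ⟨a, ha⟩ := Nat.exists_eq_add_one_of_ne_zero (n := slopeExp r k i) fun h => hne <| by
    simpa [h] using hle
  rw [ha] at hle hne
  refine ⟨a, ha, lt_of_not_ge fun h => ?_, lt_of_le_of_ne hle hne⟩
  have := (slopeExp_le_iff hr).2 h
  omega

theorem slopeExp_add_slopeExp (hij : i + j = r) (hi : 0 < i) (hj : 0 < j) (hk : r.Coprime k) :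
    slopeExp r k i + slopeExp r k j = k + 1 := by
  obtain ⟨a, ha, hai, hai'⟩ := exists_slopeExp_eq_succ hi (by omega) hk
  obtain ⟨b, hb, hbj, hbj'⟩ := exists_slopeExp_eq_succ hj (by omega) hk
  have hsum : k * (r - i) + k * (r - j) = r * k := by
    rw [← mul_add, mul_comm]
    congr 1
    omega
  have h1 : a + b < k := lt_of_mul_lt_mul_left (a := r) (by linarith) r.zero_le
  have h2 : k < a + 1 + (b + 1) := lt_of_mul_lt_mul_left (a := r) (by linarith) r.zero_le
  omega

theorem two_mul_slopeWeight_add_one (hr : 0 < r) (hk : r.Coprime k) :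
    2 * slopeWeight r k + 1 = r * k + r + k := by
  obtain ⟨m, rfl⟩ := Nat.exists_eq_add_one_of_ne_zero hr.ne'
  have hpair : ∑ i ∈ Finset.range m, (slopeExp (m + 1) k (i + 1) +
      slopeExp (m + 1) k (m - 1 - i + 1)) = m * (k + 1) := by
    rw [← smul_eq_mul, ← Finset.card_range m, ← Finset.sum_const, Finset.card_range]
    refine Finset.sum_congr rfl fun i hi => ?_
    rw [Finset.mem_range] at hi
    exact slopeExp_add_slopeExp (by omega) (by omega) (by omega) hk
  rw [Finset.sum_add_distrib,
    Finset.sum_range_reflect (fun i => slopeExp (m + 1) k (i + 1)) m] at hpair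
  rw [slopeWeight, Fin.sum_univ_eq_sum_range (slopeExp (m + 1) k), Finset.sum_range_succ',
    slopeExp_zero hr]
  linarith

theorem two_mul_slopeWeight_self (hr : 0 < r) : 2 * slopeWeight r r = r * (r + 1) := by
  simp only [slopeWeight, slopeExp_self hr]
  calc 2 * ∑ i : Fin r, (r - (i : ℕ)) = (∑ i ∈ Finset.range (r + 1), (r - i)) * 2 := by
        rw [Fin.sum_univ_eq_sum_range (r - ·), Finset.sum_range_succ, Nat.sub_self, add_zero,
          mul_comm]
    _ = (∑ i ∈ Finset.range (r + 1), i) * 2 := by rw [Finset.sum_flip fun i => i]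
    _ = r * (r + 1) := by rw [Finset.sum_range_id_mul_two, Nat.add_sub_cancel, mul_comm]

variable {b : ℝ}

theorem inv_pow_slopeWeight_succ (hb : 0 < b) (hr : 0 < r) (hk : r.Coprime (k + 1)) :
    (b ^ slopeWeight r (k + 1))⁻¹ = (b ^ r)⁻¹ * (b ^ (-((r : ℝ) + 1) / 2)) ^ k := by
  have hW : (2 : ℝ) * slopeWeight r (k + 1) + 1 = r * (k + 1) + r + (k + 1) := by
    exact_mod_cast two_mul_slopeWeight_add_one hr hk
  simp only [← Real.rpow_natCast]
  rw [← Real.rpow_neg hb.le, ← Real.rpow_neg hb.le, ← Real.rpow_mul hb.le, ← Real.rpow_add hb]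
  congr 1
  linarith

theorem mul_inv_pow_slopeWeight_self (hb : 0 < b) (hr : 0 < r) :
    b * (b ^ slopeWeight r r)⁻¹ = b ^ (-(r : ℝ) * ((r : ℝ) + 1) / 2 + 1) := by
  have hW : (2 : ℝ) * slopeWeight r r = r * (r + 1) := by
    exact_mod_cast two_mul_slopeWeight_self hr
  rw [Real.rpow_add_one hb.ne', mul_comm, ← Real.rpow_natCast, ← Real.rpow_neg hb.le]
  congr 2
  linarith

end SlopeExponents

section Recursion
variable {p r k : ℕ} [Fact p.Prime] {c : Fin r → ℤ_[p]}

/-- Coefficient vectors of the monic polynomials of degree `r` over `ℤ_p` whose Newton polygon lies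
on or above the segment from `(0, k)` to `(r, 0)`. -/
def slopeBox (p : ℕ) [Fact p.Prime] (r k : ℕ) : Set (Fin r → ℤ_[p]) :=
  dvdBox p fun i : Fin r => slopeExp r k i

/-- Coefficient vectors of the irreducible monic polynomials of degree `r` over `ℤ_p`. -/
def irredSet (p : ℕ) [Fact p.Prime] (r : ℕ) : Set (Fin r → ℤ_[p]) :=
  {c | Irreducible (monicOfCoeffs c)}

theorem pow_slopeExp_dvd_iff (hr : 0 < r) (k i : ℕ) (x : ℤ_[p]) :
    (p : ℤ_[p]) ^ slopeExp r k i ∣ x ↔ ‖x‖ ^ r ≤ ((p : ℝ) ^ (-(k : ℤ))) ^ (r - i) := by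
  have hp : (1 : ℝ) < p := by exact_mod_cast (Fact.out : p.Prime).one_lt
  rcases eq_or_ne x 0 with rfl | hx
  · simp [hr.ne']
  rw [← Ideal.mem_span_singleton, PadicInt.mem_span_pow_iff_le_valuation x hx, slopeExp_le_iff hr,
    PadicInt.norm_eq_zpow_neg_valuation hx, ← zpow_natCast, ← zpow_natCast, ← zpow_mul, ← zpow_mul,
    zpow_le_zpow_iff_right₀ hp]
  zify
  constructor <;> intro h <;> linarith

theorem mem_slopeBox_iff_norm_pow_le (hr : 0 < r) :
    c ∈ slopeBox p r k ↔ ∀ i : Fin r, ‖c i‖ ^ r ≤ ((p : ℝ) ^ (-(k : ℤ))) ^ (r - (i : ℕ)) :=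
  forall_congr' fun i => pow_slopeExp_dvd_iff hr k i (c i)

theorem slopeBox_succ_subset (hr : 0 < r) : slopeBox p r (k + 1) ⊆ slopeBox p r k :=
  fun _ hc i => (pow_dvd_pow _ (slopeExp_mono hr k.le_succ)).trans (hc i)

variable [NeZero r]

theorem pow_dvd_coeff_zero_of_mem_slopeBox (hc : c ∈ slopeBox p r k) : (p : ℤ_[p]) ^ k ∣ c 0 := by
  simpa [slopeExp_zero (NeZero.pos r)] using hc 0

theorem irreducible_of_mem_slopeBox (hk : r.Coprime k) (hc : c ∈ slopeBox p r k)
    (h0 : ¬ (p : ℤ_[p]) ^ (k + 1) ∣ c 0) : c ∈ irredSet p r := by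
  have hc0 : c 0 ≠ 0 := fun h => h0 (h ▸ dvd_zero _)
  have hval : (c 0).valuation = k :=
    valuation_eq_of_pow_dvd_of_not_pow_succ_dvd (pow_dvd_coeff_zero_of_mem_slopeBox hc) h0
  refine irreducible_of_coprime_valuation_coeff_zero (monic_monicOfCoeffs c) ?_ ?_ fun i hi => ?_
  · rwa [coeff_zero_monicOfCoeffs]
  · rwa [natDegree_monicOfCoeffs, coeff_zero_monicOfCoeffs, hval]
  have hlead := (monic_monicOfCoeffs c).coeff_natDegree
  rw [natDegree_monicOfCoeffs] at hi hlead ⊢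
  rcases hi.eq_or_lt with rfl | hi
  · rw [hlead, norm_one, one_pow, Nat.sub_self, pow_zero]
  · rw [coeff_zero_monicOfCoeffs, PadicInt.norm_eq_zpow_neg_valuation hc0, hval,
      show i = ((⟨i, hi⟩ : Fin r) : ℕ) from rfl, coeff_monicOfCoeffs]
    exact (mem_slopeBox_iff_norm_pow_le (NeZero.pos r)).1 hc ⟨i, hi⟩

theorem mem_slopeBox_of_irreducible (hc : c ∈ irredSet p r) (h0 : (p : ℤ_[p]) ^ k ∣ c 0) :
    c ∈ slopeBox p r k := by
  refine (mem_slopeBox_iff_norm_pow_le (NeZero.pos r)).2 fun i => ?_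
  have h := norm_coeff_pow_le_of_irreducible (monic_monicOfCoeffs c) hc (i := i) (by simp)
  rw [natDegree_monicOfCoeffs, coeff_monicOfCoeffs, coeff_zero_monicOfCoeffs] at h
  refine h.trans (pow_le_pow_left₀ (norm_nonneg _) ?_ _)
  rwa [PadicInt.norm_le_pow_iff_mem_span_pow, Ideal.mem_span_singleton]

theorem irredSet_inter_slopeBox_eq_union (hk : r.Coprime k) :
    irredSet p r ∩ slopeBox p r k = slopeBox p r k \ {c | (p : ℤ_[p]) ^ (k + 1) ∣ c 0} ∪
      irredSet p r ∩ slopeBox p r (k + 1) := by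
  ext c
  constructor
  · rintro ⟨hc, hck⟩
    by_cases h0 : (p : ℤ_[p]) ^ (k + 1) ∣ c 0
    · exact Or.inr ⟨hc, mem_slopeBox_of_irreducible hc h0⟩
    · exact Or.inl ⟨hck, h0⟩
  · rintro (⟨hck, h0⟩ | ⟨hc, hck⟩)
    · exact ⟨irreducible_of_mem_slopeBox hk hck h0, hck⟩
    · exact ⟨hc, slopeBox_succ_subset (NeZero.pos r) hck⟩

variable (μ : Measure (Fin r → ℤ_[p])) [μ.IsAddHaarMeasure] [IsProbabilityMeasure μ]

theorem measureReal_irredSet_inter_slopeBox (hk : r.Coprime k) :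
    μ.real (irredSet p r ∩ slopeBox p r k) =
      ((p : ℝ) ^ slopeWeight r k)⁻¹ * (1 - (p : ℝ)⁻¹) +
        μ.real (irredSet p r ∩ slopeBox p r (k + 1)) := by
  have hpow : slopeExp r k ((0 : Fin r) : ℕ) = k := slopeExp_zero (NeZero.pos r) k
  have hmeas : MeasurableSet (slopeBox p r k \ {c | (p : ℤ_[p]) ^ (k + 1) ∣ c 0}) := by
    have := measurableSet_dvdBox_sdiff_dvd (p := p) (fun i : Fin r => slopeExp r k i) 0
    rwa [hpow] at this
  have hreal : μ.real (slopeBox p r k \ {c | (p : ℤ_[p]) ^ (k + 1) ∣ c 0}) =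
      ((p : ℝ) ^ slopeWeight r k)⁻¹ * (1 - (p : ℝ)⁻¹) := by
    have := measureReal_dvdBox_sdiff_dvd μ (fun i : Fin r => slopeExp r k i) 0
    rwa [hpow] at this
  rw [irredSet_inter_slopeBox_eq_union hk, measureReal_union' ?_ hmeas, hreal]
  exact Set.disjoint_left.2 fun c hc hc' => hc.2 (pow_dvd_coeff_zero_of_mem_slopeBox hc'.2)

end Recursion

section SelfSimilarity
variable {p r : ℕ} [Fact p.Prime]

theorem irreducible_scaleRoots_iff {R : Type*} [CommRing R] [NoZeroDivisors R] {f : R[X]} (s : Rˣ) :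
    Irreducible (f.scaleRoots s) ↔ Irreducible f := by
  let e : R[X] ≃* R[X] :=
    { toFun := (scaleRoots · s)
      invFun := (scaleRoots · ↑s⁻¹)
      left_inv := fun g => (scaleRoots_mul g _ _).symm.trans (by rw [s.mul_inv, scaleRoots_one])
      right_inv := fun g => (scaleRoots_mul g _ _).symm.trans (by rw [s.inv_mul, scaleRoots_one])
      map_mul' := fun g h => mul_scaleRoots_of_noZeroDivisors g h s }
  exact MulEquiv.irreducible_iff e

theorem irreducible_scaleRoots_iff_of_monic {R : Type*} [CommRing R] [IsDomain R]
    [IsIntegrallyClosed R] {f : R[X]} (hf : f.Monic) {s : R} (hs : s ≠ 0) :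
    Irreducible (f.scaleRoots s) ↔ Irreducible f := by
  let K := FractionRing R
  have hs' : algebraMap R K s ≠ 0 := (map_ne_zero_iff _ (IsFractionRing.injective R K)).2 hs
  rw [((monic_scaleRoots_iff s).2 hf).irreducible_iff_irreducible_map_fraction_map (K := K),
    map_scaleRoots _ _ _ (by simp [hf.leadingCoeff]), ← Units.val_mk0 hs',
    irreducible_scaleRoots_iff, ← hf.irreducible_iff_irreducible_map_fraction_map]

theorem monicOfCoeffs_scaleCoeffs_slopeExp_self (hr : 0 < r) (c : Fin r → ℤ_[p]) :
    monicOfCoeffs (scaleCoeffs p (fun i : Fin r => slopeExp r r i) c) =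
      (monicOfCoeffs c).scaleRoots (p : ℤ_[p]) := by
  rw [← monicOfCoeffs_coeff ((monic_scaleRoots_iff _).2 (monic_monicOfCoeffs c))
    ((natDegree_scaleRoots _ _).trans (natDegree_monicOfCoeffs c))]
  congr 1
  ext1 i
  rw [scaleCoeffs_apply, slopeExp_self hr, coeff_scaleRoots, coeff_monicOfCoeffs,
    natDegree_monicOfCoeffs, mul_comm]

theorem irredSet_inter_slopeBox_self (hr : 0 < r) :
    irredSet p r ∩ slopeBox p r r =
      scaleCoeffs p (fun i : Fin r => slopeExp r r i) '' irredSet p r := by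
  have hp : (p : ℤ_[p]) ≠ 0 := Nat.cast_ne_zero.2 (Fact.out : p.Prime).ne_zero
  have hpre : scaleCoeffs p (fun i : Fin r => slopeExp r r i) ⁻¹' irredSet p r = irredSet p r := by
    ext c
    rw [Set.mem_preimage, irredSet, Set.mem_ofPred_eq, monicOfCoeffs_scaleCoeffs_slopeExp_self hr,
      irreducible_scaleRoots_iff_of_monic (monic_monicOfCoeffs c) hp, Set.mem_ofPred_eq]
  rw [slopeBox, ← range_scaleCoeffs, ← Set.image_preimage_eq_inter_range, hpre]

theorem measureReal_irredSet_inter_slopeBox_self (μ : Measure (Fin r → ℤ_[p]))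
    [μ.IsAddHaarMeasure] (hr : 0 < r) :
    μ.real (irredSet p r ∩ slopeBox p r r) =
      ((p : ℝ) ^ slopeWeight r r)⁻¹ * μ.real (irredSet p r) := by
  rw [irredSet_inter_slopeBox_self hr, measureReal_image_scaleCoeffs, slopeWeight]

end SelfSimilarity

section Reduction
variable {p : ℕ} [Fact p.Prime]

/-- Coordinatewise reduction modulo `p`. -/
noncomputable def reduceCoeffs {ι : Type*} : (ι → ℤ_[p]) →+ (ι → ZMod p) :=
  PadicInt.toZMod.toAddMonoidHom.compLeft ι

section Fibers
variable {ι : Type*}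

theorem reduceCoeffs_surjective :
    Function.Surjective (reduceCoeffs : (ι → ℤ_[p]) → ι → ZMod p) :=
  (ZMod.ringHom_surjective PadicInt.toZMod).comp_left

theorem mem_dvdBox_one_iff {c : ι → ℤ_[p]} : c ∈ dvdBox p 1 ↔ reduceCoeffs c = 0 := by
  rw [funext_iff]
  refine forall_congr' fun i => ?_
  rw [Pi.one_apply, pow_one, ← PadicInt.norm_lt_one_iff_dvd, norm_lt_one_iff_toZMod_eq_zero]
  rfl

theorem reduceCoeffs_preimage_singleton (c : ι → ℤ_[p]) :
    reduceCoeffs ⁻¹' {reduceCoeffs c} = (-c + ·) ⁻¹' dvdBox p 1 := by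
  ext x
  rw [Set.mem_preimage, Set.mem_preimage, Set.mem_singleton_iff, mem_dvdBox_one_iff, map_add,
    map_neg, neg_add_eq_zero, eq_comm]

theorem measurableSet_reduceCoeffs_preimage_singleton [Countable ι] (d : ι → ZMod p) :
    MeasurableSet ((reduceCoeffs : (ι → ℤ_[p]) → ι → ZMod p) ⁻¹' {d}) := by
  obtain ⟨c, rfl⟩ := reduceCoeffs_surjective d
  rw [reduceCoeffs_preimage_singleton]
  exact measurable_const_add _ (measurableSet_dvdBox _)

theorem measureReal_reduceCoeffs_preimage_singleton [Fintype ι] (μ : Measure (ι → ℤ_[p]))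
    [μ.IsAddHaarMeasure] [IsProbabilityMeasure μ] (d : ι → ZMod p) :
    μ.real (reduceCoeffs ⁻¹' {d}) = ((p : ℝ) ^ Fintype.card ι)⁻¹ := by
  obtain ⟨c, rfl⟩ := reduceCoeffs_surjective d
  rw [reduceCoeffs_preimage_singleton, measureReal_def, measure_preimage_add, ← measureReal_def,
    measureReal_dvdBox]
  simp

end Fibers

variable {r : ℕ}

theorem map_toZMod_monicOfCoeffs (c : Fin r → ℤ_[p]) :
    (monicOfCoeffs c).map PadicInt.toZMod = monicOfCoeffs (reduceCoeffs c) :=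
  map_monicOfCoeffs _ c

theorem slopeBox_one : slopeBox p r 1 = dvdBox p 1 :=
  congrArg (dvdBox p) (funext fun i => slopeExp_one i.2)

theorem reduceCoeffs_preimage_subset_irredSet {d : Fin r → ZMod p}
    (hd : Irreducible (monicOfCoeffs d)) : reduceCoeffs ⁻¹' {d} ⊆ irredSet p r := by
  rintro c rfl
  exact (monic_monicOfCoeffs c).irreducible_of_irreducible_map PadicInt.toZMod _
    (map_toZMod_monicOfCoeffs c ▸ hd)

theorem irreducible_or_eq_pow_of_mem_irredSet (hr : r.Prime) {c : Fin r → ℤ_[p]}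
    (hc : c ∈ irredSet p r) :
    Irreducible (monicOfCoeffs (reduceCoeffs c)) ∨
      ∃ a, monicOfCoeffs (reduceCoeffs c) = (X - C a) ^ r := by
  simpa only [natDegree_monicOfCoeffs, map_toZMod_monicOfCoeffs] using
    irreducible_map_toZMod_or_eq_pow (monic_monicOfCoeffs c) hc
      (by rwa [natDegree_monicOfCoeffs])

theorem taylorCoeffs_mem_irredSet_iff {t : ℤ_[p]} {c : Fin r → ℤ_[p]} :
    taylorCoeffs t c ∈ irredSet p r ↔ c ∈ irredSet p r := by
  rw [irredSet, Set.mem_ofPred_eq, monicOfCoeffs_taylorCoeffs]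
  exact MulEquiv.irreducible_iff (taylorEquiv t)

theorem reduceCoeffs_taylorCoeffs (t : ℤ_[p]) (c : Fin r → ℤ_[p]) :
    reduceCoeffs (taylorCoeffs t c) = taylorCoeffs (PadicInt.toZMod t) (reduceCoeffs c) := by
  refine monicOfCoeffs_injective ?_
  rw [← map_toZMod_monicOfCoeffs, monicOfCoeffs_taylorCoeffs, monicOfCoeffs_taylorCoeffs,
    ← map_toZMod_monicOfCoeffs]
  simp [taylor_apply, Polynomial.map_comp]

theorem measureReal_irredSet_inter_preimage_of_eq_pow (μ : Measure (Fin r → ℤ_[p]))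
    [μ.IsAddHaarMeasure] {d : Fin r → ZMod p} {a : ZMod p}
    (hd : monicOfCoeffs d = (X - C a) ^ r) :
    μ.real (irredSet p r ∩ reduceCoeffs ⁻¹' {d}) = μ.real (irredSet p r ∩ slopeBox p r 1) := by
  obtain ⟨t, rfl⟩ := ZMod.ringHom_surjective (PadicInt.toZMod (p := p)) a
  have hd0 : taylorCoeffs (PadicInt.toZMod t) d = 0 := monicOfCoeffs_injective <| by
    rw [monicOfCoeffs_taylorCoeffs, hd, taylor_pow, map_sub, taylor_X, taylor_C,
      add_sub_cancel_right, monicOfCoeffs_zero]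
  rw [← measureReal_preimage_taylorCoeffs μ t (irredSet p r ∩ slopeBox p r 1)]
  congr 1
  ext c
  rw [Set.mem_preimage, Set.mem_inter_iff, Set.mem_inter_iff, taylorCoeffs_mem_irredSet_iff,
    slopeBox_one, mem_dvdBox_one_iff, reduceCoeffs_taylorCoeffs, ← hd0,
    (taylorCoeffs_bijective _).injective.eq_iff]
  rfl

end Reduction

section Density
variable {p r : ℕ} [Fact p.Prime]

open Classical in
theorem measureReal_irredSet_inter_reduceCoeffs_preimage (μ : Measure (Fin r → ℤ_[p]))
    [μ.IsAddHaarMeasure] [IsProbabilityMeasure μ] (hr : r.Prime) (d : Fin r → ZMod p) :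
    μ.real (irredSet p r ∩ reduceCoeffs ⁻¹' {d}) =
      (if Irreducible (monicOfCoeffs d) then ((p : ℝ) ^ r)⁻¹ else 0) +
        if ∃ a, monicOfCoeffs d = (X - C a) ^ r then μ.real (irredSet p r ∩ slopeBox p r 1)
        else 0 := by
  by_cases hirr : Irreducible (monicOfCoeffs d)
  · have hpow : ¬ ∃ a, monicOfCoeffs d = (X - C a) ^ r := by
      rintro ⟨a, ha⟩
      exact not_irreducible_pow hr.ne_one (ha ▸ hirr)
    rw [if_pos hirr, if_neg hpow, add_zero,
      Set.inter_eq_right.2 (reduceCoeffs_preimage_subset_irredSet hirr),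
      measureReal_reduceCoeffs_preimage_singleton, Fintype.card_fin]
  rw [if_neg hirr, zero_add]
  split_ifs with hpow
  · exact measureReal_irredSet_inter_preimage_of_eq_pow μ hpow.choose_spec
  · rw [Set.eq_empty_of_forall_notMem (s := _ ∩ _) ?_, measureReal_empty]
    rintro c ⟨hc, rfl⟩
    exact (irreducible_or_eq_pow_of_mem_irredSet hr hc).elim hirr hpow

variable (μ : Measure (Fin r → ℤ_[p])) [μ.IsAddHaarMeasure] [IsProbabilityMeasure μ]

theorem measureReal_irredSet_eq_add_mul (hr : r.Prime) :
    μ.real (irredSet p r) =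
      Nat.card {d : Fin r → ZMod p // Irreducible (monicOfCoeffs d)} * ((p : ℝ) ^ r)⁻¹ +
        p * μ.real (irredSet p r ∩ slopeBox p r 1) := by
  classical
  have hsum (P : (Fin r → ZMod p) → Prop) [DecidablePred P] (x : ℝ) :
      ∑ d, (if P d then x else 0) = Nat.card {d // P d} * x := by
    rw [← Finset.sum_filter, Finset.sum_const, Nat.card_eq_fintype_card, Fintype.card_subtype,
      nsmul_eq_mul]
  rw [measureReal_eq_sum_inter_preimage_singleton μ measurableSet_reduceCoeffs_preimage_singleton,
    Finset.sum_congr rfl fun d _ => measureReal_irredSet_inter_reduceCoeffs_preimage μ hr d,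
    Finset.sum_add_distrib, hsum, hsum, card_monicOfCoeffs_eq_pow hr.ne_zero, Nat.card_zmod]

theorem measureReal_irredSet_inter_slopeBox_one_eq_sum (hr : r.Prime) {n : ℕ} (hn : n < r) :
    μ.real (irredSet p r ∩ slopeBox p r 1) =
      (∑ j ∈ Finset.range n, ((p : ℝ) ^ slopeWeight r (j + 1))⁻¹) * (1 - (p : ℝ)⁻¹) +
        μ.real (irredSet p r ∩ slopeBox p r (n + 1)) := by
  have : NeZero r := ⟨hr.ne_zero⟩
  induction n with
  | zero => simp
  | succ n ih =>
    rw [ih (by omega), Finset.sum_range_succ,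
      measureReal_irredSet_inter_slopeBox μ (Nat.coprime_of_lt_prime n.succ_ne_zero hn hr)]
    ring

theorem measureReal_irredSet_inter_slopeBox_one (hr : r.Prime) :
    μ.real (irredSet p r ∩ slopeBox p r 1) =
      ((p : ℝ) ^ r)⁻¹ * (∑ j ∈ Finset.range (r - 1), ((p : ℝ) ^ (-((r : ℝ) + 1) / 2)) ^ j) *
        (1 - (p : ℝ)⁻¹) + ((p : ℝ) ^ slopeWeight r r)⁻¹ * μ.real (irredSet p r) := by
  have hp : (0 : ℝ) < p := Nat.cast_pos.2 (Fact.out : p.Prime).pos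
  rw [measureReal_irredSet_inter_slopeBox_one_eq_sum μ hr (Nat.sub_one_lt hr.ne_zero),
    Nat.sub_add_cancel hr.pos, measureReal_irredSet_inter_slopeBox_self μ hr.pos, Finset.mul_sum]
  congr 2
  refine Finset.sum_congr rfl fun j hj => inv_pow_slopeWeight_succ hp hr.pos ?_
  rw [Finset.mem_range] at hj
  exact Nat.coprime_of_lt_prime j.succ_ne_zero (by omega) hr

theorem measureReal_irredSet (hr : r.Prime) :
    μ.real (irredSet p r) =
      (((p : ℝ) ^ r - p) * (1 - (p : ℝ) ^ (-((r : ℝ) + 1) / 2)) +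
          r * ((p : ℝ) - 1) * (1 - (p : ℝ) ^ (-((r : ℝ) + 1) * ((r : ℝ) - 1) / 2))) /
        (r * (p : ℝ) ^ r * (1 - (p : ℝ) ^ (-(r : ℝ) * ((r : ℝ) + 1) / 2 + 1)) *
          (1 - (p : ℝ) ^ (-((r : ℝ) + 1) / 2))) := by
  have hp1 : (1 : ℝ) < p := Nat.one_lt_cast.2 (Fact.out : p.Prime).one_lt
  have hp0 : (0 : ℝ) < p := zero_lt_one.trans hp1
  have hr1 : (1 : ℝ) < r := Nat.one_lt_cast.2 hr.one_lt
  have hgeom : (p : ℝ) ^ (-((r : ℝ) + 1) * ((r : ℝ) - 1) / 2) =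
      ((p : ℝ) ^ (-((r : ℝ) + 1) / 2)) ^ (r - 1) := by
    rw [← Real.rpow_mul_natCast hp0.le, Nat.cast_pred hr.pos, div_mul_eq_mul_div]
  have hdisc := measureReal_irredSet_inter_slopeBox_one μ hr
  have hself := mul_inv_pow_slopeWeight_self hp0 hr.pos
  have hq1 : (p : ℝ) ^ (-((r : ℝ) + 1) / 2) < 1 :=
    Real.rpow_lt_one_of_one_lt_of_neg hp1 (by linarith)
  have hD1 : (p : ℝ) ^ (-(r : ℝ) * ((r : ℝ) + 1) / 2 + 1) < 1 :=
    Real.rpow_lt_one_of_one_lt_of_neg hp1 (by nlinarith)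
  rw [hgeom]
  set q := (p : ℝ) ^ (-((r : ℝ) + 1) / 2)
  set D := (p : ℝ) ^ (-(r : ℝ) * ((r : ℝ) + 1) / 2 + 1)
  set N := Nat.card {d : Fin r → ZMod p // Irreducible (monicOfCoeffs d)} with hN
  have hcard : (N : ℝ) * r = (p : ℝ) ^ r - p := by
    rw [← Nat.cast_mul, hN, card_irreducible_monicOfCoeffs_mul (ZMod p) hr, Nat.card_zmod,
      Nat.cast_sub (Nat.le_self_pow hr.ne_zero p), Nat.cast_pow]
  have hlinear : μ.real (irredSet p r) = N * ((p : ℝ) ^ r)⁻¹ +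
      p * (((p : ℝ) ^ r)⁻¹ * ((q ^ (r - 1) - 1) / (q - 1)) * (1 - (p : ℝ)⁻¹)) +
        D * μ.real (irredSet p r) := by
    conv_lhs => rw [measureReal_irredSet_eq_add_mul μ hr, hdisc, geom_sum_eq hq1.ne]
    rw [← hself]
    ring
  have hq : q - 1 ≠ 0 := sub_ne_zero.2 hq1.ne
  have hden : (r : ℝ) * (p : ℝ) ^ r * (1 - D) * (1 - q) ≠ 0 :=
    (mul_pos (mul_pos (by positivity) (sub_pos.2 hD1)) (sub_pos.2 hq1)).ne'
  rw [eq_div_iff hden, ← hcard]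
  field_simp at hlinear
  linear_combination (-r : ℝ) * hlinear

end Density

theorem stmt_8_general (p r : ℕ) [Fact p.Prime] (hr : r.Prime)
    (μ : Measure (Fin r → ℤ_[p])) [μ.IsAddHaarMeasure] :
    (μ {c : Fin r → ℤ_[p] |
        Irreducible (X ^ r + ∑ i : Fin r, C (c i) * X ^ (i : ℕ))}).toReal /
      (μ Set.univ).toReal =
      (((p : ℝ) ^ r - p) * (1 - (p : ℝ) ^ (-((r : ℝ) + 1) / 2)) +
          r * ((p : ℝ) - 1) * (1 - (p : ℝ) ^ (-((r : ℝ) + 1) * ((r : ℝ) - 1) / 2))) /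
        (r * (p : ℝ) ^ r * (1 - (p : ℝ) ^ (-(r : ℝ) * ((r : ℝ) + 1) / 2 + 1)) *
          (1 - (p : ℝ) ^ (-((r : ℝ) + 1) / 2))) := by
  have h0 : μ Set.univ ≠ 0 := NeZero.ne _
  have htop : μ Set.univ ≠ ⊤ := measure_ne_top _ _
  have : ((μ Set.univ)⁻¹ • μ).IsAddHaarMeasure :=
    .smul μ (ENNReal.inv_ne_zero.2 htop) (ENNReal.inv_ne_top.2 h0)
  rw [← measureReal_irredSet ((μ Set.univ)⁻¹ • μ) hr, measureReal_ennreal_smul_apply,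
    ENNReal.toReal_inv, div_eq_inv_mul]
  rfl

/-- For primes `p ≠ r`, the Haar-measure proportion of monic degree-`r` polynomials
over `ℤ_p` (identified with `ℤ_p^r` via their non-leading coefficients) that are
irreducible equals the stated rational function of `p`. -/
theorem stmt_8 (p r : ℕ) [Fact p.Prime] (hr : r.Prime) (hpr : p ≠ r)
    (μ : Measure (Fin r → ℤ_[p])) [μ.IsAddHaarMeasure] :
    (μ {c : Fin r → ℤ_[p] |
        Irreducible (X ^ r + ∑ i : Fin r, C (c i) * X ^ (i : ℕ))}).toReal /
      (μ Set.univ).toReal =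
      (((p : ℝ) ^ r - p) * (1 - (p : ℝ) ^ (-((r : ℝ) + 1) / 2)) +
          r * ((p : ℝ) - 1) * (1 - (p : ℝ) ^ (-((r : ℝ) + 1) * ((r : ℝ) - 1) / 2))) /
        (r * (p : ℝ) ^ r * (1 - (p : ℝ) ^ (-(r : ℝ) * ((r : ℝ) + 1) / 2 + 1)) *
          (1 - (p : ℝ) ^ (-((r : ℝ) + 1) / 2))) :=
  stmt_8_general p r hr μ
end

section
/- Let p be an odd prime, ζ ∈ Z_p such that x^2 + ζ is irreducible mod p. Let f(x) = (x^2 + pαx + pβ + ζ)(x^2 - pαx + pγ + ζ) with α, β, γ ∈ Z_p. Suppose p^k divides both α and β - γ, but p^{k+1} does not divide at least one of them. Then every monic quartic g ∈ Z_p[x] with g ≡ f (mod p^{2k+3}) is reducible in Z_p[x]. -/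
/-!
Let `f₁`, `f₂` be the two quadratic factors and suppose that `p ^ k` exactly divides the pair
`(α, β - γ)`. Then `f₂ - f₁ = p ^ (k + 1) * τ` where `τ` has degree at most one and is nonzero
modulo `p`. As `f₁` is irreducible modulo `p`, it is coprime to `τ`, so `d = p ^ (k + 1)` lies in
the ideal `(f₁, f₂)`. For `g ≡ f₁ * f₂` modulo `d ^ 2 * p` we look for a factorization
`g = (f₁ + d * p * u) * (f₂ + d * p * v)`. Using `d ∈ (f₁, f₂)` to solve the linear part, this
becomes an equation `w + p * B(w, w) = h` for `w = (u, v)` with `B` bilinear, which a contraction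
argument solves.
-/

open Polynomial

section AdicCompleteness

variable {R M ι : Type*} [CommRing R] {I : Ideal R} [AddCommGroup M] [Module R M]

theorem mem_smul_top_iff_forall_repr_mem [Finite ι] (b : Module.Basis ι R M) {x : M} :
    x ∈ (I • ⊤ : Submodule R M) ↔ ∀ i, b.repr x i ∈ I := by
  have := Fintype.ofFinite ι
  refine ⟨fun hx i => ?_, fun hx => ?_⟩
  · simpa using Submodule.smul_top_le_comap_smul_top I (b.coord i) hx
  · rw [← b.sum_repr x]
    exact sum_mem fun i _ => Submodule.smul_mem_smul (hx i) trivial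

theorem smodEq_smul_top_iff_forall_repr [Finite ι] (b : Module.Basis ι R M) {x y : M} :
    x ≡ y [SMOD (I • ⊤ : Submodule R M)] ↔
      ∀ i, b.repr x i ≡ b.repr y i [SMOD (I • ⊤ : Submodule R R)] := by
  simp [SModEq.sub_mem, mem_smul_top_iff_forall_repr_mem b]

theorem isAdicComplete_of_basis [Finite ι] [IsAdicComplete I R] (b : Module.Basis ι R M) :
    IsAdicComplete I M where
  haus' x hx := by
    have hrepr := fun n => (smodEq_smul_top_iff_forall_repr b).1 (hx n)
    exact b.ext_elem fun i => IsHausdorff.eq_iff_smodEq (I := I).2 fun n => hrepr n i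
  prec' f hf := by
    have hlim (i : ι) := IsPrecomplete.prec ‹IsAdicComplete I R›.toIsPrecomplete
      (f := fun n => b.repr (f n) i) fun hmn => (smodEq_smul_top_iff_forall_repr b).1 (hf hmn) i
    choose L hL using hlim
    refine ⟨b.equivFun.symm L, fun n => (smodEq_smul_top_iff_forall_repr b).2 fun i => ?_⟩
    rw [← b.equivFun_apply (b.equivFun.symm L), LinearEquiv.apply_symm_apply]
    exact hL i n

theorem exists_isFixedPt_of_adic_contraction [IsAdicComplete I M] {T : M → M}
    (hT : ∀ (n : ℕ) (x y : M), x ≡ y [SMOD (I ^ n • ⊤ : Submodule R M)] →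
      T x ≡ T y [SMOD (I ^ (n + 1) • ⊤ : Submodule R M)]) :
    ∃ x, Function.IsFixedPt T x := by
  have hiter (n k : ℕ) : T^[n] 0 ≡ T^[n + k] 0 [SMOD (I ^ n • ⊤ : Submodule R M)] := by
    induction n with
    | zero => simp [SModEq.sub_mem]
    | succ n ih =>
      rw [Nat.add_right_comm, Function.iterate_succ_apply', Function.iterate_succ_apply']
      exact hT n _ _ ih
  obtain ⟨x, hx⟩ := IsPrecomplete.prec (I := I) inferInstance (f := fun n => T^[n] 0)
    fun {m n} hmn => Nat.add_sub_cancel' hmn ▸ hiter m (n - m)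
  refine ⟨x, (IsHausdorff.eq_iff_smodEq (I := I)).2 fun n => ?_⟩
  have hstep : T x ≡ x [SMOD (I ^ (n + 1) • ⊤ : Submodule R M)] := by
    refine .trans ?_ (hx (n + 1))
    rw [Function.iterate_succ_apply']
    exact hT n _ _ (hx n).symm
  exact hstep.mono (Submodule.smul_mono_left (Ideal.pow_le_pow_right n.le_succ))

theorem exists_add_smul_apply_self_eq [IsAdicComplete I M] (B : M →ₗ[R] M →ₗ[R] M)
    {c : R} (hc : c ∈ I) (h : M) : ∃ x, x + c • B x x = h := by
  obtain ⟨x, hx⟩ := exists_isFixedPt_of_adic_contraction (I := I) (T := fun x => h - c • B x x)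
    fun n x y hxy => by
      rw [SModEq.sub_mem] at hxy ⊢
      have hleft : B (x - y) y ∈ (I ^ n • ⊤ : Submodule R M) :=
        Submodule.smul_top_le_comap_smul_top (I ^ n) (B.flip y) hxy
      have hright : B x (x - y) ∈ (I ^ n • ⊤ : Submodule R M) :=
        Submodule.smul_top_le_comap_smul_top (I ^ n) (B x) hxy
      have hdiff : h - c • B x x - (h - c • B y y) = -(c • (B x (x - y) + B (x - y) y)) := by
        simp only [map_sub, LinearMap.sub_apply]
        module
      rw [hdiff, pow_succ', mul_smul]
      exact neg_mem (Submodule.smul_mem_smul hc (add_mem hright hleft))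
  exact ⟨x, by rw [← eq_sub_iff_add_eq]; exact hx.symm⟩

end AdicCompleteness

section HenselFactorization

variable {R : Type*} [CommRing R] {f f₁ f₂ g : R[X]} {m n : ℕ}

/-- Reduction modulo a monic polynomial of degree `n`, as a linear map onto the free module of
polynomials of degree less than `n`. -/
noncomputable def modByMonicDegreeLT (hf : IsMonicOfDegree f n) : R[X] →ₗ[R] degreeLT R n :=
  (modByMonicHom f).codRestrict _ fun p => by
    nontriviality R
    rw [mem_degreeLT, ← hf.natDegree_eq, ← degree_eq_natDegree hf.monic.ne_zero]
    exact degree_modByMonic_lt p hf.monic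

@[simp]
theorem coe_modByMonicDegreeLT (hf : IsMonicOfDegree f n) (p : R[X]) :
    (modByMonicDegreeLT hf p : R[X]) = p %ₘ f :=
  rfl

theorem degree_lt_degree_of_mem_degreeLT [Nontrivial R] (hf : IsMonicOfDegree f n) {p : R[X]}
    (hp : p ∈ degreeLT R n) : p.degree < f.degree := by
  rwa [degree_eq_natDegree hf.ne_zero, hf.natDegree_eq, ← mem_degreeLT]

theorem modByMonic_eq_self_of_mem_degreeLT (hf : IsMonicOfDegree f n) {p : R[X]}
    (hp : p ∈ degreeLT R n) : p %ₘ f = p := by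
  nontriviality R
  exact (modByMonic_eq_self_iff hf.monic).2 (degree_lt_degree_of_mem_degreeLT hf hp)

theorem isMonicOfDegree_add_of_mem_degreeLT (hf : IsMonicOfDegree f n) {p : R[X]}
    (hp : p ∈ degreeLT R n) : IsMonicOfDegree (f + p) n := by
  rcases subsingleton_or_nontrivial R with _ | _
  · simpa using hf
  have hlt := degree_lt_degree_of_mem_degreeLT hf hp
  exact ⟨(natDegree_add_eq_left_of_degree_lt hlt).trans hf.natDegree_eq, hf.monic.add_of_left hlt⟩

theorem mul_mem_degreeLT {p q : R[X]} (hp : p ∈ degreeLT R m) (hq : q ∈ degreeLT R n) :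
    p * q ∈ degreeLT R (m + n) := by
  rw [mem_degreeLT] at *
  rw [Nat.cast_add]
  rcases eq_or_ne p 0 with rfl | hp₀
  · simp
  calc (p * q).degree ≤ p.degree + q.degree := degree_mul_le p q
    _ < p.degree + n := WithBot.add_lt_add_left (degree_ne_bot.2 hp₀) hq
    _ ≤ m + n := by gcongr

theorem sub_mem_degreeLT_of_isMonicOfDegree (hf : IsMonicOfDegree f n) (hg : IsMonicOfDegree g n) :
    f - g ∈ degreeLT R n := by
  rw [mem_degreeLT, degree_lt_iff_coeff_zero]
  intro k hk
  rw [coeff_sub, hf.coeff_eq hg hk, sub_self]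

theorem mul_modByMonic_mul_left (hf₁ : f₁.Monic) (hf₂ : f₂.Monic) (p : R[X]) :
    (f₁ * p) %ₘ (f₁ * f₂) = f₁ * (p %ₘ f₂) := by
  nontriviality R
  refine (div_modByMonic_unique (p /ₘ f₂) _ (hf₁.mul hf₂) ⟨?_, ?_⟩).2
  · rw [mul_assoc, ← mul_add, modByMonic_add_div]
  · rw [mul_comm f₁, mul_comm f₁, hf₁.degree_mul, hf₁.degree_mul]
    exact WithBot.add_lt_add_right (by simpa using hf₁.ne_zero) (degree_modByMonic_lt p hf₂)

theorem mul_modByMonic_add_mul_modByMonic (hf₁ : IsMonicOfDegree f₁ m) (hf₂ : IsMonicOfDegree f₂ n)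
    {a b p : R[X]} {d : R} (hab : a * f₁ + b * f₂ = C d) (hp : p ∈ degreeLT R (m + n)) :
    f₁ * ((a * p) %ₘ f₂) + f₂ * ((b * p) %ₘ f₁) = C d * p := by
  have hdp : C d * p ∈ degreeLT R (m + n) := by
    simpa only [smul_eq_C_mul] using Submodule.smul_mem _ d hp
  calc f₁ * ((a * p) %ₘ f₂) + f₂ * ((b * p) %ₘ f₁)
      = (f₁ * (a * p) + f₂ * (b * p)) %ₘ (f₁ * f₂) := by
        rw [add_modByMonic, mul_modByMonic_mul_left hf₁.monic hf₂.monic, mul_comm f₁ f₂,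
          mul_modByMonic_mul_left hf₂.monic hf₁.monic]
    _ = (C d * p) %ₘ (f₁ * f₂) := by
        congr 1
        linear_combination p * hab
    _ = C d * p := modByMonic_eq_self_of_mem_degreeLT (hf₁.mul hf₂) hdp

theorem exists_isMonicOfDegree_mul_eq {I : Ideal R} [IsAdicComplete I R]
    (hf₁ : IsMonicOfDegree f₁ m) (hf₂ : IsMonicOfDegree f₂ n) (hg : IsMonicOfDegree g (m + n))
    {a b : R[X]} {c d : R} (hab : a * f₁ + b * f₂ = C d) (hc : c ∈ I)
    (hgf : C (d ^ 2 * c) ∣ g - f₁ * f₂) :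
    ∃ g₁ g₂, IsMonicOfDegree g₁ m ∧ IsMonicOfDegree g₂ n ∧ g = g₁ * g₂ ∧
      C (d * c) ∣ g₁ - f₁ ∧ C (d * c) ∣ g₂ - f₂ := by
  obtain ⟨h, hh, hgh⟩ : ∃ h ∈ degreeLT R (m + n), g - f₁ * f₂ = C (d ^ 2 * c) * h := by
    obtain ⟨h, hh⟩ := hgf
    refine ⟨modByMonicDegreeLT (hf₁.mul hf₂) h, Subtype.prop _, ?_⟩
    rw [coe_modByMonicDegreeLT, ← smul_eq_C_mul, ← smul_modByMonic, smul_eq_C_mul, ← hh]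
    exact (modByMonic_eq_self_of_mem_degreeLT (hf₁.mul hf₂)
      (sub_mem_degreeLT_of_isMonicOfDegree hg (hf₁.mul hf₂))).symm
  have := isAdicComplete_of_basis (I := I) (degreeLT.basisProd R m n)
  let S : R[X] →ₗ[R] degreeLT R m × degreeLT R n :=
    (modByMonicDegreeLT hf₁ ∘ₗ LinearMap.mulLeft R b).prod
      (modByMonicDegreeLT hf₂ ∘ₗ LinearMap.mulLeft R a)
  let B := ((LinearMap.mul R R[X]).compl₁₂
    ((degreeLT R m).subtype ∘ₗ LinearMap.fst R _ (degreeLT R n))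
    ((degreeLT R n).subtype ∘ₗ LinearMap.snd R (degreeLT R m) _)).compr₂ S
  obtain ⟨⟨u, v⟩, huv⟩ := exists_add_smul_apply_self_eq B hc (S h)
  set y : R[X] := h - c • (u * v) with hy
  have hS : (u, v) = S y := by
    rw [hy, map_sub, map_smul, ← huv]
    exact (add_sub_cancel_right _ _).symm
  have hu : (u : R[X]) = (b * y) %ₘ f₁ := congrArg (fun w => (w.1 : R[X])) hS
  have hv : (v : R[X]) = (a * y) %ₘ f₂ := congrArg (fun w => (w.2 : R[X])) hS
  have hymem : y ∈ degreeLT R (m + n) :=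
    sub_mem hh (Submodule.smul_mem _ c (mul_mem_degreeLT u.2 v.2))
  have hlin : f₁ * v + f₂ * u = C d * y := by
    rw [hu, hv, mul_modByMonic_add_mul_modByMonic hf₁ hf₂ hab hymem]
  refine ⟨f₁ + (d * c) • (u : R[X]), f₂ + (d * c) • (v : R[X]),
    isMonicOfDegree_add_of_mem_degreeLT hf₁ (Submodule.smul_mem _ _ u.2),
    isMonicOfDegree_add_of_mem_degreeLT hf₂ (Submodule.smul_mem _ _ v.2), ?_,
    by simp [smul_eq_C_mul], by simp [smul_eq_C_mul]⟩
  simp only [smul_eq_C_mul, map_mul, map_pow] at hgh hy ⊢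
  linear_combination hgh - C d * C c * hlin - C d ^ 2 * C c * hy

theorem not_irreducible_mul_of_isMonicOfDegree (hm : m ≠ 0) (hn : n ≠ 0)
    (hf₁ : IsMonicOfDegree f₁ m) (hf₂ : IsMonicOfDegree f₂ n) : ¬ Irreducible (f₁ * f₂) := by
  have not_isUnit {f : R[X]} {k : ℕ} (hk : k ≠ 0) (hf : IsMonicOfDegree f k) : ¬ IsUnit f := by
    rwa [hf.monic.isUnit_iff, ← hf.monic.natDegree_eq_zero, hf.natDegree_eq]
  intro h
  rcases h.isUnit_or_isUnit rfl with hu | hu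
  · exact not_isUnit hm hf₁ hu
  · exact not_isUnit hn hf₂ hu

end HenselFactorization

-- `t ^ 2 - s * t * u + s ^ 2 * v` is the resultant of the two polynomials.
theorem isCoprime_X_sq_add_C_mul_X_add_C {R : Type*} [CommRing R] {u v s t : R}
    (h : IsUnit (t ^ 2 - s * t * u + s ^ 2 * v)) :
    IsCoprime (X ^ 2 + C u * X + C v) (C s * X + C t) := by
  obtain ⟨r, hr⟩ := h.exists_left_inv
  refine ⟨C r * C s ^ 2, -C r * (C s * X + C s * C u - C t), ?_⟩
  have hC := congrArg C hr
  simp only [map_mul, map_add, map_sub, map_pow, map_one] at hC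
  linear_combination hC

theorem sq_add_sq_mul_ne_zero {F : Type*} [Field F] {a s t : F}
    (ha : Irreducible (X ^ 2 + C a)) (hst : s ≠ 0 ∨ t ≠ 0) : t ^ 2 + s ^ 2 * a ≠ 0 := by
  have hroot : ∀ b, b ^ 2 ≠ -a := by
    rwa [← X_pow_sub_C_irreducible_iff_of_prime Nat.prime_two, map_neg, sub_neg_eq_add]
  intro h
  by_cases hs : s = 0
  · simp_all
  · refine hroot (t / s) ?_
    field_simp
    linear_combination h

theorem C_dvd_sub_iff_map_eq {R S : Type*} [CommRing R] [CommRing S] {φ : R →+* S} {r : R}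
    (hφ : RingHom.ker φ = Ideal.span {r}) {f g : R[X]} : C r ∣ f - g ↔ f.map φ = g.map φ := by
  simp only [C_dvd_iff_dvd_coeff, Polynomial.ext_iff, coeff_map, coeff_sub]
  simp only [← Ideal.mem_span_singleton, ← hφ, RingHom.sub_mem_ker_iff]

section LocalRing

open IsLocalRing

variable {R : Type*} [CommRing R] [IsLocalRing R]

theorem isUnit_sq_sub_mul_add_sq_mul {ζ u v s t : R}
    (hζ : Irreducible (X ^ 2 + C (residue R ζ))) (hu : residue R u = 0)
    (hv : residue R v = residue R ζ) (hst : residue R s ≠ 0 ∨ residue R t ≠ 0) :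
    IsUnit (t ^ 2 - s * t * u + s ^ 2 * v) := by
  rw [← residue_ne_zero_iff_isUnit]
  simpa [hu, hv] using sq_add_sq_mul_ne_zero hζ hst

theorem stmt_10_general [IsAdicComplete (maximalIdeal R) R] {ϖ : R}
    (hϖ : maximalIdeal R = Ideal.span {ϖ}) (htwo : IsUnit (2 : R)) {ζ α β γ : R} {k : ℕ}
    (hζ : Irreducible (X ^ 2 + C (residue R ζ)))
    (hk : ϖ ^ k ∣ α ∧ ϖ ^ k ∣ β - γ) (hk1 : ¬ (ϖ ^ (k + 1) ∣ α ∧ ϖ ^ (k + 1) ∣ β - γ))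
    {g : R[X]} (hg : IsMonicOfDegree g 4)
    (hgf : C (ϖ ^ (2 * k + 3)) ∣ g - (X ^ 2 + C (ϖ * α) * X + C (ϖ * β + ζ)) *
      (X ^ 2 - C (ϖ * α) * X + C (ϖ * γ + ζ))) :
    ¬ Irreducible g := by
  obtain ⟨⟨α', rfl⟩, δ, hδ⟩ := hk
  have residue_eq_zero {x : R} : residue R x = 0 ↔ ϖ ∣ x := by
    rw [residue_eq_zero_iff, hϖ, Ideal.mem_span_singleton]
  have hunit : residue R (-2 * α') ≠ 0 ∨ residue R (-δ) ≠ 0 := by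
    contrapose! hk1
    rw [residue_eq_zero, residue_eq_zero, dvd_neg, htwo.neg.dvd_mul_left] at hk1
    rw [hδ, pow_succ]
    exact hk1.imp (mul_dvd_mul_left _) (mul_dvd_mul_left _)
  have hϖ₀ : residue R ϖ = 0 := residue_eq_zero.2 dvd_rfl
  obtain ⟨a, b, hab⟩ : IsCoprime (X ^ 2 + C (ϖ * (ϖ ^ k * α')) * X + C (ϖ * β + ζ))
      (C (-2 * α') * X + C (-δ)) :=
    isCoprime_X_sq_add_C_mul_X_add_C
      (isUnit_sq_sub_mul_add_sq_mul hζ (by simp [hϖ₀]) (by simp [hϖ₀]) hunit)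
  have hδC : C β - C γ = C ϖ ^ k * C δ := by rw [← C_sub, hδ, C_mul, C_pow]
  have hbezout : (C (ϖ ^ (k + 1)) * a - b) * (X ^ 2 + C (ϖ * (ϖ ^ k * α')) * X + C (ϖ * β + ζ)) +
      b * (X ^ 2 - C (ϖ * (ϖ ^ k * α')) * X + C (ϖ * γ + ζ)) = C (ϖ ^ (k + 1)) := by
    simp only [map_mul, map_pow, map_add, map_neg, map_ofNat] at hab ⊢
    linear_combination C ϖ ^ (k + 1) * hab - b * C ϖ * hδC
  rw [show ϖ ^ (2 * k + 3) = (ϖ ^ (k + 1)) ^ 2 * ϖ by ring] at hgf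
  obtain ⟨g₁, g₂, hg₁, hg₂, rfl, -⟩ := exists_isMonicOfDegree_mul_eq
    (isMonicOfDegree_add_add_two _ _) (isMonicOfDegree_sub_add_two _ _) hg hbezout
    (hϖ ▸ Ideal.mem_span_singleton_self ϖ) hgf
  exact not_irreducible_mul_of_isMonicOfDegree two_ne_zero two_ne_zero hg₁ hg₂

end LocalRing

theorem irreducible_X_sq_add_C_residue {p : ℕ} [Fact p.Prime] {ζ : ℤ_[p]}
    (h : Irreducible (X ^ 2 + C (PadicInt.toZMod ζ) : (ZMod p)[X])) :
    Irreducible (X ^ 2 + C (IsLocalRing.residue ℤ_[p] ζ)) := by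
  rw [← MulEquiv.irreducible_iff (mapEquiv PadicInt.residueField)]
  simpa [PadicInt.toZMod_eq_residueField_comp_residue] using h

/-- Claim 1: with `x² + ζ` irreducible mod `p` and
`f = (x² + pαx + pβ + ζ)(x² - pαx + pγ + ζ)`, if `p^k` divides both `α` and `β - γ`
but `p^(k+1)` fails to divide at least one of them, then every monic quartic
`g ≡ f (mod p^(2k+3))` is reducible in `ℤ_p[x]`. -/
theorem stmt_10 (p : ℕ) [Fact p.Prime] (hodd : p ≠ 2) (ζ α β γ : ℤ_[p]) (k : ℕ)
    (hirr : Irreducible (X ^ 2 + C (PadicInt.toZMod ζ) : Polynomial (ZMod p)))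
    (hk : (p : ℤ_[p]) ^ k ∣ α ∧ (p : ℤ_[p]) ^ k ∣ (β - γ))
    (hk1 : ¬ ((p : ℤ_[p]) ^ (k + 1) ∣ α ∧ (p : ℤ_[p]) ^ (k + 1) ∣ (β - γ))) :
    ∀ g : Polynomial ℤ_[p], g.Monic → g.natDegree = 4 →
      g.map (PadicInt.toZModPow (2 * k + 3)) =
        ((X ^ 2 + C ((p : ℤ_[p]) * α) * X + C ((p : ℤ_[p]) * β + ζ)) *
          (X ^ 2 - C ((p : ℤ_[p]) * α) * X + C ((p : ℤ_[p]) * γ + ζ))).map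
            (PadicInt.toZModPow (2 * k + 3)) →
      ¬ Irreducible g := by
  intro g hg hdeg hgf
  have htwo : IsUnit ((2 : ℕ) : ℤ_[p]) := PadicInt.isUnit_iff.2 <|
    PadicInt.norm_natCast_eq_one_iff.2 ((Nat.coprime_primes Fact.out Nat.prime_two).2 hodd)
  exact stmt_10_general PadicInt.maximalIdeal_eq_span_p htwo (irreducible_X_sq_add_C_residue hirr)
    hk hk1 ⟨hdeg, hg⟩ ((C_dvd_sub_iff_map_eq (PadicInt.ker_toZModPow _)).2 hgf)
end

section
/- Let p be an odd prime and ζ ∈ Z_p such that -ζ is not a square mod p. The Haar-measure proportion of monic quartic polynomials f ∈ Z_p[x] with f ≡ (x^2 + ζ)^2 (mod p) that are irreducible in Z_p[x] equals (2p^2 + 1)/(2(p^2 + 1)). -/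
open MeasureTheory Polynomial

/-!
Completing the square writes a monic quartic uniquely as `f = Q² - w` with `Q` a monic quadratic and
`w` linear, and this change of variables preserves Haar measure up to a constant. In the residue
class of the square of an irreducible quadratic, `w` ranges over the linear polynomials that vanish
modulo the uniformizer `ϖ`, and two factors of `f` with half-difference `n = n₀ + n₁x` satisfy
`n² - (n₁²/2)² = w` in the unramified quadratic extension `R[x]/(Q)`. The correction is of higher
order in `n`, so by completeness `f` is reducible exactly when `w = 0` or `w = ϖ ^ (2i) y` with `i`
positive and `y` in the set `U` of elements reducing to a nonzero square of the residue field. The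
set `S` of all these `w` satisfies `S = ϖ² (U ∪ S)`. If the extension has a residue field of `q²`
elements, dilation by `ϖ²` divides measures by `q⁴` while `U` has measure `(q² - 1)/2` relative to
the admissible `w`, so `S` has relative measure `1/(2(q² + 1))`.
-/

section AdicCompleteness

variable {R : Type*} [CommRing R] {I : Ideal R}

theorem exists_isFixedPt_of_isAdicComplete {M : Type*} [AddCommGroup M] [Module R M]
    [IsAdicComplete I M] {T : M → M}
    (hT : ∀ n x y, x ≡ y [SMOD (I ^ n • ⊤ : Submodule R M)] →
      T x ≡ T y [SMOD (I ^ (n + 1) • ⊤ : Submodule R M)]) :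
    ∃ x, Function.IsFixedPt T x := by
  have hsucc (n : ℕ) : T^[n] 0 ≡ T^[n + 1] 0 [SMOD (I ^ n • ⊤ : Submodule R M)] := by
    induction n with
    | zero => simp [SModEq.top]
    | succ n ih =>
      rw [Function.iterate_succ_apply', Function.iterate_succ_apply']
      exact hT n _ _ ih
  have hmono {m n : ℕ} (hmn : m ≤ n) :
      (I ^ n • ⊤ : Submodule R M) ≤ I ^ m • ⊤ :=
    Submodule.smul_mono_left (Ideal.pow_le_pow_right hmn)
  have hcauchy {m n : ℕ} (hmn : m ≤ n) :
      T^[m] 0 ≡ T^[n] 0 [SMOD (I ^ m • ⊤ : Submodule R M)] := by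
    induction n, hmn using Nat.le_induction with
    | base => rfl
    | succ n hmn ih => exact ih.trans ((hsucc n).mono (hmono hmn))
  obtain ⟨x, hx⟩ := IsPrecomplete.prec' (I := I) (fun n => T^[n] 0) hcauchy
  refine ⟨x, eq_of_sub_eq_zero (IsHausdorff.haus' (I := I) _ fun n => ?_)⟩
  rw [SModEq.sub_mem, sub_zero, ← SModEq.sub_mem]
  calc T x ≡ T (T^[n] 0) [SMOD (I ^ n • ⊤ : Submodule R M)] :=
        (hT n _ _ (hx n).symm).mono (hmono n.le_succ)
    _ = T^[n + 1] 0 := (Function.iterate_succ_apply' T n 0).symm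
    _ ≡ x [SMOD (I ^ n • ⊤ : Submodule R M)] := (hx (n + 1)).mono (hmono n.le_succ)

theorem isPrecomplete_of_moduleFinite (M : Type*) [AddCommGroup M] [Module R M] [Module.Finite R M]
    [IsPrecomplete I R] : IsPrecomplete I M := by
  refine AdicCompletion.of_surjective_iff.mp fun x => ?_
  obtain ⟨y, rfl⟩ := AdicCompletion.ofTensorProduct_surjective_of_finite I M x
  induction y with
  | zero => exact ⟨0, by simp⟩
  | add y z hy hz =>
    obtain ⟨m, hm⟩ := hy
    obtain ⟨m', hm'⟩ := hz
    exact ⟨m + m', by rw [map_add, map_add, hm, hm']⟩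
  | tmul r m =>
    obtain ⟨r, rfl⟩ := AdicCompletion.of_surjective I R r
    refine ⟨r • m, ?_⟩
    rw [AdicCompletion.ofTensorProduct_tmul, map_smul]
    ext n
    rfl

theorem isPrecomplete_of_compactSpace [TopologicalSpace R] [IsTopologicalRing R] [CompactSpace R]
    [T2Space R] [IsNoetherianRing R] (I : Ideal R) : IsPrecomplete I R := by
  refine ⟨fun f hf => ?_⟩
  have hclosed (n : ℕ) : IsClosed ((· - f n) ⁻¹' ((I ^ n : Ideal R) : Set R)) :=
    (IsNoetherianRing.isClosed_ideal (I ^ n)).preimage (by fun_prop)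
  obtain ⟨x, hx⟩ := (hclosed 0).isCompact.nonempty_iInter_of_sequence_nonempty_isCompact_isClosed
    (fun n => (· - f n) ⁻¹' ((I ^ n : Ideal R) : Set R))
    (fun n x hx => by
      have := (I ^ n).add_mem (Ideal.pow_le_pow_right n.le_succ hx)
        (by simpa [SModEq.sub_mem] using (hf n.le_succ).symm)
      simpa using this)
    (fun n => ⟨f n, by simp⟩) hclosed
  refine ⟨x, fun n => SModEq.symm ?_⟩
  simpa [SModEq.sub_mem] using Set.mem_iInter.mp hx n

theorem exists_sq_add_mul_eq {A : Type*} [CommRing A] {ϖ : A} [IsAdicComplete (Ideal.span {ϖ}) A]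
    {e : A → A} (he : ∀ n x y, ϖ ^ n ∣ x - y → ϖ ^ n ∣ e x - e y) {r : A} (hr : IsUnit (2 * r))
    (z : A) : ∃ m, m ^ 2 + ϖ * e m = r ^ 2 + ϖ * z := by
  obtain ⟨d, hd⟩ := hr.exists_right_inv
  obtain ⟨x, hx⟩ := exists_isFixedPt_of_isAdicComplete (I := Ideal.span {ϖ})
    (T := fun x => d * (z - e (r + ϖ * x) - ϖ * x ^ 2)) fun n x y hxy => by
      simp only [SModEq.sub_mem, Ideal.span_singleton_pow, smul_eq_mul, Ideal.mul_top,
        Ideal.mem_span_singleton] at hxy ⊢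
      have h₁ : ϖ ^ (n + 1) ∣ e (r + ϖ * x) - e (r + ϖ * y) := by
        refine he _ _ _ ?_
        rw [pow_succ', add_sub_add_left_eq_sub, ← mul_sub]
        exact mul_dvd_mul_left ϖ hxy
      have h₂ : ϖ ^ (n + 1) ∣ ϖ * (x ^ 2 - y ^ 2) := by
        rw [pow_succ', sq_sub_sq]
        exact mul_dvd_mul_left ϖ (hxy.mul_left _)
      convert ((h₁.add h₂).mul_left d).neg_right using 1
      ring
  refine ⟨r + ϖ * x, ?_⟩
  linear_combination (-2 * r * ϖ) * hx.eq + ϖ * (z - e (r + ϖ * x) - ϖ * x ^ 2) * hd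

theorem finiteMultiplicity_of_isHausdorff {A : Type*} [CommRing A] {ϖ x : A}
    [IsHausdorff (Ideal.span {ϖ}) A] (hx : x ≠ 0) : FiniteMultiplicity ϖ x := by
  by_contra h
  refine hx (IsHausdorff.haus' (I := Ideal.span {ϖ}) x fun n => ?_)
  rw [SModEq.zero, smul_eq_mul, Ideal.mul_top, Ideal.span_singleton_pow, Ideal.mem_span_singleton]
  exact FiniteMultiplicity.not_iff_forall.mp h n

end AdicCompleteness

section Factorization

variable {R K : Type*} [CommRing R] [IsDomain R] [Field K] (φ : R →+* K)

theorem irreducible_X_sq_add_C {ζ : K} (hζ : ¬ ∃ t : K, t ^ 2 = -ζ) :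
    Irreducible (X ^ 2 + C ζ) := by
  have hm : (X ^ 2 + C ζ).Monic := monic_X_pow_add_C _ two_ne_zero
  have hd : (X ^ 2 + C ζ).natDegree = 2 := natDegree_X_pow_add_C
  refine (hm.irreducible_iff_roots_eq_zero_of_degree_le_three hd.ge (by lia)).mpr ?_
  refine Multiset.eq_zero_of_forall_notMem fun t ht => hζ ⟨t, eq_neg_of_add_eq_zero_left ?_⟩
  simpa using (mem_roots'.mp ht).2

theorem exists_pow_eq_of_monic_of_dvd_pow {q g : K[X]} (hq : Irreducible q) (hqm : q.Monic)
    (hg : g.Monic) {m : ℕ} (h : g ∣ q ^ m) : ∃ i, g = q ^ i := by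
  obtain ⟨i, -, hi⟩ := (dvd_prime_pow hq.prime m).mp h
  exact ⟨i, eq_of_monic_of_associated hg (hqm.pow i) hi⟩

theorem not_irreducible_iff_of_map_eq_sq {f : R[X]} {q : K[X]} (hf : f.Monic)
    (hq : Irreducible q) (hqm : q.Monic) (hfq : f.map φ = q ^ 2) :
    ¬ Irreducible f ↔
      ∃ g h : R[X], g.Monic ∧ h.Monic ∧ g.map φ = q ∧ h.map φ = q ∧ g * h = f := by
  constructor
  · intro hirr
    have hf₁ : f ≠ 1 := by
      rintro rfl
      rw [Polynomial.map_one] at hfq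
      exact hq.not_isUnit ((isUnit_pow_iff two_ne_zero).mp (hfq ▸ isUnit_one))
    rw [irreducible_of_monic hf hf₁] at hirr
    push Not at hirr
    obtain ⟨g, h, hg, hh, hgh, hg₁, hh₁⟩ := hirr
    have hmul : g.map φ * h.map φ = q ^ 2 := by rw [← Polynomial.map_mul, hgh, hfq]
    obtain ⟨i, hi⟩ :=
      exists_pow_eq_of_monic_of_dvd_pow hq hqm (hg.map φ) ⟨_, hmul.symm⟩
    obtain ⟨j, hj⟩ :=
      exists_pow_eq_of_monic_of_dvd_pow hq hqm (hh.map φ) ⟨_, (mul_comm _ _).trans hmul |>.symm⟩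
    have hexp {g : R[X]} (hg : g.Monic) (hg₁ : g ≠ 1) {i : ℕ} (hi : g.map φ = q ^ i) : i ≠ 0 := by
      rintro rfl
      exact hg₁ (hg.eq_one_of_map_eq_one φ (by rw [hi, pow_zero]))
    have hij : i + j = 2 := by
      rw [hi, hj, ← pow_add] at hmul
      exact (pow_inj_of_not_isUnit hq.not_isUnit hq.ne_zero).mp hmul
    obtain ⟨rfl, rfl⟩ : i = 1 ∧ j = 1 := by
      have := hexp hg hg₁ hi
      have := hexp hh hh₁ hj
      lia
    exact ⟨g, h, hg, hh, by rw [hi, pow_one], by rw [hj, pow_one], hgh⟩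
  · rintro ⟨g, h, -, -, hg, hh, hgh⟩ hirr
    have hnu {g : R[X]} (hg : g.map φ = q) : ¬ IsUnit g := fun hu =>
      hq.not_isUnit (hg ▸ hu.map (mapRingHom φ))
    exact (hirr.isUnit_or_isUnit hgh.symm).elim (hnu hg) (hnu hh)

end Factorization

section Quartics

variable {R : Type*} [CommRing R]

/-- The monic quartic `x⁴ + c₃x³ + c₂x² + c₁x + c₀`. -/
noncomputable def monicQuartic (c : Fin 4 → R) : R[X] :=
  X ^ 4 + ∑ i : Fin 4, C (c i) * X ^ (i : ℕ)

/-- The monic quadratic `x² + b₁x + b₀`, with coefficients listed as `b = (b₀, b₁)`. -/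
noncomputable def monicQuadratic (b : R × R) : R[X] :=
  X ^ 2 + C b.2 * X + C b.1

/-- The monic quartic `Q² - (w₁x + w₀)`, where `Q` is the monic quadratic with coefficients `b`:
the normal form of a monic quartic after completing the square. -/
noncomputable def sqSubLinear (b w : R × R) : R[X] :=
  monicQuadratic b ^ 2 - (C w.2 * X + C w.1)

theorem monicQuartic_injective : Function.Injective (monicQuartic (R := R)) := by
  have hcoeff (c : Fin 4 → R) (j : Fin 4) : (monicQuartic c).coeff j = c j := by
    simp [monicQuartic, coeff_X_pow, Fin.val_inj, j.isLt.ne]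
  intro c d h
  ext j
  rw [← hcoeff c, h, hcoeff]

theorem sqSubLinear_eq_monicQuartic (b w : R × R) :
    sqSubLinear b w =
      monicQuartic ![b.1 ^ 2 - w.1, 2 * b.2 * b.1 - w.2, b.2 ^ 2 + 2 * b.1, 2 * b.2] := by
  simp only [sqSubLinear, monicQuadratic, monicQuartic, Fin.sum_univ_four, Matrix.cons_val,
    Fin.coe_ofNat_eq_mod, map_add, map_sub, map_mul, map_pow, C_ofNat]
  ring

theorem monic_monicQuartic (c : Fin 4 → R) : (monicQuartic c).Monic :=
  monic_X_pow_add (degree_sum_fin_lt c)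

theorem sqSubLinear_inj (h₂ : IsLeftRegular (2 : R)) {b w b' w' : R × R} :
    sqSubLinear b w = sqSubLinear b' w' ↔ b = b' ∧ w = w' := by
  refine ⟨fun h => ?_, by rintro ⟨rfl, rfl⟩; rfl⟩
  rw [sqSubLinear_eq_monicQuartic, sqSubLinear_eq_monicQuartic,
    monicQuartic_injective.eq_iff] at h
  obtain ⟨b₀, b₁⟩ := b
  obtain ⟨b₀', b₁'⟩ := b'
  obtain ⟨w₀, w₁⟩ := w
  simp only [Matrix.vecCons_inj, h₂.eq_iff] at h
  obtain ⟨h₀, h₁, h₂', rfl, -⟩ := h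
  obtain rfl : b₀ = b₀' := h₂ (add_left_cancel h₂')
  simpa [Prod.ext_iff] using And.intro h₀ h₁

theorem monic_monicQuadratic (b : R × R) : (monicQuadratic b).Monic := by
  nontriviality R
  unfold monicQuadratic
  monicity!

theorem natDegree_monicQuadratic [Nontrivial R] (b : R × R) : (monicQuadratic b).natDegree = 2 := by
  unfold monicQuadratic
  compute_degree!

theorem monicQuadratic_injective : Function.Injective (monicQuadratic (R := R)) := fun b b' h => by
  have h₀ := congr_arg (coeff · 0) h
  have h₁ := congr_arg (coeff · 1) h
  simp only [monicQuadratic, coeff_add, coeff_X_pow, coeff_C_mul, coeff_X, coeff_C] at h₀ h₁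
  simpa [Prod.ext_iff] using And.intro h₀ h₁

theorem map_monicQuadratic {S : Type*} [CommRing S] (φ : R →+* S) (b : R × R) :
    (monicQuadratic b).map φ = monicQuadratic (φ b.1, φ b.2) := by
  simp [monicQuadratic]

theorem map_sqSubLinear {S : Type*} [CommRing S] (φ : R →+* S) (b w : R × R) :
    (sqSubLinear b w).map φ = sqSubLinear (φ b.1, φ b.2) (φ w.1, φ w.2) := by
  simp [sqSubLinear, map_monicQuadratic]

theorem exists_eq_monicQuadratic {g : R[X]} (hg : g.Monic) (hd : g.natDegree = 2) :
    ∃ b, g = monicQuadratic b := by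
  refine ⟨(g.coeff 0, g.coeff 1), ?_⟩
  conv_lhs => rw [hg.as_sum, hd]
  simp only [Finset.sum_range_succ, Finset.sum_range_zero, monicQuadratic]
  ring

section CompletedSquares

variable [Invertible (2 : R)]

/-- The coefficients `(b₀, b₁)` of the quadratic whose square has the coefficients `a.1` of `x²` and
`a.2` of `x³`. -/
def sqrtCoeffs (a : R × R) : R × R :=
  (⅟2 * (a.1 - (⅟2 * a.2) ^ 2), ⅟2 * a.2)

/-- The constant and linear coefficients of the square of the quadratic with coefficients `b`. -/
def sqLowCoeffs (b : R × R) : R × R :=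
  (b.1 ^ 2, 2 * b.2 * b.1)

/-- The pair `(b, w)` with `monicQuartic c = sqSubLinear b w`. -/
def completeSquare (c : Fin 4 → R) : (R × R) × (R × R) :=
  (sqrtCoeffs (c 2, c 3), sqLowCoeffs (sqrtCoeffs (c 2, c 3)) - (c 0, c 1))

theorem monicQuartic_eq_sqSubLinear (c : Fin 4 → R) :
    monicQuartic c = sqSubLinear (completeSquare c).1 (completeSquare c).2 := by
  rw [sqSubLinear_eq_monicQuartic]
  congr 1
  ext i
  fin_cases i <;> simp [completeSquare, sqrtCoeffs, sqLowCoeffs]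

/-- For `n = n₀ + n₁x` in `R[x]/(Q)`, where `Q` is a monic quadratic, the element `n² - (n₁²/2)²`.
If two monic quadratics with half-difference `n` have product `Q² - w` with `w` linear, then `w` is
this element. -/
def perturbedSq {a b : R} (n : QuadraticAlgebra R a b) : QuadraticAlgebra R a b :=
  n ^ 2 - algebraMap R _ ((⅟2 * n.im ^ 2) ^ 2)

theorem re_perturbedSq {a b : R} (n : QuadraticAlgebra R a b) :
    (perturbedSq n).re = n.re ^ 2 + a * n.im ^ 2 - (⅟2 * n.im ^ 2) ^ 2 := by
  rw [perturbedSq, sq n, QuadraticAlgebra.re_sub, QuadraticAlgebra.re_mul,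
    QuadraticAlgebra.algebraMap_re]
  ring

theorem im_perturbedSq {a b : R} (n : QuadraticAlgebra R a b) :
    (perturbedSq n).im = 2 * n.re * n.im + b * n.im ^ 2 := by
  rw [perturbedSq, sq n, QuadraticAlgebra.im_sub, QuadraticAlgebra.im_mul,
    QuadraticAlgebra.algebraMap_im]
  ring

theorem monicQuadratic_mul_monicQuadratic (b : R × R) (n : QuadraticAlgebra R (-b.1) (-b.2)) :
    monicQuadratic (b.1 + ⅟2 * n.im ^ 2 + n.re, b.2 + n.im) *
        monicQuadratic (b.1 + ⅟2 * n.im ^ 2 - n.re, b.2 - n.im) =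
      sqSubLinear b ((perturbedSq n).re, (perturbedSq n).im) := by
  have h₂ : C (⅟2 : R) * 2 = 1 := by rw [← C_ofNat, ← C_mul, invOf_mul_self, C_1]
  simp only [monicQuadratic, sqSubLinear, re_perturbedSq, im_perturbedSq, map_add, map_sub,
    map_mul, map_pow, map_neg, map_ofNat]
  linear_combination (C n.im ^ 2 * (X ^ 2 + C b.2 * X + C b.1)) * h₂

theorem exists_perturbedSq_eq_of_monicQuadratic_mul_eq {u v b w : R × R}
    (h : monicQuadratic u * monicQuadratic v = sqSubLinear b w) :
    ∃ n : QuadraticAlgebra R (-b.1) (-b.2),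
      n.re = ⅟2 * (u.1 - v.1) ∧ n.im = ⅟2 * (u.2 - v.2) ∧ perturbedSq n = ⟨w.1, w.2⟩ := by
  have h₂ : IsUnit (2 : R) := isUnit_of_invertible 2
  let n₀ := ⅟2 * (u.1 - v.1)
  let n₁ := ⅟2 * (u.2 - v.2)
  let b' : R × R := (⅟2 * (u.1 + v.1) - ⅟2 * n₁ ^ 2, ⅟2 * (u.2 + v.2))
  have hprod := monicQuadratic_mul_monicQuadratic b' ⟨n₀, n₁⟩
  have hu : (b'.1 + ⅟2 * n₁ ^ 2 + n₀, b'.2 + n₁) = u := by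
    ext
    · linear_combination u.1 * invOf_mul_self (2 : R)
    · linear_combination u.2 * invOf_mul_self (2 : R)
  have hv : (b'.1 + ⅟2 * n₁ ^ 2 - n₀, b'.2 - n₁) = v := by
    ext
    · linear_combination v.1 * invOf_mul_self (2 : R)
    · linear_combination v.2 * invOf_mul_self (2 : R)
  rw [hu, hv, h, sqSubLinear_inj h₂.isRegular.left] at hprod
  obtain ⟨rfl, rfl⟩ := hprod
  exact ⟨⟨n₀, n₁⟩, rfl, rfl, rfl⟩

theorem not_irreducible_sqSubLinear_iff {K : Type*} [IsDomain R] [Field K] (φ : R →+* K)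
    {b w : R × R} (hb : Irreducible (monicQuadratic (φ b.1, φ b.2))) (hw₀ : φ w.1 = 0)
    (hw₁ : φ w.2 = 0) :
    ¬ Irreducible (sqSubLinear b w) ↔
      ∃ n : QuadraticAlgebra R (-b.1) (-b.2), φ n.re = 0 ∧ φ n.im = 0 ∧
        perturbedSq n = ⟨w.1, w.2⟩ := by
  have hf : (sqSubLinear b w).Monic :=
    sqSubLinear_eq_monicQuartic b w ▸ monic_monicQuartic _
  have hmap : (sqSubLinear b w).map φ = monicQuadratic (φ b.1, φ b.2) ^ 2 := by
    rw [map_sqSubLinear, hw₀, hw₁]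
    simp [sqSubLinear]
  rw [not_irreducible_iff_of_map_eq_sq φ hf hb (monic_monicQuadratic _) hmap]
  constructor
  · rintro ⟨g, h, hg, hh, hgb, hhb, hgh⟩
    have hquad {g : R[X]} (hg : g.Monic) (hgb : g.map φ = monicQuadratic (φ b.1, φ b.2)) :
        ∃ u, g = monicQuadratic u ∧ φ u.1 = φ b.1 ∧ φ u.2 = φ b.2 := by
      obtain ⟨u, rfl⟩ := exists_eq_monicQuadratic hg
        (by rw [← hg.natDegree_map φ, hgb, natDegree_monicQuadratic])
      rw [map_monicQuadratic] at hgb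
      exact ⟨u, rfl, Prod.ext_iff.mp (monicQuadratic_injective hgb)⟩
    obtain ⟨u, rfl, hu₀, hu₁⟩ := hquad hg hgb
    obtain ⟨v, rfl, hv₀, hv₁⟩ := hquad hh hhb
    obtain ⟨n, hn₀, hn₁, hn⟩ := exists_perturbedSq_eq_of_monicQuadratic_mul_eq hgh
    exact ⟨n, by simp [hn₀, hu₀, hv₀], by simp [hn₁, hu₁, hv₁], hn⟩
  · rintro ⟨n, hn₀, hn₁, hn⟩
    refine ⟨_, _, monic_monicQuadratic _, monic_monicQuadratic _, ?_, ?_,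
      (monicQuadratic_mul_monicQuadratic b n).trans (by rw [hn])⟩ <;>
    simp [map_monicQuadratic, hn₀, hn₁]

end CompletedSquares

end Quartics

section EvenDilates

variable {R M : Type*} [CommRing R] [AddCommGroup M] [Module R M]

/-- The vectors `ϖ ^ (2 * i) • y` with `y ∈ U` and `i` positive, together with `0`. For suitable
`U` these are the `w` for which `Q² - w` is reducible. -/
def evenDilates (ϖ : R) (U : Set M) : Set M :=
  {w | w = 0 ∨ ∃ j : ℕ, ∃ y ∈ U, w = ϖ ^ (2 * (j + 1)) • y}

theorem evenDilates_preimage {N : Type*} [AddCommGroup N] [Module R N] (ϖ : R) (e : M ≃ₗ[R] N)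
    (U : Set N) : evenDilates ϖ (e ⁻¹' U) = e ⁻¹' evenDilates ϖ U := by
  ext w
  simp only [evenDilates, Set.mem_ofPred_eq, Set.mem_preimage, e.map_eq_zero_iff,
    e.surjective.exists, ← map_smul, e.injective.eq_iff]

/-- Hypothesis `hP` says that `P n` agrees with `n²` to higher order. Dividing `P n = w` by the even
power of `ϖ` leaves `m² + ϖ e(m) = y`, which by completeness is solvable once it is modulo `ϖ`. -/
theorem exists_sq_perturbation_eq_iff_mem_evenDilates {A L : Type*} [CommRing A] [Algebra R A]
    [Field L] {ϖ : R} [IsAdicComplete (Ideal.span {algebraMap R A ϖ}) A] (res : A →+* L)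
    [IsLocalHom res] (hres : Function.Surjective res) (hker : ∀ x, res x = 0 ↔ algebraMap R A ϖ ∣ x)
    (h₂ : IsUnit (2 : A)) {P : A → A} {e : ℕ → A → A} (hP₀ : P 0 = 0)
    (hP : ∀ j m, P (ϖ ^ (j + 1) • m) = ϖ ^ (2 * (j + 1)) • (m ^ 2 + algebraMap R A ϖ * e j m))
    (he : ∀ j n x y, algebraMap R A ϖ ^ n ∣ x - y → algebraMap R A ϖ ^ n ∣ e j x - e j y) (w : A) :
    (∃ n, res n = 0 ∧ P n = w) ↔ w ∈ evenDilates ϖ (res ⁻¹' {u | u ≠ 0 ∧ IsSquare u}) := by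
  have hϖ : res (algebraMap R A ϖ) = 0 := (hker _).mpr dvd_rfl
  constructor
  · rintro ⟨n, hn, rfl⟩
    obtain rfl | hn₀ := eq_or_ne n 0
    · exact .inl hP₀
    obtain ⟨y, hny, hy⟩ :=
      (finiteMultiplicity_of_isHausdorff (ϖ := algebraMap R A ϖ) hn₀).exists_eq_pow_mul_and_not_dvd
    generalize multiplicity (algebraMap R A ϖ) n = i at hny
    obtain _ | j := i
    · rw [pow_zero, one_mul] at hny
      exact absurd ((hker y).mp (hny ▸ hn)) hy
    rw [hny]
    refine .inr ⟨j, _, ⟨?_, res y, ?_⟩, by rw [← map_pow, ← Algebra.smul_def, hP]⟩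
    · simpa [hϖ] using mt (hker y).mp hy
    · simp [hϖ, sq]
  · rintro (rfl | ⟨j, y, ⟨hy₀, s, hs⟩, rfl⟩)
    · exact ⟨0, map_zero res, hP₀⟩
    obtain ⟨r, rfl⟩ := hres s
    have hr : res r ≠ 0 := by
      rintro hr
      simp [hs, hr] at hy₀
    obtain ⟨z, hz⟩ := (hker (y - r ^ 2)).mp (by rw [map_sub, map_pow, hs, sq, sub_self])
    obtain ⟨m, hm⟩ := exists_sq_add_mul_eq (he j)
      (h₂.mul (isUnit_of_map_unit res r hr.isUnit)) z
    refine ⟨ϖ ^ (j + 1) • m, by simp [Algebra.smul_def, hϖ], ?_⟩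
    rw [hP, hm, ← hz, add_sub_cancel]

end EvenDilates

section QuadraticReduction

variable {R S : Type*} [CommRing R] [CommRing S] {a b : R} {a' b' : S}

/-- The homomorphism of quadratic algebras induced by a homomorphism of coefficient rings that is
compatible with their parameters. -/
def quadraticMap (f : R →+* S) (ha : f a = a') (hb : f b = b') :
    QuadraticAlgebra R a b →+* QuadraticAlgebra S a' b' where
  toFun z := ⟨f z.re, f z.im⟩
  map_zero' := by ext <;> simp
  map_one' := by ext <;> simp [QuadraticAlgebra.re_one, QuadraticAlgebra.im_one]
  map_add' x y := by ext <;> simp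
  map_mul' x y := by ext <;> simp [ha, hb]

variable {f : R →+* S} {ha : f a = a'} {hb : f b = b'}

theorem quadraticMap_surjective (hf : Function.Surjective f) :
    Function.Surjective (quadraticMap f ha hb) := fun z => by
  obtain ⟨x, hx⟩ := hf z.re
  obtain ⟨y, hy⟩ := hf z.im
  exact ⟨⟨x, y⟩, QuadraticAlgebra.ext hx hy⟩

theorem quadraticMap_eq_zero_iff {z : QuadraticAlgebra R a b} :
    quadraticMap f ha hb z = 0 ↔ f z.re = 0 ∧ f z.im = 0 :=
  QuadraticAlgebra.ext_iff

theorem norm_quadraticMap (z : QuadraticAlgebra R a b) :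
    (quadraticMap f ha hb z).norm = f z.norm := by
  simp [QuadraticAlgebra.norm_def, quadraticMap, ha, hb]

instance isLocalHom_quadraticMap [IsLocalHom f] : IsLocalHom (quadraticMap f ha hb) where
  map_nonunit z hz := by
    rw [QuadraticAlgebra.isUnit_iff_norm_isUnit, norm_quadraticMap, isUnit_map_iff] at hz
    exact QuadraticAlgebra.isUnit_iff_norm_isUnit.mpr hz

/-- Coefficient pairs of elements of a quadratic algebra; on pairs, unlike in the algebra, the
remainders `w` do not depend on `Q`. -/
def quadraticCoeffs (R : Type*) [CommRing R] (a b : R) : QuadraticAlgebra R a b ≃ₗ[R] R × R where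
  toEquiv := QuadraticAlgebra.equivProd a b
  map_add' _ _ := rfl
  map_smul' _ _ := rfl

/-- Coordinatewise reduction of pairs, read as coefficient pairs in a quadratic algebra over the
residue ring, where being a square makes sense. -/
def reducePair (f : R →+* S) (a' b' : S) : R × R →+ QuadraticAlgebra S a' b' where
  toFun x := ⟨f x.1, f x.2⟩
  map_zero' := by ext <;> simp
  map_add' x y := by ext <;> simp

end QuadraticReduction

section Reducibility

theorem sq_ne_of_irreducible_monicQuadratic {K : Type*} [Field K] {β : K × K}
    (hβ : Irreducible (monicQuadratic β)) (r : K) : r ^ 2 ≠ -β.1 + -β.2 * r := fun hr => by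
  have hroot : (monicQuadratic β).IsRoot r := by
    simp only [monicQuadratic, IsRoot.def, eval_add, eval_mul, eval_pow, eval_X, eval_C]
    linear_combination hr
  exact hβ.not_isRoot_of_natDegree_ne_one (by rw [natDegree_monicQuadratic]; decide) hroot

variable {R : Type*} [CommRing R] [IsLocalRing R] [IsNoetherianRing R]
  [IsPrecomplete (IsLocalRing.maximalIdeal R) R] {ϖ : R}

theorem isAdicComplete_span_algebraMap (A : Type*) [CommRing A] [Algebra R A] [Module.Finite R A]
    (hϖ : IsLocalRing.maximalIdeal R = Ideal.span {ϖ}) :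
    IsAdicComplete (Ideal.span {algebraMap R A ϖ}) A := by
  have : IsPrecomplete (IsLocalRing.maximalIdeal R) A := isPrecomplete_of_moduleFinite A
  rw [← Set.image_singleton, ← Ideal.map_span, ← hϖ, IsAdicComplete.map_algebraMap_iff]
  exact ⟨⟩

variable [Invertible (2 : R)] {k : Type*} [Field k] {π : R →+* k} {β : k × k}

theorem exists_perturbedSq_eq_iff_mem_evenDilates (hπ : Function.Surjective π)
    (hϖ : RingHom.ker π = Ideal.span {ϖ}) (hβ : Irreducible (monicQuadratic β)) {a b : R}
    (ha : π a = -β.1) (hb : π b = -β.2) (w : QuadraticAlgebra R a b) :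
    (∃ n : QuadraticAlgebra R a b, π n.re = 0 ∧ π n.im = 0 ∧ perturbedSq n = w) ↔
      w ∈ evenDilates ϖ (quadraticMap π ha hb ⁻¹' {u | u ≠ 0 ∧ IsSquare u}) := by
  have : Fact (∀ r, r ^ 2 ≠ -β.1 + -β.2 * r) := ⟨sq_ne_of_irreducible_monicQuadratic hβ⟩
  have : IsLocalHom π := hπ.isLocalHom
  have : IsAdicComplete (Ideal.span {algebraMap R (QuadraticAlgebra R a b) ϖ}) _ :=
    isAdicComplete_span_algebraMap _ ((IsLocalRing.ker_eq_maximalIdeal π hπ).symm.trans hϖ)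
  have hdvd (x : R) : π x = 0 ↔ ϖ ∣ x := by
    rw [← RingHom.mem_ker, hϖ, Ideal.mem_span_singleton]
  simp_rw [← and_assoc, ← quadraticMap_eq_zero_iff (ha := ha) (hb := hb)]
  refine exists_sq_perturbation_eq_iff_mem_evenDilates _ (quadraticMap_surjective hπ)
    (fun x => ?_) ?_ (e := fun j m => -algebraMap R _ (ϖ ^ (2 * j + 1) * (⅟2 * m.im ^ 2) ^ 2)) ?_
    (fun j m => ?_) (fun j n x y hxy => ?_) w
  · rw [quadraticMap_eq_zero_iff, QuadraticAlgebra.algebraMap_dvd_iff, hdvd, hdvd]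
  · exact map_ofNat (algebraMap R (QuadraticAlgebra R a b)) 2 ▸
      (isUnit_of_invertible (2 : R)).map (algebraMap R (QuadraticAlgebra R a b))
  · simp [perturbedSq]
  · simp only [perturbedSq, QuadraticAlgebra.im_smul, smul_eq_mul]
    simp only [Algebra.smul_def, map_pow, map_mul]
    ring
  · rw [← map_pow, QuadraticAlgebra.algebraMap_dvd_iff] at hxy
    rw [neg_sub_neg, ← map_sub, ← map_pow]
    refine map_dvd _ ?_
    obtain ⟨t, ht⟩ := hxy.2
    rw [QuadraticAlgebra.im_sub] at ht
    refine ⟨-(ϖ ^ (2 * j + 1) * ⅟2 ^ 2 * t * (x.im + y.im) * (x.im ^ 2 + y.im ^ 2)), ?_⟩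
    linear_combination
      -(ϖ ^ (2 * j + 1) * ⅟2 ^ 2 * (x.im + y.im) * (x.im ^ 2 + y.im ^ 2)) * ht

theorem not_irreducible_sqSubLinear_iff_mem_evenDilates [IsDomain R] (hπ : Function.Surjective π)
    (hϖ : RingHom.ker π = Ideal.span {ϖ}) (hβ : Irreducible (monicQuadratic β)) {b w : R × R}
    (hb : (π b.1, π b.2) = β) (hw : reducePair π (-β.1) (-β.2) w = 0) :
    ¬ Irreducible (sqSubLinear b w) ↔
      w ∈ evenDilates ϖ (reducePair π (-β.1) (-β.2) ⁻¹' {u | u ≠ 0 ∧ IsSquare u}) := by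
  subst hb
  obtain ⟨hw₀, hw₁⟩ := QuadraticAlgebra.ext_iff.mp hw
  rw [not_irreducible_sqSubLinear_iff π hβ hw₀ hw₁,
    exists_perturbedSq_eq_iff_mem_evenDilates hπ hϖ hβ (map_neg π _) (map_neg π _)]
  exact iff_of_eq (congrArg (w ∈ ·)
    (evenDilates_preimage ϖ (quadraticCoeffs R (-b.1) (-b.2)).symm _)).symm

end Reducibility

section FiniteFieldSquares

variable {F : Type*} [Field F] [Finite F]

theorem two_mul_ncard_nonzero_squares_add_one (h₂ : (2 : F) ≠ 0) :
    2 * {u : F | u ≠ 0 ∧ IsSquare u}.ncard + 1 = Nat.card F := by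
  have := Fintype.ofFinite F
  have hodd : Odd (Nat.card F) := by
    rw [Nat.card_eq_fintype_card, Nat.odd_iff]
    exact FiniteField.odd_card_of_char_ne_two fun h => h₂ <| by
      simpa [h] using CharP.cast_eq_zero F (ringChar F)
  have himage : {u : F | u ≠ 0 ∧ IsSquare u} =
      Units.val '' ((powMonoidHom 2 : Fˣ →* Fˣ).range : Set Fˣ) := by
    ext u
    constructor
    · rintro ⟨hu, s, rfl⟩
      exact ⟨_, ⟨Units.mk0 s (left_ne_zero_of_mul hu), rfl⟩, by simp [sq]⟩
    · rintro ⟨_, ⟨s, rfl⟩, rfl⟩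
      exact ⟨Units.ne_zero _, s, by simp [sq]⟩
  have hunits : 2 ∣ Nat.card Fˣ := by
    rw [Nat.card_units]
    exact (Nat.Odd.sub_odd hodd odd_one).two_dvd
  rw [himage, Set.ncard_image_of_injective _ Units.val_injective]
  have hcard := IsCyclic.card_powMonoidHom_range (G := Fˣ) 2
  rw [Nat.gcd_eq_right hunits] at hcard
  rw [← Nat.card_coe_set_eq]
  change 2 * Nat.card (powMonoidHom 2 : Fˣ →* Fˣ).range + 1 = _
  rw [hcard, Nat.mul_div_cancel' hunits, Nat.card_units, Nat.sub_add_cancel hodd.pos]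

end FiniteFieldSquares

section HaarMeasure

variable {G : Type*} [AddGroup G] [MeasurableSpace G]

theorem measure_preimage_eq_ncard_mul [MeasurableAdd G] {F : Type*} [AddGroup F] {φ : G →+ F}
    (hφ : Function.Surjective φ) (hker : MeasurableSet (φ.ker : Set G)) (ρ : Measure G)
    [ρ.IsAddLeftInvariant] {T : Set F} (hT : T.Finite) :
    ρ (φ ⁻¹' T) = T.ncard * ρ (φ.ker : Set G) := by
  have hfibre (a : G) : φ ⁻¹' {φ a} = (-a + ·) ⁻¹' (φ.ker : Set G) := by
    ext x
    simpa [neg_add_eq_zero] using eq_comm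
  lift T to Finset F using hT
  rw [← sum_measure_preimage_singleton, Finset.sum_congr rfl (g := fun _ => ρ (φ.ker : Set G)),
    Finset.sum_const, nsmul_eq_mul, Set.ncard_coe_finset]
  · intro t _
    obtain ⟨a, rfl⟩ := hφ t
    rw [hfibre, measure_preimage_add]
  · intro t _
    obtain ⟨a, rfl⟩ := hφ t
    rw [hfibre]
    exact measurable_const_add _ hker

open scoped Pointwise in
theorem isOpen_preimage_of_isOpen_ker {G F : Type*} [AddGroup G] [TopologicalSpace G]
    [ContinuousAdd G] [AddGroup F] {φ : G →+ F} (hφ : IsOpen (φ.ker : Set G)) (T : Set F) :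
    IsOpen (φ ⁻¹' T) := by
  have : φ ⁻¹' T = φ ⁻¹' T + (φ.ker : Set G) := by
    refine subset_antisymm (fun x hx => ⟨x, hx, 0, zero_mem _, add_zero x⟩) ?_
    rintro _ ⟨x, hx, y, hy, rfl⟩
    rwa [Set.mem_preimage, map_add, φ.mem_ker.mp hy, add_zero]
  rw [this]
  exact hφ.add_left

theorem isOpenEmbedding_of_finiteIndex_range {G : Type*} [AddGroup G] [TopologicalSpace G]
    [IsTopologicalAddGroup G] [CompactSpace G] [T2Space G] {φ : G →+ G} (hφ : Continuous φ)
    (hinj : Function.Injective φ) [φ.range.FiniteIndex] : Topology.IsOpenEmbedding φ := by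
  have hclosed := hφ.isClosedEmbedding hinj
  exact ⟨hclosed.isEmbedding,
    φ.range.isOpen_of_isClosed_of_finiteIndex hclosed.isClosed_range⟩

theorem index_range_mul_measure_image_s14 [TopologicalSpace G] [IsTopologicalAddGroup G]
    [CompactSpace G] [T2Space G] [BorelSpace G] {φ : G →+ G} (hφ : Continuous φ)
    (hinj : Function.Injective φ) [φ.range.FiniteIndex] (ρ : Measure G) [ρ.IsAddHaarMeasure]
    (E : Set G) : φ.range.index * ρ (φ '' E) = ρ E := by
  have hemb := isOpenEmbedding_of_finiteIndex_range hφ hinj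
  have := Measure.IsAddHaarMeasure.comap (mH := inferInstance) ρ hemb
  have hscale (E : Set G) :
      ρ (φ '' E) = Measure.addHaarScalarFactor (ρ.comap φ) ρ * ρ E := by
    rw [← hemb.measurableEmbedding.comap_apply]
    conv_lhs => rw [Measure.isAddInvariant_eq_smul_of_compactSpace (ρ.comap φ) ρ]
    rw [Measure.smul_apply, ENNReal.smul_def, smul_eq_mul]
  have huniv := φ.range.index_mul_measure hemb.isOpen_range.measurableSet ρ
  rw [AddMonoidHom.coe_range, ← Set.image_univ, hscale, ← mul_assoc] at huniv
  have hone := (ENNReal.mul_eq_right (NeZero.ne _) (measure_ne_top ρ _)).mp huniv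
  rw [hscale, ← mul_assoc, hone, one_mul]

end HaarMeasure

section MeasureEvenDilates

variable {R M : Type*} [CommRing R] [AddCommGroup M] [Module R M]

theorem evenDilates_eq_image (ϖ : R) (U : Set M) :
    evenDilates ϖ U = (ϖ • ·) '' ((ϖ • ·) '' (U ∪ evenDilates ϖ U)) := by
  rw [Set.image_image]
  ext w
  constructor
  · rintro (rfl | ⟨_ | j, y, hy, rfl⟩)
    · exact ⟨0, .inr (.inl rfl), by simp⟩
    · exact ⟨y, .inl hy, by simp [smul_smul, sq]⟩
    · exact ⟨_, .inr (.inr ⟨j, y, hy, rfl⟩), by simp only [smul_smul]; ring_nf⟩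
  · rintro ⟨_, hy | rfl | ⟨j, y, hy, rfl⟩, rfl⟩
    · exact .inr ⟨0, _, hy, by simp [smul_smul, sq]⟩
    · exact .inl (by simp)
    · exact .inr ⟨j + 1, y, hy, by simp only [smul_smul]; ring_nf⟩

theorem evenDilates_subset_range (ϖ : R) (U : Set M) : evenDilates ϖ U ⊆ Set.range (ϖ • ·) := by
  rw [evenDilates_eq_image]
  exact Set.image_subset_range _ _

theorem isOpen_preimage_of_ker_eq_range_smul [TopologicalSpace M] [IsTopologicalAddGroup M]
    [CompactSpace M] [T2Space M] [ContinuousConstSMul R M] {F : Type*} [AddGroup F] [Finite F]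
    {φ : M →+ F} {ϖ : R} (hϖ : Function.Injective fun x : M => ϖ • x)
    (hker : φ.ker = (DistribSMul.toAddMonoidHom M ϖ).range) (T : Set F) : IsOpen (φ ⁻¹' T) := by
  have : (DistribSMul.toAddMonoidHom M ϖ).range.FiniteIndex := hker ▸ inferInstance
  refine isOpen_preimage_of_isOpen_ker ?_ T
  rw [hker]
  exact (isOpenEmbedding_of_finiteIndex_range (φ := DistribSMul.toAddMonoidHom M ϖ)
    (continuous_const_smul ϖ) hϖ).isOpen_range

variable [MeasurableSpace M]

theorem measurableSet_evenDilates [MeasurableSingletonClass M] {ϖ : R}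
    (hϖ : MeasurableEmbedding fun x : M => ϖ • x) {U : Set M} (hU : MeasurableSet U) :
    MeasurableSet (evenDilates ϖ U) := by
  have hpow (n : ℕ) : MeasurableEmbedding fun x : M => ϖ ^ n • x := by
    induction n with
    | zero => simpa [Function.id_def] using MeasurableEmbedding.id (α := M)
    | succ n ih => simpa only [pow_succ, mul_smul, Function.comp_def] using ih.comp hϖ
  have : evenDilates ϖ U = {0} ∪ ⋃ j : ℕ, (ϖ ^ (2 * (j + 1)) • ·) '' U := by
    ext w
    simp [evenDilates, eq_comm]
  rw [this]
  exact (MeasurableSet.singleton 0).union (.iUnion fun j => (hpow _).measurableSet_image.mpr hU)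

variable [TopologicalSpace M] [IsTopologicalAddGroup M] [CompactSpace M] [T2Space M] [BorelSpace M]
  [ContinuousConstSMul R M] {ϖ : R} (hϖ : Function.Injective fun x : M => ϖ • x)
include hϖ

theorem index_sq_mul_measure_evenDilates [(DistribSMul.toAddMonoidHom M ϖ).range.FiniteIndex]
    {U : Set M} (hU : MeasurableSet U) (hdisj : Disjoint U (Set.range (ϖ • ·)))
    (ρ : Measure M) [ρ.IsAddHaarMeasure] :
    ((DistribSMul.toAddMonoidHom M ϖ).range.index : ENNReal) ^ 2 * ρ (evenDilates ϖ U) =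
      ρ U + ρ (evenDilates ϖ U) := by
  have hcont : Continuous (DistribSMul.toAddMonoidHom M ϖ) := continuous_const_smul ϖ
  have hscale (E : Set M) := index_range_mul_measure_image_s14 hcont hϖ ρ E
  have hemb := (hcont.isClosedEmbedding hϖ).measurableEmbedding
  calc _ = _ * (_ * ρ ((ϖ • ·) '' ((ϖ • ·) '' (U ∪ evenDilates ϖ U)))) := by
        rw [← evenDilates_eq_image, sq, mul_assoc]
    _ = ρ (U ∪ evenDilates ϖ U) := (congrArg _ (hscale _)).trans (hscale _)
    _ = ρ U + ρ (evenDilates ϖ U) :=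
        measure_union (hdisj.mono_right (evenDilates_subset_range ϖ U))
          (measurableSet_evenDilates hemb hU)

section ResidueMap

variable {F : Type*} [AddGroup F] [Finite F] {φ : M →+ F}
  (hker : φ.ker = (DistribSMul.toAddMonoidHom M ϖ).range)
include hker

theorem measurableSet_evenDilates_preimage (T : Set F) :
    MeasurableSet (evenDilates ϖ (φ ⁻¹' T)) :=
  measurableSet_evenDilates ((continuous_const_smul ϖ).isClosedEmbedding hϖ).measurableEmbedding
    (isOpen_preimage_of_ker_eq_range_smul hϖ hker T).measurableSet

end ResidueMap

variable {F : Type*} [Field F] [Finite F] {φ : M →+ F}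
  (hker : φ.ker = (DistribSMul.toAddMonoidHom M ϖ).range)
include hker

theorem two_mul_measureReal_evenDilates (hφ : Function.Surjective φ) (h₂ : (2 : F) ≠ 0)
    (ρ : Measure M) [ρ.IsAddHaarMeasure] :
    2 * ((Nat.card F : ℝ) + 1) * ρ.real (evenDilates ϖ (φ ⁻¹' {u | u ≠ 0 ∧ IsSquare u})) =
      ρ.real (φ.ker : Set M) := by
  have : (DistribSMul.toAddMonoidHom M ϖ).range.FiniteIndex := hker ▸ inferInstance
  have hU : MeasurableSet (φ ⁻¹' {u : F | u ≠ 0 ∧ IsSquare u}) :=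
    (isOpen_preimage_of_ker_eq_range_smul hϖ hker _).measurableSet
  have hdisj : Disjoint (φ ⁻¹' {u : F | u ≠ 0 ∧ IsSquare u}) (Set.range (ϖ • ·)) := by
    refine Set.disjoint_left.mpr fun x hx hx' => hx.1 ?_
    exact φ.mem_ker.mp (hker ▸ hx')
  have hkerm : MeasurableSet (φ.ker : Set M) :=
    (isOpen_preimage_of_ker_eq_range_smul hϖ hker {0}).measurableSet
  have hindex : (DistribSMul.toAddMonoidHom M ϖ).range.index = Nat.card F := by
    rw [← hker, AddSubgroup.index_ker, AddMonoidHom.range_eq_top.mpr hφ, AddSubgroup.card_top]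
  have hmeasure := congrArg ENNReal.toReal (index_sq_mul_measure_evenDilates hϖ hU hdisj ρ)
  rw [hindex, measure_preimage_eq_ncard_mul hφ hkerm ρ (Set.toFinite _),
    ENNReal.toReal_add (by finiteness) (by finiteness)] at hmeasure
  simp only [ENNReal.toReal_mul, ENNReal.toReal_pow, ENNReal.toReal_natCast,
    ← measureReal_def] at hmeasure
  have hcount : 2 * ({u : F | u ≠ 0 ∧ IsSquare u}.ncard : ℝ) + 1 = Nat.card F := by
    exact_mod_cast two_mul_ncard_nonzero_squares_add_one h₂
  have hcard : (1 : ℝ) < Nat.card F := by exact_mod_cast Finite.one_lt_card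
  refine mul_left_cancel₀ (sub_ne_zero.mpr hcard.ne') ?_
  linear_combination 2 * hmeasure + ρ.real (φ.ker : Set M) * hcount

theorem measureReal_ker_diff_evenDilates (hφ : Function.Surjective φ) (h₂ : (2 : F) ≠ 0)
    (ρ : Measure M) [ρ.IsAddHaarMeasure] :
    ρ.real ((φ.ker : Set M) \ evenDilates ϖ (φ ⁻¹' {u | u ≠ 0 ∧ IsSquare u})) =
      (2 * (Nat.card F : ℝ) + 1) / (2 * ((Nat.card F : ℝ) + 1)) * ρ.real (φ.ker : Set M) := by
  rw [measureReal_sdiff, ← two_mul_measureReal_evenDilates hϖ hker hφ h₂ ρ]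
  · field_simp
    ring
  · exact hker ▸ evenDilates_subset_range _ _
  · exact measurableSet_evenDilates_preimage hϖ hker _

end MeasureEvenDilates

section CompleteSquare

variable {R : Type*} [CommRing R]

theorem measurePreserving_prodMk_sub {α : Type*} [MeasurableSpace α] (μ : Measure α) [SFinite μ]
    {G : Type*} [AddGroup G] [MeasurableSpace G] [MeasurableAdd₂ G] [MeasurableNeg G]
    (ν : Measure G) [SFinite ν] [ν.IsAddLeftInvariant] [ν.IsNegInvariant] {h : α → G}
    (hh : Measurable h) :
    MeasurePreserving (fun y : α × G => (y.1, h y.1 - y.2)) (μ.prod ν) (μ.prod ν) :=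
  (MeasurePreserving.id μ).skew_product (g := fun a d => h a - d)
    ((hh.comp measurable_fst).sub measurable_snd)
    (.of_forall fun a => (Measure.measurePreserving_sub_left ν (h a)).map_eq)

/-- The coefficient vector of a monic quartic as the pair `((c₂, c₃), (c₀, c₁))`. -/
def coeffPairs (R : Type*) [AddCommGroup R] [TopologicalSpace R] :
    (Fin 4 → R) ≃ₜ+ (R × R) × (R × R) where
  toFun c := ((c 2, c 3), (c 0, c 1))
  invFun y := ![y.2.1, y.2.2, y.1.1, y.1.2]
  left_inv c := by ext i; fin_cases i <;> rfl
  right_inv _ := rfl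
  map_add' _ _ := rfl
  continuous_toFun := by fun_prop
  continuous_invFun := by fun_prop

theorem continuous_sqLowCoeffs [TopologicalSpace R] [IsTopologicalRing R] :
    Continuous (sqLowCoeffs (R := R)) := by
  unfold sqLowCoeffs
  fun_prop

variable [Invertible (2 : R)]

theorem sqrtCoeffs_surjective : Function.Surjective (sqrtCoeffs (R := R)) := fun b =>
  ⟨(b.2 ^ 2 + 2 * b.1, 2 * b.2), by simp [sqrtCoeffs]⟩

variable [TopologicalSpace R] [IsTopologicalRing R]

theorem continuous_sqrtCoeffs : Continuous (sqrtCoeffs (R := R)) := by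
  unfold sqrtCoeffs
  fun_prop

variable [CompactSpace R] [T2Space R] [SecondCountableTopology R] [MeasurableSpace R] [BorelSpace R]

theorem exists_measure_preimage_completeSquare (μ : Measure (Fin 4 → R)) [μ.IsAddHaarMeasure]
    (ρ : Measure (R × R)) [ρ.IsAddHaarMeasure] :
    ∃ κ : NNReal, κ ≠ 0 ∧ ∀ D E : Set (R × R), MeasurableSet D → MeasurableSet E →
      μ (completeSquare ⁻¹' (D ×ˢ E)) = κ * (ρ (sqrtCoeffs ⁻¹' D) * ρ E) := by
  have : (ρ.prod ρ).IsAddHaarMeasure := Measure.prod.instIsAddHaarMeasure ρ ρ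
  have := (coeffPairs R).isAddHaarMeasure_map μ
  let S (y : (R × R) × (R × R)) := (y.1, sqLowCoeffs (sqrtCoeffs y.1) - y.2)
  have hS : MeasurePreserving S (ρ.prod ρ) (ρ.prod ρ) :=
    measurePreserving_prodMk_sub ρ ρ (continuous_sqLowCoeffs.comp continuous_sqrtCoeffs).measurable
  refine ⟨_, (Measure.addHaarScalarFactor_pos_of_isAddHaarMeasure
    (μ.map (coeffPairs R)) (ρ.prod ρ)).ne', fun D E hD hE => ?_⟩
  have hD' : MeasurableSet (sqrtCoeffs ⁻¹' D) := continuous_sqrtCoeffs.measurable hD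
  calc μ (completeSquare ⁻¹' (D ×ˢ E))
      = μ.map (coeffPairs R) (S ⁻¹' ((sqrtCoeffs ⁻¹' D) ×ˢ E)) :=
        ((coeffPairs R).toHomeomorph.measurableEmbedding.map_apply μ
          (S ⁻¹' ((sqrtCoeffs ⁻¹' D) ×ˢ E))).symm
    _ = _ * (ρ.prod ρ) (S ⁻¹' ((sqrtCoeffs ⁻¹' D) ×ˢ E)) := by
        conv_lhs =>
          rw [Measure.isAddInvariant_eq_smul_of_compactSpace (μ.map (coeffPairs R)) (ρ.prod ρ)]
        rw [Measure.smul_apply, ENNReal.smul_def, smul_eq_mul]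
    _ = _ := by
      rw [hS.measure_preimage (hD'.prod hE).nullMeasurableSet, Measure.prod_prod]

end CompleteSquare

section ResidueClass

variable {R k : Type*} [CommRing R] [Field k] {π : R →+* k} {β : k × k}

theorem reducePair_surjective (hπ : Function.Surjective π) (a b : k) :
    Function.Surjective (reducePair π a b) := fun z => by
  obtain ⟨x, hx⟩ := hπ z.re
  obtain ⟨y, hy⟩ := hπ z.im
  exact ⟨(x, y), QuadraticAlgebra.ext hx hy⟩

theorem ker_reducePair_eq_range_smul {ϖ : R} (hϖ : RingHom.ker π = Ideal.span {ϖ}) (a b : k) :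
    (reducePair π a b).ker = (DistribSMul.toAddMonoidHom (R × R) ϖ).range := by
  have hdvd (x : R) : π x = 0 ↔ ∃ y, ϖ * y = x := by
    rw [← RingHom.mem_ker, hϖ, Ideal.mem_span_singleton, dvd_def]
    simp only [eq_comm]
  ext x
  simp [reducePair, QuadraticAlgebra.ext_iff, hdvd, Prod.ext_iff]

variable [Invertible (2 : R)]

theorem setOf_map_monicQuartic_eq_sq (π : R →+* k) (β : k × k) :
    {c | (monicQuartic c).map π = monicQuadratic β ^ 2} =
      completeSquare ⁻¹' ((reducePair π (-β.1) (-β.2) ⁻¹' {⟨β.1, β.2⟩}) ×ˢ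
        ((reducePair π (-β.1) (-β.2)).ker : Set (R × R))) := by
  have h₂ : IsUnit (2 : k) := map_ofNat π 2 ▸ (isUnit_of_invertible (2 : R)).map π
  have hsq : monicQuadratic β ^ 2 = sqSubLinear β 0 := by simp [sqSubLinear]
  ext c
  rw [Set.mem_ofPred_eq, monicQuartic_eq_sqSubLinear, map_sqSubLinear, hsq,
    sqSubLinear_inj h₂.isRegular.left]
  simp [reducePair, QuadraticAlgebra.ext_iff, Prod.ext_iff]

theorem setOf_map_monicQuartic_eq_sq_and_irreducible [IsDomain R] [IsLocalRing R]
    [IsNoetherianRing R] [IsPrecomplete (IsLocalRing.maximalIdeal R) R]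
    (hπ : Function.Surjective π) {ϖ : R} (hϖ : RingHom.ker π = Ideal.span {ϖ})
    (hβ : Irreducible (monicQuadratic β)) :
    {c | (monicQuartic c).map π = monicQuadratic β ^ 2 ∧ Irreducible (monicQuartic c)} =
      completeSquare ⁻¹' ((reducePair π (-β.1) (-β.2) ⁻¹' {⟨β.1, β.2⟩}) ×ˢ
        (((reducePair π (-β.1) (-β.2)).ker : Set (R × R)) \
          evenDilates ϖ (reducePair π (-β.1) (-β.2) ⁻¹' {u | u ≠ 0 ∧ IsSquare u}))) := by
  rw [Set.ofPred_and, setOf_map_monicQuartic_eq_sq]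
  ext c
  simp only [Set.mem_inter_iff, Set.mem_preimage, Set.mem_prod, Set.mem_sdiff, ← and_assoc,
    SetLike.mem_coe]
  refine and_congr_right fun ⟨hb, hw⟩ => ?_
  rw [Set.mem_ofPred_eq, monicQuartic_eq_sqSubLinear,
    ← not_irreducible_sqSubLinear_iff_mem_evenDilates hπ hϖ hβ _ hw, not_not]
  exact Prod.ext_iff.mpr (QuadraticAlgebra.ext_iff.mp hb)

end ResidueClass

section Proportion

variable {R : Type*} [CommRing R] [TopologicalSpace R] [IsTopologicalRing R] [CompactSpace R]
  [T2Space R] [SecondCountableTopology R] [MeasurableSpace R] [BorelSpace R]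

theorem measureReal_completeSquare_div [Invertible (2 : R)] (μ : Measure (Fin 4 → R))
    [μ.IsAddHaarMeasure] (ρ : Measure (R × R)) [ρ.IsAddHaarMeasure] {D E E' : Set (R × R)}
    (hD : IsOpen D) (hD' : D.Nonempty) (hE : MeasurableSet E) (hE' : MeasurableSet E') :
    μ.real (completeSquare ⁻¹' (D ×ˢ E)) / μ.real (completeSquare ⁻¹' (D ×ˢ E')) =
      ρ.real E / ρ.real E' := by
  obtain ⟨κ, hκ, hμ⟩ := exists_measure_preimage_completeSquare μ ρ
  have hD₀ : ρ.real (sqrtCoeffs ⁻¹' D) ≠ 0 :=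
    ENNReal.toReal_ne_zero.mpr ⟨(hD.preimage continuous_sqrtCoeffs).measure_ne_zero ρ
      (hD'.preimage sqrtCoeffs_surjective), measure_ne_top _ _⟩
  have hreal {E : Set (R × R)} (hE : MeasurableSet E) :
      μ.real (completeSquare ⁻¹' (D ×ˢ E)) = κ * ρ.real (sqrtCoeffs ⁻¹' D) * ρ.real E := by
    rw [measureReal_def, hμ D E hD.measurableSet hE, ENNReal.toReal_mul, ENNReal.toReal_mul,
      ENNReal.coe_toReal, mul_assoc]
    rfl
  rw [hreal hE, hreal hE', mul_div_mul_left _ _ (mul_ne_zero (by exact_mod_cast hκ) hD₀)]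

variable {k : Type*} [Field k] [Finite k] {π : R →+* k} {ϖ : R} {β : k × k}

theorem measureReal_ker_reducePair_diff_evenDilates (hπ : Function.Surjective π)
    (h₂ : (2 : k) ≠ 0) (hβ : Irreducible (monicQuadratic β))
    (hϖ : Function.Injective fun x : R × R => ϖ • x)
    (hker : RingHom.ker π = Ideal.span {ϖ}) (ρ : Measure (R × R)) [ρ.IsAddHaarMeasure] :
    ρ.real (((reducePair π (-β.1) (-β.2)).ker : Set (R × R)) \
          evenDilates ϖ (reducePair π (-β.1) (-β.2) ⁻¹' {u | u ≠ 0 ∧ IsSquare u})) =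
      (2 * (Nat.card k : ℝ) ^ 2 + 1) / (2 * ((Nat.card k : ℝ) ^ 2 + 1)) *
        ρ.real ((reducePair π (-β.1) (-β.2)).ker : Set (R × R)) := by
  have : Fact (∀ r, r ^ 2 ≠ -β.1 + -β.2 * r) := ⟨sq_ne_of_irreducible_monicQuadratic hβ⟩
  have : Finite (QuadraticAlgebra k (-β.1) (-β.2)) :=
    Finite.of_equiv _ (QuadraticAlgebra.equivProd _ _).symm
  have hcard : (Nat.card (QuadraticAlgebra k (-β.1) (-β.2)) : ℝ) = (Nat.card k : ℝ) ^ 2 := by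
    rw [Nat.card_congr (QuadraticAlgebra.equivProd _ _), Nat.card_prod, Nat.cast_mul, sq]
  have h₂' : (2 : QuadraticAlgebra k (-β.1) (-β.2)) ≠ 0 :=
    map_ofNat (algebraMap k (QuadraticAlgebra k (-β.1) (-β.2))) 2 ▸ (_root_.map_ne_zero _).mpr h₂
  rw [measureReal_ker_diff_evenDilates hϖ (ker_reducePair_eq_range_smul hker _ _)
    (reducePair_surjective hπ _ _) h₂', hcard]

end Proportion

theorem stmt_14_general {R k : Type*} [CommRing R] [IsDomain R] [IsDiscreteValuationRing R]
    [TopologicalSpace R] [IsTopologicalRing R] [CompactSpace R] [T2Space R]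
    [SecondCountableTopology R] [MeasurableSpace R] [BorelSpace R] [Field k] {π : R →+* k}
    (hπ : Function.Surjective π) (h₂ : (2 : k) ≠ 0) {q : k[X]} (hq : Irreducible q)
    (hqm : q.Monic) (hqd : q.natDegree = 2) (μ : Measure (Fin 4 → R)) [μ.IsAddHaarMeasure] :
    μ.real {c | (monicQuartic c).map π = q ^ 2 ∧ Irreducible (monicQuartic c)} /
        μ.real {c | (monicQuartic c).map π = q ^ 2} =
      (2 * (Nat.card k : ℝ) ^ 2 + 1) / (2 * ((Nat.card k : ℝ) ^ 2 + 1)) := by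
  obtain ⟨β, rfl⟩ := exists_eq_monicQuadratic hqm hqd
  obtain ⟨ϖ, hϖ⟩ := IsDiscreteValuationRing.exists_irreducible R
  have hker : RingHom.ker π = Ideal.span {ϖ} :=
    (IsLocalRing.ker_eq_maximalIdeal π hπ).trans hϖ.maximalIdeal_eq
  have : IsLocalHom π := hπ.isLocalHom
  have : Invertible (2 : R) :=
    (isUnit_of_map_unit π 2 ((map_ofNat π 2).symm ▸ h₂.isUnit)).invertible
  have : IsPrecomplete (IsLocalRing.maximalIdeal R) R := isPrecomplete_of_compactSpace _
  have : (RingHom.ker π).IsMaximal := RingHom.ker_isMaximal_of_surjective π hπ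
  have : Finite k := .of_equiv _ (RingHom.quotientKerEquivOfSurjective hπ).toEquiv
  have : Finite (QuadraticAlgebra k (-β.1) (-β.2)) :=
    Finite.of_equiv _ (QuadraticAlgebra.equivProd _ _).symm
  have hinj : Function.Injective fun x : R × R => ϖ • x := smul_right_injective _ hϖ.ne_zero
  have hkeq := ker_reducePair_eq_range_smul hker (-β.1) (-β.2)
  have hopen := isOpen_preimage_of_ker_eq_range_smul hinj hkeq
  have hkerOpen : IsOpen ((reducePair π (-β.1) (-β.2)).ker : Set (R × R)) := hopen {0}
  rw [setOf_map_monicQuartic_eq_sq_and_irreducible hπ hker hq, setOf_map_monicQuartic_eq_sq,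
    measureReal_completeSquare_div μ Measure.addHaar (hopen _)
      ((Set.singleton_nonempty _).preimage (reducePair_surjective hπ _ _))
      (hkerOpen.measurableSet.diff (measurableSet_evenDilates_preimage hinj hkeq _))
      hkerOpen.measurableSet,
    measureReal_ker_reducePair_diff_evenDilates hπ h₂ hq hinj hker, mul_div_cancel_right₀]
  exact ENNReal.toReal_ne_zero.mpr
    ⟨hkerOpen.measure_ne_zero _ ⟨0, zero_mem _⟩, measure_ne_top _ _⟩

/-- Lemma 5 (double quadratics): for odd `p` and `-ζ` a non-square mod `p`, the
proportion of monic quartics `f ≡ (x² + ζ)² (mod p)` that are irreducible in `ℤ_p[x]`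
is `(2p² + 1)/(2(p² + 1))`. -/
theorem stmt_14 (p : ℕ) [Fact p.Prime] (hodd : p ≠ 2) (ζ : ℤ_[p])
    (hζ : ¬ ∃ t : ZMod p, t ^ 2 = -(PadicInt.toZMod ζ))
    (μ : Measure (Fin 4 → ℤ_[p])) [μ.IsAddHaarMeasure] :
    (μ {c : Fin 4 → ℤ_[p] |
        (X ^ 4 + ∑ i : Fin 4, C (c i) * X ^ (i : ℕ)).map PadicInt.toZMod =
          (X ^ 2 + C (PadicInt.toZMod ζ)) ^ 2 ∧
        Irreducible (X ^ 4 + ∑ i : Fin 4, C (c i) * X ^ (i : ℕ))}).toReal /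
      (μ {c : Fin 4 → ℤ_[p] |
        (X ^ 4 + ∑ i : Fin 4, C (c i) * X ^ (i : ℕ)).map PadicInt.toZMod =
          (X ^ 2 + C (PadicInt.toZMod ζ)) ^ 2}).toReal =
      (2 * (p : ℝ) ^ 2 + 1) / (2 * ((p : ℝ) ^ 2 + 1)) := by
  have h₂ : (2 : ZMod p) ≠ 0 := Ring.two_ne_zero (by rwa [ZMod.ringChar_zmod_n])
  simpa only [Nat.card_zmod] using! stmt_14_general (ZMod.ringHom_surjective PadicInt.toZMod) h₂
    (irreducible_X_sq_add_C hζ) (monic_X_pow_add_C _ two_ne_zero) natDegree_X_pow_add_C μ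
end

section
/- Let p be an odd prime. The Haar-measure proportion of monic quartics f(x) = x^4 + c_3 x^3 + c_2 x^2 + c_1 x + c_0 ∈ Z_p[x] with c_3 = 0, v_p(c_2) ≥ 1, v_p(c_1) ≥ 2, v_p(c_0) = 2 (i.e., Newton polygon a single segment from (0,2) to (4,0)) that are irreducible in Z_p[x] equals (p^2 + 3p + 1)/(2p(p+1)). -/
open MeasureTheory Polynomial

/-!
Completing the square, the quartic becomes `(X² - pα)² + p²(bX - n)` with `α² - n` a unit. It has no
root, because the roots would have valuation `1/2`, so it is reducible exactly when it is a product
of two quadratics `X² ± psX + ⋯`, which means `b = 2sw` and `n = w² + pαs² - p²s⁴/4`. If `p² ∣ n`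
then `p` divides `w` and `s`, and dividing them by `p` lowers the valuation of `n` by two; once this
valuation is `0` or `1`, Hensel's lemma solves for `w` or `s`. Hence for `n = pᵏy` with `y` a unit
the quartic is reducible iff `pᵏ ∣ b` and `yαᵏ` is a square modulo `p`. Counting residues gives the
measure of the reducible quartics for each `k`, and from `k = 1` on these measures form a geometric
series.
-/

section Factorization

variable {R : Type*} [CommRing R]

lemma depressed_quartic_eq_mul_iff {a b c s t s' u : R} :
    X ^ 4 + C a * X ^ 2 + C b * X + C c = (X ^ 2 + C s * X + C t) * (X ^ 2 + C s' * X + C u) ↔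
      s' = -s ∧ t + u - s ^ 2 = a ∧ s * (u - t) = b ∧ t * u = c := by
  constructor
  · intro h
    have hexpand : (X ^ 4 + C a * X ^ 2 + C b * X + C c : R[X]) =
        X ^ 4 + C (s + s') * X ^ 3 + C (t + u + s * s') * X ^ 2 + C (s * u + t * s') * X +
          C (t * u) := by
      rw [h]
      simp only [C_add, C_mul]
      ring
    have h3 := congrArg (coeff · 3) hexpand
    have h2 := congrArg (coeff · 2) hexpand
    have h1 := congrArg (coeff · 1) hexpand
    have h0 := congrArg (coeff · 0) hexpand
    simp only [coeff_add, coeff_C_mul, coeff_X_pow, coeff_X, coeff_C] at h3 h2 h1 h0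
    norm_num at h3 h2 h1 h0
    obtain rfl : s' = -s := by linear_combination -h3
    exact ⟨rfl, by linear_combination -h2, by linear_combination -h1, h0.symm⟩
  · rintro ⟨rfl, rfl, rfl, rfl⟩
    simp only [C_sub, C_add, C_mul, C_pow, C_neg]
    ring

lemma eq_quadratic_of_monic_of_natDegree_eq_two {f : R[X]} (hf : f.Monic)
    (hdeg : f.natDegree = 2) : f = X ^ 2 + C (f.coeff 1) * X + C (f.coeff 0) := by
  have hlead : f.coeff 2 = 1 := hdeg ▸ hf.coeff_natDegree
  simpa [hlead] using eq_quadratic_of_degree_le_two (degree_le_of_natDegree_le hdeg.le)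

variable [IsDomain R]

lemma irreducible_iff_of_monic_of_natDegree_eq_four {f : R[X]} (hf : f.Monic)
    (hdeg : f.natDegree = 4) :
    Irreducible f ↔ (∀ x, ¬ f.IsRoot x) ∧
      ∀ s t s' u : R, f ≠ (X ^ 2 + C s * X + C t) * (X ^ 2 + C s' * X + C u) := by
  have hne : f ≠ 1 := by
    rintro rfl
    simp at hdeg
  rw [hf.irreducible_iff_lt_natDegree_lt hne, hdeg]
  constructor
  · refine fun h => ⟨fun x hx => ?_, fun s t s' u hstu => ?_⟩
    · exact h (X - C x) (monic_X_sub_C x) (by simp) (dvd_iff_isRoot.mpr hx)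
    · have hq : (X ^ 2 + C s * X + C t : R[X]).natDegree = 2 := by compute_degree!
      exact h _ (by monicity!) (by simp [hq]) ⟨_, hstu⟩
  · rintro ⟨hroot, hquad⟩ q hq hqdeg ⟨r, hqr⟩
    have hr : r.Monic := hq.of_mul_monic_left (hqr ▸ hf)
    have hadd : q.natDegree + r.natDegree = 4 := by rw [← hq.natDegree_mul hr, ← hqr, hdeg]
    obtain h1 | h2 : q.natDegree = 1 ∨ q.natDegree = 2 := by
      rw [Finset.mem_Ioc] at hqdeg
      omega
    · have hqroot : q.IsRoot (-q.coeff 0) := by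
        rw [hq.eq_X_add_C h1]
        simp
      exact hroot _ (hqr ▸ hqroot.dvd (dvd_mul_right q r))
    · rw [eq_quadratic_of_monic_of_natDegree_eq_two hq h2,
        eq_quadratic_of_monic_of_natDegree_eq_two hr (by omega)] at hqr
      exact hquad _ _ _ _ hqr

lemma irreducible_depressed_quartic_iff {a b c : R} :
    Irreducible (X ^ 4 + C a * X ^ 2 + C b * X + C c) ↔
      (∀ x : R, x ^ 4 + a * x ^ 2 + b * x + c ≠ 0) ∧
        ∀ s t u : R, ¬ (t + u - s ^ 2 = a ∧ s * (u - t) = b ∧ t * u = c) := by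
  rw [irreducible_iff_of_monic_of_natDegree_eq_four (by monicity!) (by compute_degree!)]
  refine and_congr (by simp [IsRoot.def]) ⟨fun h s t u => ?_, fun h s t s' u => ?_⟩
  · have := h s t (-s) u
    rwa [Ne, depressed_quartic_eq_mul_iff, and_iff_right rfl] at this
  · rw [Ne, depressed_quartic_eq_mul_iff, not_and]
    exact fun _ => h s t u

end Factorization

section Splitting

variable {R : Type*} [CommRing R]

/-- The quartic `(X² - πα)² + π²(bX - n)`: every depressed quartic on or above the segment of slope
`-1/2` takes this form once `2` is invertible. -/
noncomputable def halfSlopeQuartic (π α b n : R) : R[X] :=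
  X ^ 4 + C (-2 * π * α) * X ^ 2 + C (π ^ 2 * b) * X + C (π ^ 2 * (α ^ 2 - n))

/-- For `g = 1 / 4` this says that `halfSlopeQuartic π α b n` is the product of the two quadratics
`X² ± πsX + π(πs² / 2 - α ± w)`; the parameter `g` is left free because dividing `s`, `w` by `π`
multiplies it by `π²`. -/
def HasSplitting (π g α b n : R) : Prop :=
  ∃ s w : R, b = 2 * s * w ∧ n = w ^ 2 + π * α * s ^ 2 - g * π ^ 2 * s ^ 4

variable {π : R}

lemma dvd_of_quadratic_factors (hπ : Prime π) {s t u : R}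
    (h2 : π ∣ t + u - s ^ 2) (h1 : π ∣ s * (u - t)) (h0 : π ∣ t * u) :
    π ∣ s ∧ π ∣ t ∧ π ∣ u := by
  wlog ht : π ∣ t generalizing s t u
  · have hu := (hπ.dvd_or_dvd h0).resolve_left ht
    obtain ⟨hs, hu, ht⟩ := this (s := -s) (t := u) (u := t)
      (by simpa [add_comm] using h2) (by convert! h1 using 1; ring) (by rwa [mul_comm]) hu
    exact ⟨(dvd_neg.mp hs), ht, hu⟩
  have hs : π ∣ s := by
    refine hπ.dvd_of_dvd_pow (n := 3) ?_
    convert! (h1.sub (h2.mul_left s)).add (ht.mul_left (2 * s)) using 1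
    ring
  refine ⟨hs, ht, ?_⟩
  convert! (h2.sub ht).add (hs.mul_left s) using 1
  ring

lemma dvd_of_mul_eq_splitting (hπ : Prime π) {g α s w n : R}
    (h : π * n = w ^ 2 + π * α * s ^ 2 - g * π ^ 2 * s ^ 4) : π ∣ w :=
  hπ.dvd_of_dvd_pow (n := 2) ⟨n - α * s ^ 2 + g * π * s ^ 4, by linear_combination -h⟩

variable [IsDomain R]

lemma half_slope_quartic_ne_zero (hπ : Prime π) {a b d : R} (hd : ¬ π ∣ d) (x : R) :
    x ^ 4 + π * a * x ^ 2 + π ^ 2 * b * x + π ^ 2 * d ≠ 0 := by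
  intro h
  obtain ⟨y, rfl⟩ : π ∣ x :=
    hπ.dvd_of_dvd_pow (n := 4) ⟨-(a * x ^ 2 + π * b * x + π * d), by linear_combination h⟩
  refine hd ⟨-(π * y ^ 4 + a * y ^ 2 + b * y), mul_left_cancel₀ (pow_ne_zero 2 hπ.ne_zero) ?_⟩
  linear_combination h

lemma not_irreducible_halfSlopeQuartic_iff (hπ : Prime π) {h α b n : R} (hh : 2 * h = 1)
    (hd : ¬ π ∣ α ^ 2 - n) :
    ¬ Irreducible (halfSlopeQuartic π α b n) ↔ HasSplitting π (h ^ 2) α b n := by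
  have hroot : ∀ x : R, x ^ 4 + -2 * π * α * x ^ 2 + π ^ 2 * b * x + π ^ 2 * (α ^ 2 - n) ≠ 0 := by
    intro x
    convert! half_slope_quartic_ne_zero hπ (a := -2 * α) (b := b) hd x using 3
    ring
  have hπ2 : π ^ 2 ≠ 0 := pow_ne_zero 2 hπ.ne_zero
  rw [halfSlopeQuartic, irreducible_depressed_quartic_iff, and_iff_right hroot]
  push Not
  constructor
  · rintro ⟨s, t, u, h2, h1, h0⟩
    obtain ⟨⟨s, rfl⟩, ⟨t, rfl⟩, ⟨u, rfl⟩⟩ := dvd_of_quadratic_factors hπ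
      (s := s) (t := t) (u := u) ⟨-2 * α, by linear_combination h2⟩
      ⟨π * b, by linear_combination h1⟩ ⟨π * (α ^ 2 - n), by linear_combination h0⟩
    have hsum : t + u - π * s ^ 2 = -2 * α :=
      mul_left_cancel₀ hπ.ne_zero (by linear_combination h2)
    have hdiff : s * (u - t) = b := mul_left_cancel₀ hπ2 (by linear_combination h1)
    have hprod : t * u = α ^ 2 - n := mul_left_cancel₀ hπ2 (by linear_combination h0)
    obtain rfl : α = h * (π * s ^ 2 - (t + u)) := by linear_combination h * hsum - α * hh
    refine ⟨s, h * (u - t), by linear_combination -hdiff - s * (u - t) * hh, ?_⟩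
    linear_combination hprod + t * u * (2 * h + 1) * hh +
      h * π * s ^ 2 * (π * s ^ 2 - t - u) * hh
  · rintro ⟨s, w, rfl, rfl⟩
    refine ⟨π * s, π * (h * π * s ^ 2 - α - w), π * (h * π * s ^ 2 - α + w), ?_, by ring, ?_⟩
    · linear_combination π ^ 2 * s ^ 2 * hh
    · linear_combination -π ^ 3 * s ^ 2 * α * hh

lemma hasSplitting_sq_mul_iff (hπ : Prime π) {g α b n : R} (hα : ¬ π ∣ α) :
    HasSplitting π g α b (π ^ 2 * n) ↔
      ∃ b', b = π ^ 2 * b' ∧ HasSplitting π (g * π ^ 2) α b' n := by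
  constructor
  · rintro ⟨s, w, rfl, hn⟩
    obtain ⟨w, rfl⟩ : π ∣ w := dvd_of_mul_eq_splitting hπ (g := g) (α := α) (s := s)
      (n := π * n) (by linear_combination hn)
    have hαs : α * s ^ 2 = π * (n - w ^ 2 + g * s ^ 4) :=
      mul_left_cancel₀ hπ.ne_zero (by linear_combination -hn)
    obtain ⟨s, rfl⟩ : π ∣ s :=
      hπ.dvd_of_dvd_pow ((hπ.dvd_or_dvd (Dvd.intro _ hαs.symm)).resolve_left hα)
    refine ⟨2 * s * w, by ring, s, w, rfl, mul_left_cancel₀ (pow_ne_zero 2 hπ.ne_zero) ?_⟩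
    linear_combination hn
  · rintro ⟨b', rfl, s, w, rfl, rfl⟩
    exact ⟨π * s, π * w, by ring, by ring⟩

end Splitting

section PadicSplitting

open PadicInt

variable {p : ℕ} [Fact p.Prime]

lemma toZMod_eq_zero_iff_dvd {x : ℤ_[p]} : toZMod x = 0 ↔ (p : ℤ_[p]) ∣ x := by
  rw [← RingHom.mem_ker, ker_toZMod, maximalIdeal_eq_span_p, Ideal.mem_span_singleton]

lemma isUnit_iff_toZMod_ne_zero {x : ℤ_[p]} : IsUnit x ↔ toZMod x ≠ 0 := by
  rw [Ne, toZMod_eq_zero_iff_dvd, ← norm_lt_one_iff_dvd, ← PadicInt.not_isUnit_iff, not_not]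

lemma isUnit_two_padicInt (hodd : p ≠ 2) : IsUnit (2 : ℤ_[p]) := by
  rw [isUnit_iff_toZMod_ne_zero, map_ofNat]
  exact Ring.two_ne_zero (by rwa [ZMod.ringChar_zmod_n])

lemma exists_root_of_simple_root_mod_p (f : ℤ_[p][X]) (a : ℤ_[p])
    (hroot : toZMod (f.eval a) = 0) (hsimple : toZMod (f.derivative.eval a) ≠ 0) :
    ∃ z, f.eval z = 0 ∧ toZMod z = toZMod a := by
  have hd : ‖f.derivative.eval a‖ = 1 := isUnit_iff.mp (isUnit_iff_toZMod_ne_zero.mpr hsimple)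
  obtain ⟨z, hz, hza, -, -⟩ := hensels_lemma (F := f) (a := a) <| by
    simpa only [coe_aeval_eq_eval, hd, one_pow, norm_lt_one_iff_dvd, ← toZMod_eq_zero_iff_dvd]
      using hroot
  simp only [coe_aeval_eq_eval, hd] at hz hza
  refine ⟨z, hz, ?_⟩
  rwa [← sub_eq_zero, ← map_sub, toZMod_eq_zero_iff_dvd, ← norm_lt_one_iff_dvd]

/-- `X ^ j * (aX² - n) + p * h` reduces to a polynomial with the simple roots `± √(n / a)`. -/
lemma exists_isUnit_root_of_isSquare (hodd : p ≠ 2) {a n : ℤ_[p]} (ha : toZMod a ≠ 0)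
    (hn : toZMod n ≠ 0) (hsq : IsSquare (toZMod n * toZMod a)) (j : ℕ) (h : ℤ_[p][X]) :
    ∃ z, IsUnit z ∧ z ^ j * (a * z ^ 2 - n) + p * h.eval z = 0 := by
  obtain ⟨r, hr⟩ := hsq
  obtain ⟨z₀, hz₀⟩ := ZMod.ringHom_surjective toZMod (r / toZMod a)
  have hsqrt : toZMod a * toZMod z₀ ^ 2 = toZMod n := by
    rw [hz₀]
    field_simp
    linear_combination -hr
  have hz₀0 : toZMod z₀ ≠ 0 := by
    intro h0
    exact hn (by simpa [h0] using hsqrt.symm)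
  have h2 := isUnit_iff_toZMod_ne_zero.mp (isUnit_two_padicInt hodd)
  obtain ⟨z, hz, hzz₀⟩ := exists_root_of_simple_root_mod_p
    (X ^ j * (C a * X ^ 2 - C n) + C (p : ℤ_[p]) * h) z₀ (by simp [hsqrt])
      (by simp [hsqrt, h2, ha, hz₀0, one_add_one_eq_two])
  refine ⟨z, isUnit_iff_toZMod_ne_zero.mpr (hzz₀ ▸ hz₀0), by simpa using hz⟩

lemma hasSplitting_iff_isSquare (hodd : p ≠ 2) {g α b n : ℤ_[p]} (hn : toZMod n ≠ 0) :
    HasSplitting (p : ℤ_[p]) g α b n ↔ IsSquare (toZMod n) := by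
  obtain ⟨h, hh⟩ := (isUnit_two_padicInt hodd).exists_right_inv
  constructor
  · rintro ⟨s, w, -, rfl⟩
    exact ⟨toZMod w, by simp [sq]⟩
  · intro hsq
    -- Substitute `s = b / (2w)` and clear denominators: `w⁴(w² - n) ≡ 0` modulo `p`.
    obtain ⟨w, hw, hroot⟩ := exists_isUnit_root_of_isSquare hodd (a := 1) (by simp) hn
      (by simpa using hsq) 4 (C (α * (h * b) ^ 2) * X ^ 2 - C (g * p * (h * b) ^ 4))
    obtain ⟨v, hv⟩ := hw.exists_right_inv
    have hb : b = 2 * (h * b * v) * w := by linear_combination -b * hh - 2 * h * b * hv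
    refine ⟨h * b * v, w, hb, (hw.pow 4).mul_left_cancel ?_⟩
    simp only [eval_sub, eval_mul, eval_C, eval_pow, eval_X] at hroot
    have hs : w * (h * b * v) = h * b := by linear_combination h * b * hv
    have hs2 : w ^ 2 * (h * b * v) ^ 2 = (h * b) ^ 2 := by rw [← mul_pow, hs]
    have hs4 : w ^ 4 * (h * b * v) ^ 4 = (h * b) ^ 4 := by rw [← mul_pow, hs]
    linear_combination -hroot - p * α * w ^ 2 * hs2 + g * p ^ 2 * hs4

lemma hasSplitting_mul_iff_isSquare (hodd : p ≠ 2) {g α b n : ℤ_[p]} (hα : toZMod α ≠ 0)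
    (hn : toZMod n ≠ 0) :
    HasSplitting (p : ℤ_[p]) g α b (p * n) ↔
      (p : ℤ_[p]) ∣ b ∧ IsSquare (toZMod n * toZMod α) := by
  have hp : Prime (p : ℤ_[p]) := prime_p
  obtain ⟨h, hh⟩ := (isUnit_two_padicInt hodd).exists_right_inv
  constructor
  · rintro ⟨s, w, rfl, hsw⟩
    obtain ⟨w, rfl⟩ := dvd_of_mul_eq_splitting hp hsw
    obtain rfl : n = p * w ^ 2 + α * s ^ 2 - g * p * s ^ 4 :=
      mul_left_cancel₀ hp.ne_zero (by linear_combination hsw)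
    refine ⟨⟨2 * s * w, by ring⟩, toZMod (α * s), ?_⟩
    simp only [map_sub, map_add, map_mul, map_pow, map_natCast, CharP.cast_eq_zero]
    ring
  · rintro ⟨⟨b, rfl⟩, hsq⟩
    -- Substitute `w = pb / (2s)` and clear denominators: `s²(αs² - n) ≡ 0` modulo `p`.
    obtain ⟨s, hs, hroot⟩ := exists_isUnit_root_of_isSquare hodd hα hn hsq 2
      (C ((h * b) ^ 2) - C g * X ^ 6)
    obtain ⟨v, hv⟩ := hs.exists_right_inv
    have hb : p * b = 2 * s * (p * (h * b * v)) := by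
      linear_combination -p * b * hh - 2 * p * h * b * hv
    refine ⟨s, p * (h * b * v), hb, (hs.pow 2).mul_left_cancel ?_⟩
    simp only [eval_sub, eval_mul, eval_C, eval_pow, eval_X] at hroot
    have hw2 : s ^ 2 * (h * b * v) ^ 2 = (h * b) ^ 2 := by
      rw [← mul_pow]
      congr 1
      linear_combination h * b * hv
    linear_combination -p * hroot - p ^ 2 * hw2

theorem hasSplitting_pow_mul_iff (hodd : p ≠ 2) {α n : ℤ_[p]} (hn : toZMod n ≠ 0) (k : ℕ)
    (hα : k ≠ 0 → toZMod α ≠ 0) (g b : ℤ_[p]) :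
    HasSplitting (p : ℤ_[p]) g α b (p ^ k * n) ↔
      (p : ℤ_[p]) ^ k ∣ b ∧ IsSquare (toZMod n * toZMod α ^ k) := by
  induction k using Nat.twoStepInduction generalizing g b with
  | zero => simp [hasSplitting_iff_isSquare hodd hn]
  | one => simpa using hasSplitting_mul_iff_isSquare hodd (hα one_ne_zero) hn
  | more k ih _ =>
    have hα' : toZMod α ≠ 0 := hα (by simp)
    have hsq : IsSquare (toZMod n * toZMod α ^ (k + 2)) ↔ IsSquare (toZMod n * toZMod α ^ k) := by
      rw [pow_add, ← mul_assoc]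
      refine ⟨fun h => ?_, fun h => h.mul (IsSquare.sq _)⟩
      simpa [hα'] using h.div (IsSquare.sq (toZMod α))
    rw [hsq, pow_add, mul_comm (_ ^ k) (_ ^ 2), mul_assoc,
      hasSplitting_sq_mul_iff prime_p (toZMod_eq_zero_iff_dvd.not.mp hα')]
    simp only [ih fun _ => hα']
    constructor
    · rintro ⟨b, rfl, hb, h⟩
      exact ⟨mul_dvd_mul_left _ hb, h⟩
    · rintro ⟨⟨c, rfl⟩, h⟩
      exact ⟨p ^ k * c, mul_assoc .., Dvd.intro _ rfl, h⟩

theorem not_irreducible_halfSlopeQuartic_pow_mul_iff (hodd : p ≠ 2) {α b n : ℤ_[p]} (k : ℕ)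
    (hn : toZMod n ≠ 0) (hd : toZMod (α ^ 2 - (p : ℤ_[p]) ^ k * n) ≠ 0) :
    ¬ Irreducible (halfSlopeQuartic (p : ℤ_[p]) α b (p ^ k * n)) ↔
      (p : ℤ_[p]) ^ k ∣ b ∧ IsSquare (toZMod n * toZMod α ^ k) := by
  obtain ⟨h, hh⟩ := (isUnit_two_padicInt hodd).exists_right_inv
  have hα : k ≠ 0 → toZMod α ≠ 0 := by
    intro hk h0
    simp [h0, hk] at hd
  rw [not_irreducible_halfSlopeQuartic_iff prime_p hh (toZMod_eq_zero_iff_dvd.not.mp hd),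
    hasSplitting_pow_mul_iff hodd hn k hα]

end PadicSplitting

section Counting

open Finset

variable {F : Type*} [Field F] [Fintype F] [DecidableEq F]

lemma two_mul_card_nonzero_squares (hF : ringChar F ≠ 2) :
    2 * (#{y : F | y ≠ 0 ∧ IsSquare y} : ℤ) = Fintype.card F - 1 := by
  have hindicator : ∀ y : F, 2 * (if y ≠ 0 ∧ IsSquare y then 1 else 0) =
      1 + quadraticChar F y - if y = 0 then 1 else 0 := by
    intro y
    rcases eq_or_ne y 0 with rfl | hy
    · simp
    by_cases hsq : IsSquare y
    · simp [hy, hsq, (quadraticChar_one_iff_isSquare hy).mpr hsq]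
    · simp [hy, hsq, quadraticChar_neg_one_iff_not_isSquare.mpr hsq]
  rw [card_filter, Nat.cast_sum, mul_sum]
  simp only [Nat.cast_ite, Nat.cast_one, Nat.cast_zero, hindicator, sum_sub_distrib,
    sum_add_distrib, quadraticChar_sum_zero hF]
  simp

/-- The residues `(ᾱ, ȳ)` for which `halfSlopeQuartic p α b (pᵏy)` splits when `pᵏ ∣ b`. The last
condition says that `α² - pᵏy` is a unit; the factor `0 ^ k` is the residue of `pᵏ`. -/
def splitResidues (F : Type*) [Field F] [Fintype F] [DecidableEq F] (k : ℕ) : Finset (F × F) :=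
  {t | t.2 ≠ 0 ∧ IsSquare (t.2 * t.1 ^ k) ∧ t.1 ^ 2 - 0 ^ k * t.2 ≠ 0}

lemma two_mul_card_splitResidues_zero (hF : ringChar F ≠ 2) :
    2 * (#(splitResidues F 0) : ℤ) = (Fintype.card F - 1) * (Fintype.card F - 2) := by
  set squares : Finset F := {y | y ≠ 0 ∧ IsSquare y} with hsquares
  set graph : Finset (F × F) := ({0}ᶜ : Finset F).image fun x => (x, x ^ 2)
  have hsub : graph ⊆ univ ×ˢ squares := by
    simp only [graph, image_subset_iff]
    intro x hx
    simpa [hsquares, IsSquare.sq x] using hx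
  have hset : splitResidues F 0 = (univ ×ˢ squares) \ graph := by
    ext ⟨x, y⟩
    simp only [splitResidues, hsquares, graph, mem_filter, mem_sdiff, mem_product, mem_image,
      mem_compl, mem_singleton, mem_univ, Prod.mk.injEq]
    simp only [pow_zero, mul_one, one_mul, sub_ne_zero, true_and, and_assoc]
    refine and_congr_right fun hy => and_congr_right fun _ => not_congr ⟨?_, ?_⟩
    · rintro rfl
      exact ⟨x, by simpa using hy, rfl, rfl⟩
    · rintro ⟨_, -, rfl, h⟩
      exact h
  have hgraph : #graph = Fintype.card F - 1 := by
    rw [card_image_of_injective _ fun x y h => (Prod.ext_iff.mp h).1, card_compl, card_singleton]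
  rw [hset, card_sdiff_of_subset hsub, Nat.cast_sub (card_le_card hsub), hgraph, card_product,
    card_univ, Nat.cast_sub Fintype.card_pos]
  push_cast
  linear_combination (Fintype.card F : ℤ) * two_mul_card_nonzero_squares hF

lemma two_mul_card_splitResidues (hF : ringChar F ≠ 2) {k : ℕ} (hk : k ≠ 0) :
    2 * (#(splitResidues F k) : ℤ) = (Fintype.card F - 1) ^ 2 := by
  have hmem (x y : F) :
      (x, y) ∈ splitResidues F k ↔ x ≠ 0 ∧ y ≠ 0 ∧ IsSquare (y * x ^ k) := by
    simp only [splitResidues, mem_filter, mem_univ, zero_pow hk, zero_mul, sub_zero,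
      pow_ne_zero_iff two_ne_zero]
    tauto
  have htarget (x y : F) :
      (x, y) ∈ ({0}ᶜ : Finset F) ×ˢ ({y | y ≠ 0 ∧ IsSquare y} : Finset F) ↔
        x ≠ 0 ∧ y ≠ 0 ∧ IsSquare y := by
    simp
  have hcard : #(splitResidues F k) =
      #(({0}ᶜ : Finset F) ×ˢ ({y | y ≠ 0 ∧ IsSquare y} : Finset F)) := by
    refine card_nbij' (fun t => (t.1, t.2 * t.1 ^ k)) (fun t => (t.1, t.2 / t.1 ^ k))
      ?_ ?_ ?_ ?_ <;>
    · rintro ⟨x, y⟩ h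
      simp only [mem_coe, hmem, htarget] at h ⊢
      simp [h]
  rw [hcard, card_product, card_compl, card_singleton]
  push_cast [Nat.cast_sub Fintype.card_pos]
  linear_combination (Fintype.card F - 1 : ℤ) * two_mul_card_nonzero_squares hF

end Counting

section Haar

lemma measureReal_preimage_of_surjective {G A : Type*} [AddGroup G] [MeasurableSpace G]
    [MeasurableAdd G] [AddGroup A] [Fintype A] (ν : Measure G) [IsProbabilityMeasure ν]
    [ν.IsAddLeftInvariant] (φ : G →+ A) (hφ : Function.Surjective φ)
    (hker : MeasurableSet (φ.ker : Set G)) (T : Finset A) :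
    ν.real (φ ⁻¹' T) = T.card / Fintype.card A := by
  have hfibre (a : A) : ∃ g, φ ⁻¹' {a} = (fun x => -g + x) ⁻¹' (φ.ker : Set G) := by
    obtain ⟨g, rfl⟩ := hφ a
    refine ⟨g, Set.ext fun x => ?_⟩
    rw [Set.mem_preimage, Set.mem_preimage, Set.mem_singleton_iff, SetLike.mem_coe,
      AddMonoidHom.mem_ker, map_add, map_neg, neg_add_eq_zero, eq_comm]
  have hmeas (a : A) : MeasurableSet (φ ⁻¹' {a}) := by
    obtain ⟨g, hg⟩ := hfibre a
    exact hg ▸ measurable_const_add (-g) hker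
  have hreal (a : A) : ν.real (φ ⁻¹' {a}) = ν.real (φ.ker : Set G) := by
    obtain ⟨g, hg⟩ := hfibre a
    rw [hg, measureReal_def, measure_preimage_add, measureReal_def]
  have hsum (T : Finset A) : ν.real (φ ⁻¹' T) = T.card * ν.real (φ.ker : Set G) := by
    rw [← sum_measureReal_preimage_singleton T fun a _ => hmeas a]
    simp [hreal]
  have huniv := hsum Finset.univ
  rw [Finset.coe_univ, Set.preimage_univ, probReal_univ, Finset.card_univ] at huniv
  rw [hsum, eq_div_iff (by simp), mul_assoc, mul_comm (ν.real _), ← huniv, mul_one]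

lemma measureReal_image_of_isOpenEmbedding {G H : Type*} [AddGroup G] [TopologicalSpace G]
    [IsTopologicalAddGroup G] [CompactSpace G] [SecondCountableTopology G] [MeasurableSpace G]
    [BorelSpace G] [AddGroup H] [TopologicalSpace H] [IsTopologicalAddGroup H] [MeasurableSpace H]
    [BorelSpace H] (ν : Measure G) [ν.IsAddHaarMeasure] [IsProbabilityMeasure ν] (μ : Measure H)
    [μ.IsAddHaarMeasure] {f : G →+ H} (hf : Topology.IsOpenEmbedding f) (S : Set G) :
    μ.real (f '' S) = μ.real (Set.range f) * ν.real S := by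
  have hcomap : (μ.comap f).IsAddHaarMeasure :=
    Measure.IsAddHaarMeasure.comap (mH := ContinuousAdd.measurableAdd) μ hf
  have hsmul := Measure.isAddLeftInvariant_eq_smul (μ.comap f) ν
  have himage (S : Set G) :
      μ.real (f '' S) = Measure.addHaarScalarFactor (μ.comap f) ν * ν.real S := by
    have := congrArg (fun ν' => ν'.real S) hsmul
    simpa only [measureReal_def, hf.measurableEmbedding.comap_apply, Measure.smul_apply,
      ENNReal.smul_def, smul_eq_mul, ENNReal.toReal_mul, ENNReal.coe_toReal] using this
  rw [himage, ← Set.image_univ, himage, probReal_univ, mul_one]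

end Haar

section PadicHaar

variable {p : ℕ} [Fact p.Prime]

lemma isOpen_setOf_pow_dvd (n : ℕ) : IsOpen {x : ℤ_[p] | (p : ℤ_[p]) ^ n ∣ x} := by
  have hset : {x : ℤ_[p] | (p : ℤ_[p]) ^ n ∣ x} =
      Metric.closedBall 0 ((p : ℝ) ^ (-n : ℤ)) := by
    ext x
    rw [mem_closedBall_zero_iff, PadicInt.norm_le_pow_iff_mem_span_pow, Ideal.mem_span_singleton]
    rfl
  rw [hset]
  refine IsUltrametricDist.isOpen_closedBall _ (zpow_ne_zero _ ?_)
  exact_mod_cast (Fact.out : p.Prime).ne_zero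

lemma range_pow_mul (k : ℕ) :
    (Set.range fun x : ℤ_[p] => (p : ℤ_[p]) ^ k * x) = {x | (p : ℤ_[p]) ^ k ∣ x} := by
  ext x
  simp [Dvd.dvd, eq_comm]

lemma isOpenEmbedding_pow_mul (k : ℕ) :
    Topology.IsOpenEmbedding fun x : ℤ_[p] => (p : ℤ_[p]) ^ k * x := by
  have hinj : Function.Injective fun x : ℤ_[p] => (p : ℤ_[p]) ^ k * x :=
    mul_right_injective₀ (pow_ne_zero k PadicInt.prime_p.ne_zero)
  refine ⟨((continuous_const_mul _).isClosedEmbedding hinj).isEmbedding, ?_⟩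
  rw [range_pow_mul]
  exact isOpen_setOf_pow_dvd k

variable (m : Measure ℤ_[p]) [m.IsAddHaarMeasure] [IsProbabilityMeasure m]

lemma measureReal_setOf_pow_dvd (n : ℕ) :
    m.real {x | (p : ℤ_[p]) ^ n ∣ x} = ((p : ℝ) ^ n)⁻¹ := by
  have hp : NeZero (p ^ n) := ⟨pow_ne_zero n (Fact.out : p.Prime).ne_zero⟩
  let φ : ℤ_[p] →+ ZMod (p ^ n) := (PadicInt.toZModPow n).toAddMonoidHom
  have hker : (φ.ker : Set ℤ_[p]) = {x | (p : ℤ_[p]) ^ n ∣ x} := by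
    ext x
    rw [Set.mem_ofPred_eq, ← Ideal.mem_span_singleton, ← PadicInt.ker_toZModPow]
    rfl
  have hmeas : MeasurableSet (φ.ker : Set ℤ_[p]) :=
    hker ▸ (isOpen_setOf_pow_dvd n).measurableSet
  have hreal := measureReal_preimage_of_surjective m φ
    (ZMod.ringHom_surjective (PadicInt.toZModPow n)) hmeas {0}
  rw [Finset.coe_singleton, ← AddMonoidHom.coe_ker, hker] at hreal
  simpa [ZMod.card] using hreal

lemma measure_singleton_zero_padicInt : m {0} = 0 := by
  have hp : 1 < (p : ℝ) := by exact_mod_cast (Fact.out : p.Prime).one_lt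
  have hlim : Filter.Tendsto (fun n : ℕ => ((p : ℝ) ^ n)⁻¹) Filter.atTop (nhds 0) :=
    (tendsto_pow_atTop_atTop_of_one_lt hp).inv_tendsto_atTop
  have hle : m.real {0} ≤ 0 := ge_of_tendsto' hlim fun n => by
    rw [← measureReal_setOf_pow_dvd m n]
    exact measureReal_mono (by simp)
  exact (measureReal_eq_zero_iff).mp (le_antisymm hle measureReal_nonneg)

instance isAddHaarMeasure_prod_prod : (m.prod (m.prod m)).IsAddHaarMeasure :=
  have := Measure.prod.instIsAddHaarMeasure m m
  Measure.prod.instIsAddHaarMeasure m (m.prod m)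

end PadicHaar

section Coefficients

variable {p : ℕ} [Fact p.Prime]

/-- The scaling `(α, b, d) ↦ (p²d, p²b, -2pα)` from parameters to the coefficients `c₀, c₁, c₂`. -/
noncomputable def coeffHom (p : ℕ) [Fact p.Prime] : ℤ_[p] × ℤ_[p] × ℤ_[p] →+ (Fin 3 → ℤ_[p]) where
  toFun q := ![p ^ 2 * q.2.2, p ^ 2 * q.2.1, -2 * p * q.1]
  map_zero' := by ext i; fin_cases i <;> simp
  map_add' q r := by ext i; fin_cases i <;> simp <;> ring

lemma coeffHom_injective (hodd : p ≠ 2) : Function.Injective (coeffHom p) := by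
  have hp0 : (p : ℤ_[p]) ≠ 0 := PadicInt.prime_p.ne_zero
  have h2 : (2 : ℤ_[p]) ≠ 0 := (isUnit_two_padicInt hodd).ne_zero
  refine (injective_iff_map_eq_zero _).mpr ?_
  rintro ⟨α, b, d⟩ h
  simpa [coeffHom, hp0, h2, and_comm, and_assoc] using h

lemma range_coeffHom (hodd : p ≠ 2) : Set.range (coeffHom p) =
    {c | (p : ℤ_[p]) ∣ c 2 ∧ (p : ℤ_[p]) ^ 2 ∣ c 1 ∧ (p : ℤ_[p]) ^ 2 ∣ c 0} := by
  obtain ⟨h, hh⟩ := (isUnit_two_padicInt hodd).exists_right_inv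
  ext c
  constructor
  · rintro ⟨⟨α, b, d⟩, rfl⟩
    exact ⟨(dvd_mul_left _ _).mul_right _, Dvd.intro _ rfl, Dvd.intro _ rfl⟩
  · rintro ⟨⟨a, ha⟩, ⟨b, hb⟩, ⟨d, hd⟩⟩
    refine ⟨(-h * a, b, d), ?_⟩
    ext i
    fin_cases i
    · exact hd.symm
    · exact hb.symm
    · change -2 * p * (-h * a) = c 2
      linear_combination p * a * hh - ha

lemma isOpenEmbedding_coeffHom (hodd : p ≠ 2) : Topology.IsOpenEmbedding (coeffHom p) := by
  have hcont : Continuous (coeffHom p) := by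
    refine continuous_pi fun i => ?_
    fin_cases i <;>
    · simp only [coeffHom, AddMonoidHom.coe_mk, ZeroHom.coe_mk]
      fun_prop
  refine ⟨(hcont.isClosedEmbedding (coeffHom_injective hodd)).isEmbedding, ?_⟩
  have hdvd (i : Fin 3) (k : ℕ) : IsOpen {c : Fin 3 → ℤ_[p] | (p : ℤ_[p]) ^ k ∣ c i} :=
    (isOpen_setOf_pow_dvd k).preimage (f := fun c : Fin 3 → ℤ_[p] => c i) (continuous_apply i)
  rw [range_coeffHom hodd, ← pow_one (p : ℤ_[p]), ← pow_mul, one_mul]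
  exact (hdvd 2 1).inter ((hdvd 1 2).inter (hdvd 0 2))

lemma measureReal_range_coeffHom_ne_zero (hodd : p ≠ 2) (μ : Measure (Fin 3 → ℤ_[p]))
    [μ.IsAddHaarMeasure] : μ.real (Set.range (coeffHom p)) ≠ 0 := by
  have hemb := isOpenEmbedding_coeffHom hodd
  exact ENNReal.toReal_ne_zero.mpr ⟨hemb.isOpen_range.measure_ne_zero μ (Set.range_nonempty _),
    (isCompact_range hemb.continuous).measure_ne_top⟩

/-- The involution `(α, b, n) ↦ (α, b, α² - n)`, which turns the `n` of `halfSlopeQuartic p α b n`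
into its constant term divided by `p²`. -/
noncomputable def constShear (p : ℕ) [Fact p.Prime] :
    ℤ_[p] × ℤ_[p] × ℤ_[p] ≃ᵐ ℤ_[p] × ℤ_[p] × ℤ_[p] :=
  .ofInvolutive (fun q => (q.1, q.2.1, q.1 ^ 2 - q.2.2)) (fun q => by simp) (by fun_prop)

variable (m : Measure ℤ_[p]) [m.IsAddHaarMeasure] [IsProbabilityMeasure m]

lemma measurePreserving_constShear :
    MeasurePreserving (constShear p) (m.prod (m.prod m)) (m.prod (m.prod m)) := by
  refine (MeasurePreserving.id m).skew_product
    (g := fun α (r : ℤ_[p] × ℤ_[p]) => (r.1, α ^ 2 - r.2)) ?_ ?_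
  · exact Continuous.measurable (by fun_prop)
  · exact .of_forall fun α =>
      ((MeasurePreserving.id m).prod (Measure.measurePreserving_sub_left m (α ^ 2))).map_eq

lemma measureReal_eq_mul_preimage_coeffHom (hodd : p ≠ 2) (μ : Measure (Fin 3 → ℤ_[p]))
    [μ.IsAddHaarMeasure] {S : Set (Fin 3 → ℤ_[p])} (hS : S ⊆ Set.range (coeffHom p)) :
    μ.real S = μ.real (Set.range (coeffHom p)) *
      (m.prod (m.prod m)).real ((coeffHom p ∘ constShear p) ⁻¹' S) := by
  have hshear := (measurePreserving_constShear m).measure_preimage_equiv (coeffHom p ⁻¹' S)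
  rw [measureReal_def (m.prod _), Set.preimage_comp, hshear, ← measureReal_def,
    ← measureReal_image_of_isOpenEmbedding _ μ (isOpenEmbedding_coeffHom hodd),
    Set.image_preimage_eq_of_subset hS]

/-- The coefficients `c₀, c₁, c₂` of the quartics whose Newton polygon is the segment from `(0, 2)`
to `(4, 0)`. -/
def halfSlopeCoeffs (p : ℕ) [Fact p.Prime] : Set (Fin 3 → ℤ_[p]) :=
  {c | (p : ℤ_[p]) ∣ c 2 ∧ (p : ℤ_[p]) ^ 2 ∣ c 1 ∧
    (p : ℤ_[p]) ^ 2 ∣ c 0 ∧ ¬ (p : ℤ_[p]) ^ 3 ∣ c 0}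

lemma halfSlopeCoeffs_subset_range (hodd : p ≠ 2) :
    halfSlopeCoeffs p ⊆ Set.range (coeffHom p) := by
  rw [range_coeffHom hodd]
  exact fun c ⟨h2, h1, h0, _⟩ => ⟨h2, h1, h0⟩

/-- The parameters `(α, b, n)` for which `halfSlopeQuartic p α b n` has constant term of valuation
exactly `2`. -/
def unitParams (p : ℕ) [Fact p.Prime] : Set (ℤ_[p] × ℤ_[p] × ℤ_[p]) :=
  {q | ¬ (p : ℤ_[p]) ∣ q.1 ^ 2 - q.2.2}

lemma preimage_halfSlopeCoeffs (hodd : p ≠ 2) :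
    (coeffHom p ∘ constShear p) ⁻¹' halfSlopeCoeffs p = unitParams p := by
  ext q
  have hrange : (coeffHom p ∘ constShear p) q ∈ Set.range (coeffHom p) := ⟨_, rfl⟩
  rw [range_coeffHom hodd] at hrange
  obtain ⟨h2, h1, h0⟩ := hrange
  have h3 : (p : ℤ_[p]) ^ 3 ∣ (coeffHom p ∘ constShear p) q 0 ↔
      (p : ℤ_[p]) ∣ q.1 ^ 2 - q.2.2 := by
    change (p : ℤ_[p]) ^ (2 + 1) ∣ p ^ 2 * (q.1 ^ 2 - q.2.2) ↔ _
    rw [pow_succ, mul_dvd_mul_iff_left (pow_ne_zero 2 PadicInt.prime_p.ne_zero)]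
  simp only [halfSlopeCoeffs, unitParams, Set.mem_preimage, Set.mem_ofPred_eq, h2, h1, h0, h3,
    true_and]

lemma measureReal_unitParams :
    (m.prod (m.prod m)).real (unitParams p) = 1 - (p : ℝ)⁻¹ := by
  have hdvd : MeasurableSet {d : ℤ_[p] | (p : ℤ_[p]) ∣ d} := by
    simpa using (isOpen_setOf_pow_dvd (p := p) 1).measurableSet
  have hset : unitParams p = constShear p ⁻¹' (Set.univ ×ˢ Set.univ ×ˢ {d | (p : ℤ_[p]) ∣ d}ᶜ) := by
    ext q
    simp only [unitParams, Set.mem_preimage, Set.mem_prod, Set.mem_univ, true_and]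
    rfl
  rw [hset, measureReal_def, (measurePreserving_constShear m).measure_preimage_equiv,
    ← measureReal_def, measureReal_prod_prod, measureReal_prod_prod, probReal_univ,
    measureReal_compl hdvd, probReal_univ]
  simpa using measureReal_setOf_pow_dvd m 1

end Coefficients

section Reducible

variable {p : ℕ} [Fact p.Prime]

lemma ne_zero_and_valuation_eq_iff {x : ℤ_[p]} {k : ℕ} :
    x ≠ 0 ∧ x.valuation = k ↔ ∃ y, PadicInt.toZMod y ≠ 0 ∧ (p : ℤ_[p]) ^ k * y = x := by
  constructor
  · rintro ⟨hx, rfl⟩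
    refine ⟨PadicInt.unitCoeff hx, ?_, ?_⟩
    · exact isUnit_iff_toZMod_ne_zero.mp (PadicInt.unitCoeff hx).isUnit
    · rw [mul_comm, ← PadicInt.unitCoeff_spec]
  · rintro ⟨y, hy, rfl⟩
    have hunit := isUnit_iff_toZMod_ne_zero.mpr hy
    have hval : y.valuation = 0 := by
      have hdvd := PadicInt.mem_span_pow_iff_le_valuation y hunit.ne_zero 1
      rw [pow_one, Ideal.mem_span_singleton, ← toZMod_eq_zero_iff_dvd] at hdvd
      exact Nat.lt_one_iff.mp (not_le.mp (hdvd.not.mp hy))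
    exact ⟨mul_ne_zero (pow_ne_zero k PadicInt.prime_p.ne_zero) hunit.ne_zero, by
      rw [PadicInt.valuation_p_pow_mul k y hunit.ne_zero, hval, add_zero]⟩

/-- The scaling `(α, b, n) ↦ (α, pᵏb, pᵏn)`. -/
noncomputable def scaleHom (p : ℕ) [Fact p.Prime] (k : ℕ) :
    ℤ_[p] × ℤ_[p] × ℤ_[p] →+ ℤ_[p] × ℤ_[p] × ℤ_[p] :=
  (AddMonoidHom.id _).prodMap
    ((AddMonoidHom.mulLeft ((p : ℤ_[p]) ^ k)).prodMap (AddMonoidHom.mulLeft ((p : ℤ_[p]) ^ k)))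

/-- The reduction `(α, b, n) ↦ (ᾱ, n̄)` modulo `p`. -/
noncomputable def residueHom (p : ℕ) [Fact p.Prime] :
    ℤ_[p] × ℤ_[p] × ℤ_[p] →+ ZMod p × ZMod p :=
  PadicInt.toZMod.toAddMonoidHom.prodMap
    (PadicInt.toZMod.toAddMonoidHom.comp (AddMonoidHom.snd _ _))

lemma scaleHom_apply (k : ℕ) (α b n : ℤ_[p]) :
    scaleHom p k (α, b, n) = (α, (p : ℤ_[p]) ^ k * b, (p : ℤ_[p]) ^ k * n) := rfl

lemma residueHom_apply (q : ℤ_[p] × ℤ_[p] × ℤ_[p]) :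
    residueHom p q = (PadicInt.toZMod q.1, PadicInt.toZMod q.2.2) := rfl

lemma isOpenEmbedding_scaleHom (k : ℕ) : Topology.IsOpenEmbedding (scaleHom p k) :=
  Topology.IsOpenEmbedding.id.prodMap
    ((isOpenEmbedding_pow_mul k).prodMap (isOpenEmbedding_pow_mul k))

lemma range_scaleHom (k : ℕ) : Set.range (scaleHom p k) =
    Set.univ ×ˢ {b | (p : ℤ_[p]) ^ k ∣ b} ×ˢ {n | (p : ℤ_[p]) ^ k ∣ n} := by
  rw [← range_pow_mul, ← Set.range_id, ← Set.range_prodMap, ← Set.range_prodMap]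
  rfl

lemma residueHom_surjective : Function.Surjective (residueHom p) := by
  have hsurj : Function.Surjective (PadicInt.toZMod (p := p)) := ZMod.ringHom_surjective _
  exact hsurj.prodMap (hsurj.comp Prod.snd_surjective)

lemma continuous_residueHom : Continuous (residueHom p) := by
  have hcont : Continuous (PadicInt.toZMod (p := p)) := by
    refine continuous_of_continuousAt_zero _ ?_
    rw [ContinuousAt, map_zero, nhds_discrete (ZMod p), Filter.tendsto_pure]
    filter_upwards [(isOpen_setOf_pow_dvd (p := p) 1).mem_nhds (dvd_zero _)] with x hx
    exact toZMod_eq_zero_iff_dvd.mpr (by simpa using hx)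
  exact hcont.prodMap (hcont.comp continuous_snd)

/-- The parameters `(α, b, n)` with `v(n) = k` for which `halfSlopeQuartic p α b n` is reducible
and has constant term of valuation `2`. -/
def reducibleParams (p : ℕ) [Fact p.Prime] (k : ℕ) : Set (ℤ_[p] × ℤ_[p] × ℤ_[p]) :=
  {q ∈ unitParams p | (q.2.2 ≠ 0 ∧ q.2.2.valuation = k) ∧
    ¬ Irreducible (halfSlopeQuartic (p : ℤ_[p]) q.1 q.2.1 q.2.2)}

lemma reducibleParams_eq_image (hodd : p ≠ 2) (k : ℕ) :
    reducibleParams p k = scaleHom p k '' (residueHom p ⁻¹' splitResidues (ZMod p) k) := by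
  have hresidue (α y : ℤ_[p]) :
      PadicInt.toZMod α ^ 2 - 0 ^ k * PadicInt.toZMod y ≠ 0 ↔
        ¬ (p : ℤ_[p]) ∣ α ^ 2 - (p : ℤ_[p]) ^ k * y := by
    simp [← toZMod_eq_zero_iff_dvd]
  ext q
  simp only [reducibleParams, unitParams, ne_zero_and_valuation_eq_iff, splitResidues,
    residueHom_apply, Finset.coe_filter, Finset.mem_univ, true_and, Set.mem_image,
    Set.mem_preimage, Set.mem_ofPred_eq, hresidue]
  constructor
  · obtain ⟨α, b, n⟩ := q
    rintro ⟨hd, ⟨y, hy, rfl⟩, hirr⟩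
    have hd' := toZMod_eq_zero_iff_dvd.not.mpr hd
    obtain ⟨⟨b, rfl⟩, hsq⟩ :=
      (not_irreducible_halfSlopeQuartic_pow_mul_iff hodd k hy hd').mp hirr
    exact ⟨(α, b, y), ⟨hy, hsq, hd⟩, rfl⟩
  · rintro ⟨⟨α, b, y⟩, ⟨hy, hsq, hd⟩, rfl⟩
    have hd' := toZMod_eq_zero_iff_dvd.not.mpr hd
    exact ⟨hd, ⟨y, hy, rfl⟩, (not_irreducible_halfSlopeQuartic_pow_mul_iff hodd k hy hd').mpr
      ⟨Dvd.intro _ rfl, hsq⟩⟩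

lemma measurableSet_reducibleParams (hodd : p ≠ 2) (k : ℕ) :
    MeasurableSet (reducibleParams p k) := by
  rw [reducibleParams_eq_image hodd]
  exact ((isOpenEmbedding_scaleHom k).isOpenMap _
    ((isOpen_discrete _).preimage continuous_residueHom)).measurableSet

variable (m : Measure ℤ_[p]) [m.IsAddHaarMeasure] [IsProbabilityMeasure m]

lemma measureReal_reducibleParams (hodd : p ≠ 2) (k : ℕ) :
    (m.prod (m.prod m)).real (reducibleParams p k) =
      (splitResidues (ZMod p) k).card * ((p : ℝ) ^ (2 * k + 2))⁻¹ := by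
  have himage := measureReal_image_of_isOpenEmbedding (m.prod (m.prod m)) (m.prod (m.prod m))
    (isOpenEmbedding_scaleHom k) (residueHom p ⁻¹' splitResidues (ZMod p) k)
  have hpreimage := measureReal_preimage_of_surjective (m.prod (m.prod m)) (residueHom p)
    residueHom_surjective ((isOpen_discrete {0}).preimage continuous_residueHom).measurableSet
    (splitResidues (ZMod p) k)
  rw [reducibleParams_eq_image hodd, himage, hpreimage, range_scaleHom,
    measureReal_prod_prod, measureReal_prod_prod, measureReal_setOf_pow_dvd, probReal_univ,
    Fintype.card_prod, ZMod.card]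
  push_cast
  field_simp
  ring

lemma hasSum_card_splitResidues (hodd : p ≠ 2) :
    HasSum (fun k => ((splitResidues (ZMod p) k).card : ℝ) * ((p : ℝ) ^ (2 * k + 2))⁻¹)
      (((p : ℝ) - 1) * (p ^ 2 - p - 1) / (2 * p ^ 2 * (p + 1))) := by
  have hp1 : (1 : ℝ) < p := by exact_mod_cast (Fact.out : p.Prime).one_lt
  have hchar : ringChar (ZMod p) ≠ 2 := by rwa [ZMod.ringChar_zmod_n]
  have hzero : ((splitResidues (ZMod p) 0).card : ℝ) = ((p : ℝ) - 1) * (p - 2) / 2 := by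
    have hcard := congrArg (Int.cast : ℤ → ℝ) (two_mul_card_splitResidues_zero hchar)
    push_cast [ZMod.card] at hcard
    linarith
  have hsucc (k : ℕ) : ((splitResidues (ZMod p) (k + 1)).card : ℝ) = ((p : ℝ) - 1) ^ 2 / 2 := by
    have hcard := congrArg (Int.cast : ℤ → ℝ) (two_mul_card_splitResidues hchar k.succ_ne_zero)
    push_cast [ZMod.card] at hcard
    linarith
  have hgeom := (hasSum_geometric_of_lt_one (by positivity)
    (inv_lt_one_of_one_lt₀ (one_lt_pow₀ hp1 two_ne_zero))).mul_left
      (((p : ℝ) - 1) ^ 2 / 2 * ((p : ℝ) ^ 4)⁻¹)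
  rw [← hasSum_nat_add_iff' 1]
  convert! hgeom using 1
  · funext k
    rw [hsucc, inv_pow, ← pow_mul, mul_assoc, ← mul_inv]
    ring
  · have hsq : (p : ℝ) ^ 2 - 1 ≠ 0 := by nlinarith
    rw [Finset.sum_range_one, hzero]
    field_simp
    ring

lemma measureReal_iUnion_reducibleParams (hodd : p ≠ 2) :
    (m.prod (m.prod m)).real (⋃ k, reducibleParams p k) =
      ((p : ℝ) - 1) * (p ^ 2 - p - 1) / (2 * p ^ 2 * (p + 1)) := by
  have hdisj : Pairwise (Function.onFun Disjoint (reducibleParams p)) := fun j k hjk =>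
    Set.disjoint_left.mpr fun q hj hk => hjk (hj.2.1.2.symm.trans hk.2.1.2)
  rw [measureReal_def, measure_iUnion hdisj (measurableSet_reducibleParams hodd),
    ENNReal.tsum_toReal_eq fun k => measure_ne_top _ _, ← (hasSum_card_splitResidues hodd).tsum_eq]
  exact tsum_congr (measureReal_reducibleParams m hodd)

lemma ae_snd_snd_ne_zero : ∀ᵐ q ∂(m.prod (m.prod m)), q.2.2 ≠ 0 := by
  have hset : {q : ℤ_[p] × ℤ_[p] × ℤ_[p] | ¬ q.2.2 ≠ 0} = Set.univ ×ˢ Set.univ ×ˢ {0} := by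
    ext q
    simp
  rw [ae_iff, hset, Measure.prod_prod, Measure.prod_prod, measure_singleton_zero_padicInt,
    mul_zero, mul_zero]

theorem measureReal_irreducible_unitParams (hodd : p ≠ 2) :
    (m.prod (m.prod m)).real
        {q ∈ unitParams p | Irreducible (halfSlopeQuartic (p : ℤ_[p]) q.1 q.2.1 q.2.2)} =
      1 - (p : ℝ)⁻¹ - (p - 1) * (p ^ 2 - p - 1) / (2 * p ^ 2 * (p + 1)) := by
  have hae : {q ∈ unitParams p | Irreducible (halfSlopeQuartic (p : ℤ_[p]) q.1 q.2.1 q.2.2)}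
      =ᵐ[m.prod (m.prod m)] (unitParams p \ ⋃ k, reducibleParams p k : Set _) := by
    filter_upwards [ae_snd_snd_ne_zero m] with q hq
    have hmem : q ∈ ⋃ k, reducibleParams p k ↔ q ∈ unitParams p ∧
        ¬ Irreducible (halfSlopeQuartic (p : ℤ_[p]) q.1 q.2.1 q.2.2) := by
      simp [reducibleParams, hq]
    apply propext
    change (_ ∧ _) ↔ (_ ∧ ¬ _)
    rw [hmem]
    tauto
  have hsub : ⋃ k, reducibleParams p k ⊆ unitParams p := Set.iUnion_subset fun k q hq => hq.1
  rw [measureReal_congr hae, measureReal_sdiff hsub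
    (MeasurableSet.iUnion (measurableSet_reducibleParams hodd)), measureReal_unitParams,
    measureReal_iUnion_reducibleParams m hodd]

end Reducible

/-- Lemma 6 (slope -1/2): for odd `p`, among monic quartics
`x⁴ + c₂x² + c₁x + c₀` with `v_p(c₂) ≥ 1`, `v_p(c₁) ≥ 2`, `v_p(c₀) = 2`
(Newton polygon a single segment from `(0,2)` to `(4,0)`), the proportion that are
irreducible in `ℤ_p[x]` is `(p² + 3p + 1)/(2p(p + 1))`. -/
theorem stmt_18 (p : ℕ) [Fact p.Prime] (hodd : p ≠ 2)
    (μ : Measure (Fin 3 → ℤ_[p])) [μ.IsAddHaarMeasure] :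
    (μ {c : Fin 3 → ℤ_[p] |
        ((p : ℤ_[p]) ∣ c 2 ∧ (p : ℤ_[p]) ^ 2 ∣ c 1 ∧
          (p : ℤ_[p]) ^ 2 ∣ c 0 ∧ ¬ (p : ℤ_[p]) ^ 3 ∣ c 0) ∧
        Irreducible (X ^ 4 + C (c 2) * X ^ 2 + C (c 1) * X + C (c 0))}).toReal /
      (μ {c : Fin 3 → ℤ_[p] |
        (p : ℤ_[p]) ∣ c 2 ∧ (p : ℤ_[p]) ^ 2 ∣ c 1 ∧
          (p : ℤ_[p]) ^ 2 ∣ c 0 ∧ ¬ (p : ℤ_[p]) ^ 3 ∣ c 0}).toReal =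
      ((p : ℝ) ^ 2 + 3 * p + 1) / (2 * p * ((p : ℝ) + 1)) := by
  have hp1 : (1 : ℝ) < p := by exact_mod_cast (Fact.out : p.Prime).one_lt
  let m : Measure ℤ_[p] := Measure.addHaarMeasure ⊤
  have hm : IsProbabilityMeasure m := ⟨Measure.addHaarMeasure_self⟩
  have hall : μ.real (halfSlopeCoeffs p) = μ.real (Set.range (coeffHom p)) * (1 - (p : ℝ)⁻¹) := by
    rw [measureReal_eq_mul_preimage_coeffHom m hodd μ (halfSlopeCoeffs_subset_range hodd),
      preimage_halfSlopeCoeffs hodd, measureReal_unitParams]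
  have hirr : μ.real {c ∈ halfSlopeCoeffs p |
        Irreducible (X ^ 4 + C (c 2) * X ^ 2 + C (c 1) * X + C (c 0))} =
      μ.real (Set.range (coeffHom p)) *
        (1 - (p : ℝ)⁻¹ - (p - 1) * (p ^ 2 - p - 1) / (2 * p ^ 2 * (p + 1))) := by
    rw [measureReal_eq_mul_preimage_coeffHom m hodd μ
        ((Set.sep_subset _ _).trans (halfSlopeCoeffs_subset_range hodd)),
      ← measureReal_irreducible_unitParams m hodd, ← preimage_halfSlopeCoeffs hodd]
    rfl
  change μ.real {c ∈ halfSlopeCoeffs p | _} / μ.real (halfSlopeCoeffs p) = _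
  rw [hirr, hall, mul_div_mul_left _ _ (measureReal_range_coeffHom_ne_zero hodd μ)]
  have hsub : (p : ℝ) - 1 ≠ 0 := by linarith
  field_simp
  ring
end
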